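/- Let α ∈ (0, 2s) and M ≥ 0. Suppose b : [−1,0] × B_1^0 → ℝ^n satisfies sup_{t∈[−1,0]} ‖b(t,·)‖_{C^{1−2s+α}(B_1^0)} ≤ M, f : [−1,0] × B_1^0 → ℝ satisfies sup_{t∈[−1,0]} ‖f(t,·)‖_{C^{1−2s+α}(B_1^0)} = F < ∞, and let u be a bounded classical solution of the extended drift–diffusion equation with drift b and right-hand side f. Then there is a constant C depending only on s, n, α and M such that for every t ∈ [−1/2,0] the function x ↦ u(t,x,0) is differentiable on B_{1/2}^0 and sup_{t∈[−1/2,0]} ( sup_{x∈B_{1/2}^0} |∇_x u(t,x,0)| + [∇_x u(t,·,0)]_{C^α(B_{1/2}^0)} ) ≤ C ( sup_{[−1,0]×B_1^+} |u| + F ). -/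

import Mathlib

open Set Filter Topology MeasureTheory
open scoped RealInnerProductSpace

noncomputable section

abbrev En (n : ℕ) := EuclideanSpace ℝ (Fin n)

/-- The open upper half ball `B_r^+`. -/
def halfBall (n : ℕ) (r : ℝ) : Set (En n × ℝ) :=
  {p | ‖p.1‖ ^ 2 + p.2 ^ 2 < r ^ 2 ∧ 0 < p.2}

/-- The closure of the upper half ball. -/
def closedHalfBall (n : ℕ) (r : ℝ) : Set (En n × ℝ) :=
  {p | ‖p.1‖ ^ 2 + p.2 ^ 2 ≤ r ^ 2 ∧ 0 ≤ p.2}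

/-- The flat ball `B_r^0` in `ℝⁿ`. -/
def flatBall (n : ℕ) (r : ℝ) : Set (En n) := {x | ‖x‖ < r}

/-- Second directional derivative of `u` at `p` in direction `v`. -/
def D2 {n : ℕ} (u : En n × ℝ → ℝ) (p v : En n × ℝ) : ℝ :=
  fderiv ℝ (fun q => fderiv ℝ u q v) p v

/-- The Laplacian in the `n+1` variables `(x, y)`. -/
def lap {n : ℕ} (u : En n × ℝ → ℝ) (p : En n × ℝ) : ℝ :=
  (∑ i : Fin n, D2 u p (EuclideanSpace.single i 1, 0)) + D2 u p (0, 1)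

/-- `u` is `a`-harmonic on `Ω`: it is `C²` there and `Δu + (a/y) ∂_y u = 0`. -/
def IsAHarmonicOn {n : ℕ} (a : ℝ) (u : En n × ℝ → ℝ) (Ω : Set (En n × ℝ)) : Prop :=
  ContDiffOn ℝ 2 u Ω ∧ ∀ p ∈ Ω, lap u p + (a / p.2) * fderiv ℝ u p (0, 1) = 0

/-- `lim_{y → 0⁺} y^a ∂_y w(x, y) = L`. -/
def NormalDerivLimit {n : ℕ} (a : ℝ) (w : En n × ℝ → ℝ) (x : En n) (L : ℝ) : Prop :=
  Tendsto (fun y : ℝ => y ^ a * fderiv ℝ w (x, y) (0, 1)) (𝓝[>] (0 : ℝ)) (𝓝 L)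

/-- The boundary-restriction `(t, x) ↦ u(t, x, 0)`. -/
def bdryFun {n : ℕ} (u : ℝ → En n × ℝ → ℝ) : ℝ × En n → ℝ := fun q => u q.1 (q.2, 0)

/-- A classical solution of the extended drift–diffusion equation on
`[-1,0] × closure (B_1^+)` with drift `b` and right-hand side `f`. -/
def IsExtDDSolution {n : ℕ} (a : ℝ) (b : ℝ → En n → En n) (f : ℝ → En n → ℝ)
    (u : ℝ → En n × ℝ → ℝ) : Prop :=
  ContinuousOn (fun q : ℝ × (En n × ℝ) => u q.1 q.2) (Icc (-1 : ℝ) 0 ×ˢ closedHalfBall n 1) ∧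
  (∀ t ∈ Icc (-1 : ℝ) 0, IsAHarmonicOn a (u t) (halfBall n 1)) ∧
  (∀ q ∈ Ioc (-1 : ℝ) 0 ×ˢ flatBall n 1,
      DifferentiableWithinAt ℝ (bdryFun u) (Ioc (-1 : ℝ) 0 ×ˢ flatBall n 1) q) ∧
  (∀ t x, (t, x) ∈ Ioc (-1 : ℝ) 0 ×ˢ flatBall n 1 →
      ∃ L : ℝ, NormalDerivLimit a (u t) x L ∧
        fderivWithin ℝ (bdryFun u) (Ioc (-1 : ℝ) 0 ×ˢ flatBall n 1) (t, x) (1, 0) +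
          fderivWithin ℝ (bdryFun u) (Ioc (-1 : ℝ) 0 ×ˢ flatBall n 1) (t, x) (0, b t x) -
          L = f t x)

/-!
The proof is the Ishii–Lions doubling method, with barriers that carry a negative power of a cutoff
and so dominate the solution near the edge of the domain. If an estimate failed, a barrier
`K θ ^ (-ν) W` would touch a difference of `u` from above, with a large `K`. At an interior contact
point, `a`-harmonicity contradicts the strict superharmonicity of the profile `W`, which beats the
terms coming from the cutoff `θ`; at a contact point on the flat boundary, the equation contradicts
the large negative weighted normal derivative of `W`, which beats drift, source and cutoff terms.
This is done first for `u (m + d) - u (m - d)`, giving a Lipschitz bound, and then for the second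
differences `u (x + h) - 2 u x + u (x - h)`, where the Lipschitz bound and the Hölder continuity of
the drift control the drift terms. In the second case `W` levels off at height comparable to `‖h‖`,
and contact above that height is excluded by comparing with the step `N h`: the second difference
would be about `N ^ 2` times larger, while the barrier allows only a factor `N ^ (1 + α)`. Finally,
second differences of order `‖h‖ ^ (1 + α)` sum dyadically to a `C ^ α` bound on the gradient.
-/

/-! ### Two-jets of functions of one variable -/

/-- `f` is differentiable near `x`, and has first derivative `f₁` and second derivative `f₂` at `x`.
This is the only form in which second derivatives enter the comparison arguments. -/
def HasTwoJet (f : ℝ → ℝ) (x f₁ f₂ : ℝ) : Prop :=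
  ∃ f' : ℝ → ℝ, (∀ᶠ τ in 𝓝 x, HasDerivAt f (f' τ) τ) ∧ HasDerivAt f' f₂ x ∧ f' x = f₁

namespace HasTwoJet

variable {f g : ℝ → ℝ} {x f₁ f₂ g₁ g₂ : ℝ}

lemma hasDerivAt (h : HasTwoJet f x f₁ f₂) : HasDerivAt f f₁ x := by
  obtain ⟨f', hf, -, rfl⟩ := h
  exact hf.self_of_nhds

lemma const (c x : ℝ) : HasTwoJet (fun _ => c) x 0 0 :=
  ⟨fun _ => 0, Eventually.of_forall fun τ => hasDerivAt_const τ c, hasDerivAt_const x 0, rfl⟩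

lemma id (x : ℝ) : HasTwoJet (fun y => y) x 1 0 :=
  ⟨fun _ => 1, Eventually.of_forall hasDerivAt_id', hasDerivAt_const x 1, rfl⟩

lemma congr_jet (hf : HasTwoJet f x f₁ f₂) (h₁ : f₁ = g₁) (h₂ : f₂ = g₂) :
    HasTwoJet f x g₁ g₂ :=
  h₁ ▸ h₂ ▸ hf

lemma congr_of_eventuallyEq (hf : HasTwoJet f x f₁ f₂) (h : g =ᶠ[𝓝 x] f) :
    HasTwoJet g x f₁ f₂ := by
  obtain ⟨f', hf', hf'', rfl⟩ := hf
  refine ⟨f', ?_, hf'', rfl⟩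
  filter_upwards [hf', h.eventuallyEq_nhds] with τ hτ hgf using hτ.congr_of_eventuallyEq hgf

lemma add (hf : HasTwoJet f x f₁ f₂) (hg : HasTwoJet g x g₁ g₂) :
    HasTwoJet (fun y => f y + g y) x (f₁ + g₁) (f₂ + g₂) := by
  obtain ⟨f', hf', hf'', rfl⟩ := hf
  obtain ⟨g', hg', hg'', rfl⟩ := hg
  refine ⟨fun y => f' y + g' y, ?_, hf''.add hg'', rfl⟩
  filter_upwards [hf', hg'] with τ h k using h.add k

lemma const_mul (c : ℝ) (hf : HasTwoJet f x f₁ f₂) :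
    HasTwoJet (fun y => c * f y) x (c * f₁) (c * f₂) := by
  obtain ⟨f', hf', hf'', rfl⟩ := hf
  refine ⟨fun y => c * f' y, ?_, hf''.const_mul c, rfl⟩
  filter_upwards [hf'] with τ h using h.const_mul c

lemma sub (hf : HasTwoJet f x f₁ f₂) (hg : HasTwoJet g x g₁ g₂) :
    HasTwoJet (fun y => f y - g y) x (f₁ - g₁) (f₂ - g₂) := by
  simpa [sub_eq_add_neg] using hf.add (hg.const_mul (-1))

lemma mul (hf : HasTwoJet f x f₁ f₂) (hg : HasTwoJet g x g₁ g₂) :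
    HasTwoJet (fun y => f y * g y) x (f₁ * g x + f x * g₁)
      (f₂ * g x + 2 * (f₁ * g₁) + f x * g₂) := by
  have hfx := hf.hasDerivAt
  have hgx := hg.hasDerivAt
  obtain ⟨f', hf', hf'', rfl⟩ := hf
  obtain ⟨g', hg', hg'', rfl⟩ := hg
  refine ⟨fun y => f' y * g y + f y * g' y, ?_, ?_, rfl⟩
  · filter_upwards [hf', hg'] with τ h k using h.mul k
  · exact ((hf''.mul hgx).add (hfx.mul hg'')).congr_deriv (by ring)

lemma sq (hf : HasTwoJet f x f₁ f₂) :
    HasTwoJet (fun y => f y ^ 2) x (2 * f x * f₁) (2 * f₁ ^ 2 + 2 * f x * f₂) := by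
  simpa only [← pow_two] using (hf.mul hf).congr_jet (by ring) (by ring)

lemma rpow (hf : HasTwoJet f x f₁ f₂) (hpos : 0 < f x) (p : ℝ) :
    HasTwoJet (fun y => f y ^ p) x (p * f x ^ (p - 1) * f₁)
      (p * f x ^ (p - 1) * f₂ + p * (p - 1) * f x ^ (p - 2) * f₁ ^ 2) := by
  have hfx := hf.hasDerivAt
  have hev : ∀ᶠ τ in 𝓝 x, 0 < f τ := hfx.continuousAt.eventually (lt_mem_nhds hpos)
  obtain ⟨f', hf', hf'', rfl⟩ := hf
  refine ⟨fun y => p * f y ^ (p - 1) * f' y, ?_, ?_, rfl⟩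
  · filter_upwards [hf', hev] with τ h hτ
    exact (h.rpow_const (Or.inl hτ.ne')).congr_deriv (by ring)
  · have hpow := hfx.rpow_const (p := p - 1) (Or.inl hpos.ne')
    rw [show p - 1 - 1 = p - 2 by ring] at hpow
    exact ((hpow.const_mul p).mul hf'').congr_deriv (by ring)

lemma comp_add_const (c : ℝ) (hf : HasTwoJet f (x + c) f₁ f₂) :
    HasTwoJet (fun y => f (y + c)) x f₁ f₂ := by
  obtain ⟨f', hf', hf'', rfl⟩ := hf
  have hshift : Tendsto (fun y => y + c) (𝓝 x) (𝓝 (x + c)) :=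
    (continuous_add_const c).tendsto x
  refine ⟨fun y => f' (y + c), ?_, hf''.comp_add_const x c, rfl⟩
  filter_upwards [hshift.eventually hf'] with τ h using h.comp_add_const τ c

lemma second_nonpos_of_isLocalMax (hf : HasTwoJet f x f₁ f₂) (hmax : IsLocalMax f x) :
    f₂ ≤ 0 := by
  have hfx := hf.hasDerivAt
  have hzero : f₁ = 0 := hmax.hasDerivAt_eq_zero hfx
  obtain ⟨f', hf', hf'', -⟩ := hf
  have hderiv : deriv f =ᶠ[𝓝 x] f' := hf'.mono fun τ h => h.deriv
  have hderiv₂ : deriv (deriv f) x = f₂ := by rw [hderiv.deriv_eq]; exact hf''.deriv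
  by_contra! hpos
  have hmin : IsLocalMin f x := isLocalMin_of_deriv_deriv_pos (by rwa [hderiv₂])
    (by rw [hfx.deriv, hzero]) hfx.continuousAt
  have hconst : f =ᶠ[𝓝 x] fun _ => f x := by
    filter_upwards [hmax, hmin] with τ h k using le_antisymm h k
  have hderiv_zero : deriv f =ᶠ[𝓝 x] fun _ => 0 := by
    filter_upwards [hconst.eventuallyEq_nhds] with τ h
    rw [h.deriv_eq, deriv_const]
  rw [hderiv_zero.deriv_eq, deriv_const] at hderiv₂
  exact hpos.ne hderiv₂

lemma le_of_isLocalMax_sub (hf : HasTwoJet f x f₁ f₂) (hg : HasTwoJet g x g₁ g₂)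
    (hmax : IsLocalMax (fun y => f y - g y) x) : f₁ = g₁ ∧ f₂ ≤ g₂ :=
  ⟨sub_eq_zero.1 (hmax.hasDerivAt_eq_zero (hf.sub hg).hasDerivAt),
    sub_nonpos.1 ((hf.sub hg).second_nonpos_of_isLocalMax hmax)⟩

end HasTwoJet

lemma norm_add_smul_sq {E : Type*} [NormedAddCommGroup E] [InnerProductSpace ℝ E] {v : E}
    (hv : ‖v‖ = 1) (x : E) (τ : ℝ) :
    ‖x + τ • v‖ ^ 2 = ‖x‖ ^ 2 + 2 * inner ℝ x v * τ + τ ^ 2 := by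
  rw [norm_add_sq_real, norm_smul, hv, inner_smul_right, mul_one, Real.norm_eq_abs, sq_abs]
  ring

lemma hasTwoJet_norm_add_smul_sq {E : Type*} [NormedAddCommGroup E] [InnerProductSpace ℝ E]
    {v : E} (hv : ‖v‖ = 1) (x : E) :
    HasTwoJet (fun τ : ℝ => ‖x + τ • v‖ ^ 2) 0 (2 * inner ℝ x v) 2 := by
  simp only [norm_add_smul_sq hv]
  exact (((HasTwoJet.const _ _).add ((HasTwoJet.id 0).const_mul _)).add
    (HasTwoJet.id 0).sq).congr_jet (by ring) (by ring)

/-! ### Pointwise `a`-harmonicity and contact with test functions -/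

/-- `w` has pure second derivatives at `p`, along horizontal lines and along the vertical line,
and they satisfy `Δw + (a/y) ∂_y w = 0` there. The form `q` collects the horizontal second
derivatives; its trace is taken in an arbitrary orthonormal basis, so that the basis can be adapted
to the test function. -/
def HasAHarmonicJet {n : ℕ} (a : ℝ) (w : En n × ℝ → ℝ) (p : En n × ℝ) : Prop :=
  ∃ (q : En n → ℝ) (r₁ r₂ : ℝ),
    (∀ v, ∃ l, HasTwoJet (fun τ : ℝ => w (p.1 + τ • v, p.2)) 0 l (q v)) ∧
    HasTwoJet (fun y => w (p.1, y)) p.2 r₁ r₂ ∧ (∀ v, q (-v) = q v) ∧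
    ∀ b : OrthonormalBasis (Fin n) ℝ (En n), ∑ i, q (b i) + r₂ + a / p.2 * r₁ = 0

lemma sum_orthonormalBasis_bilin_eq {n : ℕ} (B : En n →L[ℝ] En n →L[ℝ] ℝ)
    (b c : OrthonormalBasis (Fin n) ℝ (En n)) :
    ∑ i, B (b i) (b i) = ∑ i, B (c i) (c i) := by
  let T : En n →ₗ[ℝ] En n :=
    (InnerProductSpace.toDual ℝ (En n)).symm.toLinearEquiv.toLinearMap ∘ₗ B.toLinearMap
  have htrace (b : OrthonormalBasis (Fin n) ℝ (En n)) :
      LinearMap.trace ℝ (En n) T = ∑ i, B (b i) (b i) := by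
    rw [LinearMap.trace_eq_sum_inner T b]
    refine Finset.sum_congr rfl fun i _ => ?_
    rw [real_inner_comm]
    simp [T]
  rw [← htrace b, ← htrace c]

section ContDiffOn

variable {n : ℕ} {u : En n × ℝ → ℝ} {Ω : Set (En n × ℝ)} {p : En n × ℝ}

lemma differentiableAt_fderiv_of_contDiffOn (hΩ : IsOpen Ω) (hu : ContDiffOn ℝ 2 u Ω)
    (hp : p ∈ Ω) : DifferentiableAt ℝ (fderiv ℝ u) p :=
  ((hu.contDiffAt (hΩ.mem_nhds hp)).fderiv_right (m := 1) (by norm_num)).differentiableAt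
    (by norm_num)

lemma D2_eq_fderiv_fderiv (hΩ : IsOpen Ω) (hu : ContDiffOn ℝ 2 u Ω) (hp : p ∈ Ω)
    (v : En n × ℝ) : D2 u p v = fderiv ℝ (fderiv ℝ u) p v v := by
  unfold D2
  rw [fderiv_clm_apply (differentiableAt_fderiv_of_contDiffOn hΩ hu hp)
    (differentiableAt_const v)]
  simp

lemma hasTwoJet_line (hΩ : IsOpen Ω) (hu : ContDiffOn ℝ 2 u Ω) (hp : p ∈ Ω) (v : En n × ℝ) :
    HasTwoJet (fun τ : ℝ => u (p + τ • v)) 0 (fderiv ℝ u p v) (D2 u p v) := by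
  have hline (τ : ℝ) : HasDerivAt (fun τ : ℝ => p + τ • v) v τ := by
    simpa using ((hasDerivAt_id' τ).smul_const v).const_add p
  have hmem : ∀ᶠ τ : ℝ in 𝓝 0, p + τ • v ∈ Ω :=
    (hline 0).continuousAt.eventually (by simpa using hΩ.mem_nhds hp)
  refine ⟨fun τ => fderiv ℝ u (p + τ • v) v, ?_, ?_, by simp⟩
  · filter_upwards [hmem] with τ hτ
    have hdiff : DifferentiableAt ℝ u (p + τ • v) :=
      (hu.contDiffAt (hΩ.mem_nhds hτ)).differentiableAt (by norm_num)
    exact hdiff.hasFDerivAt.comp_hasDerivAt τ (hline τ)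
  · have hdiff : DifferentiableAt ℝ (fun q => fderiv ℝ u q v) (p + (0 : ℝ) • v) := by
      simpa using (differentiableAt_fderiv_of_contDiffOn hΩ hu hp).clm_apply
        (differentiableAt_const v)
    have hderiv := hdiff.hasFDerivAt.comp_hasDerivAt 0 (hline 0)
    rw [zero_smul, add_zero] at hderiv
    exact hderiv

lemma IsAHarmonicOn.hasAHarmonicJet {a : ℝ} (hu : IsAHarmonicOn a u Ω) (hΩ : IsOpen Ω)
    (hp : p ∈ Ω) : HasAHarmonicJet a u p := by
  obtain ⟨hC2, hharm⟩ := hu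
  refine ⟨fun v => D2 u p (v, 0), fderiv ℝ u p (0, 1), D2 u p (0, 1),
    fun v => ⟨fderiv ℝ u p (v, 0), ?_⟩, ?_, fun v => ?_, fun b => ?_⟩
  · refine (hasTwoJet_line hΩ hC2 hp (v, 0)).congr_of_eventuallyEq
      (Eventually.of_forall fun τ => ?_)
    exact congrArg u (by ext <;> simp)
  · have hjet := hasTwoJet_line hΩ hC2 hp (0, 1)
    rw [← add_neg_cancel p.2] at hjet
    refine (hjet.comp_add_const (-p.2)).congr_of_eventuallyEq (Eventually.of_forall fun y => ?_)
    exact congrArg u (by ext <;> simp)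
  · simp only [D2_eq_fderiv_fderiv hΩ hC2 hp]
    rw [show ((-v, 0) : En n × ℝ) = -(v, 0) by simp, map_neg, map_neg]
    simp
  · refine Eq.trans ?_ (hharm p hp)
    simp only [lap, D2_eq_fderiv_fderiv hΩ hC2 hp]
    congr 2
    let J : En n →L[ℝ] En n × ℝ := ContinuousLinearMap.inl ℝ (En n) ℝ
    let B : En n →L[ℝ] En n →L[ℝ] ℝ :=
      ((ContinuousLinearMap.compL ℝ (En n) (En n × ℝ) ℝ).flip J).comp
        ((fderiv ℝ (fderiv ℝ u) p).comp J)
    simpa [B, J] using sum_orthonormalBasis_bilin_eq B b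
      (EuclideanSpace.basisFun (Fin n) ℝ)

end ContDiffOn

lemma isOpen_halfBall (n : ℕ) (r : ℝ) : IsOpen (halfBall n r) := by
  unfold halfBall
  exact (isOpen_lt (by fun_prop) (by fun_prop)).and (isOpen_lt (by fun_prop) (by fun_prop))

lemma exists_orthonormalBasis_apply_eq {n : ℕ} {e : En n} (he : ‖e‖ = 1) :
    ∃ (b : OrthonormalBasis (Fin n) ℝ (En n)) (i : Fin n), b i = e := by
  have hn : 0 < n := by
    refine Nat.pos_of_ne_zero fun h => ?_
    subst h
    simp [Subsingleton.elim e 0] at he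
  have horth : Orthonormal ℝ
      (Set.domRestrict ({⟨0, hn⟩} : Set (Fin n)) (fun _ : Fin n => e)) :=
    ⟨fun _ => he, fun i j hij => absurd (Subsingleton.elim i j) hij⟩
  obtain ⟨b, hb⟩ := horth.exists_orthonormalBasis_extension_of_card_eq (by simp)
  exact ⟨b, ⟨0, hn⟩, hb _ (by simp)⟩

lemma norm_add_smul_unitVector {E : Type*} [NormedAddCommGroup E] [NormedSpace ℝ E] {d : E}
    (hd : d ≠ 0) {τ : ℝ} (hτ : -‖d‖ ≤ τ) : ‖d + τ • ‖d‖⁻¹ • d‖ = τ + ‖d‖ := by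
  have hd₀ : ‖d‖ ≠ 0 := norm_ne_zero_iff.mpr hd
  have heq : d + τ • ‖d‖⁻¹ • d = (τ + ‖d‖) • ‖d‖⁻¹ • d := by
    rw [add_smul, smul_inv_smul₀ hd₀, add_comm]
  rw [heq, norm_smul, norm_smul, norm_inv, norm_norm, inv_mul_cancel₀ hd₀, mul_one,
    Real.norm_of_nonneg (by linarith)]

lemma sum_le_add_card_mul {ι : Type*} [Fintype ι] {g : ι → ℝ} {A B : ℝ} (hB₀ : 0 ≤ B)
    (hB : ∀ i, g i ≤ B) (i : ι) (hA : g i ≤ A) : ∑ j, g j ≤ A + Fintype.card ι * B := by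
  classical
  rw [← Finset.add_sum_erase Finset.univ g (Finset.mem_univ i)]
  refine add_le_add hA ?_
  calc ∑ j ∈ Finset.univ.erase i, g j ≤ ∑ _j ∈ Finset.univ.erase i, B :=
        Finset.sum_le_sum fun j _ => hB j
    _ ≤ ∑ _j : ι, B := Finset.sum_le_sum_of_subset_of_nonneg (Finset.erase_subset _ _)
        fun _ _ _ => hB₀
    _ = Fintype.card ι * B := by simp

/-- The centred difference `w (m + d, y) - w (m - d, y)`, as a function of `P = (m, d, y)`. -/
def doubledDiff {n : ℕ} (w : En n × ℝ → ℝ) (P : En n × En n × ℝ) : ℝ :=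
  w (P.1 + P.2.1, P.2.2) - w (P.1 - P.2.1, P.2.2)

namespace HasAHarmonicJet

variable {n : ℕ} {a : ℝ} {w z : En n × ℝ → ℝ}

lemma sub {p : En n × ℝ} (hw : HasAHarmonicJet a w p) (hz : HasAHarmonicJet a z p) :
    HasAHarmonicJet a (fun p => w p - z p) p := by
  obtain ⟨q, r₁, r₂, hx, hy, hneg, hsum⟩ := hw
  obtain ⟨q', r₁', r₂', hx', hy', hneg', hsum'⟩ := hz
  refine ⟨fun v => q v - q' v, r₁ - r₁', r₂ - r₂', fun v => ?_, hy.sub hy', fun v => ?_,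
    fun b => ?_⟩
  · obtain ⟨l, hl⟩ := hx v
    obtain ⟨l', hl'⟩ := hx' v
    exact ⟨_, hl.sub hl'⟩
  · simp only [hneg, hneg']
  · rw [Finset.sum_sub_distrib]
    linear_combination hsum b - hsum' b

lemma comp_add_const {p : En n × ℝ} (c : En n) (hw : HasAHarmonicJet a w (p.1 + c, p.2)) :
    HasAHarmonicJet a (fun p => w (p.1 + c, p.2)) p := by
  obtain ⟨q, r₁, r₂, hx, hy, hneg, hsum⟩ := hw
  refine ⟨q, r₁, r₂, fun v => ?_, hy, hneg, hsum⟩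
  simpa [add_right_comm] using hx v

variable {y Bm y₁ y₂ : ℝ}

lemma nonneg_of_isLocalMax_sub {T : En n × ℝ → ℝ} {x : En n} (hw : HasAHarmonicJet a w (x, y))
    (hmax : IsLocalMax (fun P => w P - T P) (x, y))
    (hTx : ∀ v : En n, ‖v‖ = 1 →
      ∃ l B, B ≤ Bm ∧ HasTwoJet (fun τ : ℝ => T (x + τ • v, y)) 0 l B)
    (hTy : HasTwoJet (fun η => T (x, η)) y y₁ y₂) :
    0 ≤ n * Bm + y₂ + a / y * y₁ := by
  obtain ⟨q, r₁, r₂, hx, hy, -, hsum⟩ := hw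
  have hq (v : En n) (hv : ‖v‖ = 1) : q v ≤ Bm := by
    obtain ⟨l, B, hB, hT⟩ := hTx v hv
    obtain ⟨l', hl⟩ := hx v
    have hmax' : IsLocalMax ((fun P => w P - T P) ∘ fun τ : ℝ => (x + τ • v, y)) 0 :=
      IsLocalMax.comp_continuous (by simpa using hmax) (by fun_prop)
    exact (hl.le_of_isLocalMax_sub hT hmax').2.trans hB
  have hmax' : IsLocalMax ((fun P => w P - T P) ∘ fun η : ℝ => (x, η)) y :=
    hmax.comp_continuous (by fun_prop)
  obtain ⟨hr₁, hr₂⟩ := hy.le_of_isLocalMax_sub hTy hmax'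
  have htrace : ∑ i, q (EuclideanSpace.basisFun (Fin n) ℝ i) ≤ n * Bm := by
    simpa using Finset.sum_le_card_nsmul Finset.univ _ Bm fun i _ =>
      hq (EuclideanSpace.basisFun (Fin n) ℝ i) (by simp)
  have hzero := hsum (EuclideanSpace.basisFun (Fin n) ℝ)
  rw [hr₁] at hzero
  linarith

/-- Moving `m + d` and `m - d` apart along `d` brings in the radial second derivative `Br` of the
test function: this is how the strict concavity of a doubling profile enters. -/
lemma nonneg_of_isLocalMax_doubled {T : ℝ → En n → ℝ → ℝ} {m d : En n} {ρ₁ Br : ℝ}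
    (hw : HasAHarmonicJet a w (m + d, y)) (hw' : HasAHarmonicJet a w (m - d, y)) (hd : d ≠ 0)
    (hBm : 0 ≤ Bm)
    (hmax : IsLocalMax (fun P => doubledDiff w P - T ‖P.2.1‖ P.1 P.2.2) (m, d, y))
    (hTρ : HasTwoJet (fun ρ => T ρ m y) ‖d‖ ρ₁ Br)
    (hTm : ∀ v : En n, ‖v‖ = 1 →
      ∃ l B, B ≤ Bm ∧ HasTwoJet (fun τ : ℝ => T ‖d‖ (m + τ • v) y) 0 l B)
    (hTy : HasTwoJet (fun η => T ‖d‖ m η) y y₁ y₂) :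
    0 ≤ Br + n * Bm + y₂ + a / y * y₁ := by
  unfold doubledDiff at hmax
  obtain ⟨q, s₁, s₂, hx, hy, hneg, hsum⟩ := hw
  obtain ⟨q', s₁', s₂', hx', hy', hneg', hsum'⟩ := hw'
  have hq (v : En n) (hv : ‖v‖ = 1) : q v - q' v ≤ Bm := by
    obtain ⟨l, B, hB, hT⟩ := hTm v hv
    obtain ⟨k, hk⟩ := hx v
    obtain ⟨k', hk'⟩ := hx' v
    have hmax' := IsLocalMax.comp_continuous (g := fun τ : ℝ => (m + τ • v, d, y)) (b := 0)
      (by simpa using hmax) (by fun_prop)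
    refine ((hk.sub hk').le_of_isLocalMax_sub hT ?_).2.trans hB
    refine hmax'.congr (Eventually.of_forall fun τ => ?_)
    simp only [Function.comp_apply, add_right_comm m, sub_add_eq_add_sub m]
  have hd₀ : 0 < ‖d‖ := norm_pos_iff.mpr hd
  set e : En n := ‖d‖⁻¹ • d with he
  have hen : ‖e‖ = 1 := by rw [he, norm_smul, norm_inv, norm_norm, inv_mul_cancel₀ hd₀.ne']
  have hqe : q e - q' e ≤ Br := by
    obtain ⟨k, hk⟩ := hx e
    obtain ⟨k', hk'⟩ := hx' (-e)
    rw [hneg'] at hk'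
    rw [← zero_add ‖d‖] at hTρ
    have hmax' := IsLocalMax.comp_continuous (g := fun τ : ℝ => (m, d + τ • e, y)) (b := 0)
      (by simpa using hmax) (by fun_prop)
    refine ((hk.sub hk').le_of_isLocalMax_sub (hTρ.comp_add_const ‖d‖) (hmax'.congr ?_)).2
    filter_upwards [lt_mem_nhds (neg_neg_of_pos hd₀)] with τ hτ
    simp only [Function.comp_apply, he, norm_add_smul_unitVector hd hτ.le, add_assoc, sub_sub,
      smul_neg, ← sub_eq_add_neg]
  have hmax' := hmax.comp_continuous (g := fun η : ℝ => (m, d, η)) (b := y) (by fun_prop)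
  obtain ⟨hs₁, hs₂⟩ := (hy.sub hy').le_of_isLocalMax_sub hTy hmax'
  obtain ⟨b, i, hbi⟩ := exists_orthonormalBasis_apply_eq hen
  have htrace := sum_le_add_card_mul hBm (g := fun j => q (b j) - q' (b j))
    (fun j => hq _ (b.orthonormal.1 j)) i (hbi ▸ hqe)
  rw [Finset.sum_sub_distrib, Fintype.card_fin] at htrace
  have hsplit : a / y * y₁ = a / y * s₁ - a / y * s₁' := by rw [← hs₁]; ring
  linarith [hsum b, hsum' b]

end HasAHarmonicJet

lemma weightedDeriv_nonpos_of_le {v v' : ℝ → ℝ} {a L η : ℝ} (hη : 0 < η)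
    (hcont : ContinuousOn v (Ico 0 η)) (hderiv : ∀ y ∈ Ioo 0 η, HasDerivAt v (v' y) y)
    (hle : ∀ y ∈ Ioo 0 η, v y ≤ v 0)
    (hlim : Tendsto (fun y : ℝ => y ^ a * v' y) (𝓝[>] 0) (𝓝 L)) : L ≤ 0 := by
  by_contra! hL
  obtain ⟨δ, hδ : 0 < δ, hpos⟩ :=
    mem_nhdsGT_iff_exists_Ioo_subset.1 (hlim.eventually (lt_mem_nhds hL))
  obtain ⟨z, hz, hzmin⟩ := exists_between (lt_min hδ hη)
  obtain ⟨hzδ, hzη⟩ := lt_min_iff.1 hzmin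
  have hmono : StrictMonoOn v (Icc 0 z) := by
    refine strictMonoOn_of_deriv_pos (convex_Icc 0 z)
      (hcont.mono fun y hy => ⟨hy.1, hy.2.trans_lt hzη⟩) fun y hy => ?_
    rw [interior_Icc] at hy
    rw [(hderiv y ⟨hy.1, hy.2.trans hzη⟩).deriv]
    have hweighted : 0 < y ^ a * v' y := hpos ⟨hy.1, hy.2.trans hzδ⟩
    exact (pos_iff_pos_of_mul_pos hweighted).1 (Real.rpow_pos_of_pos hy.1 a)
  have hlt := hmono (left_mem_Icc.2 hz.le) (right_mem_Icc.2 hz.le) hz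
  exact (hle z ⟨hz, hzη⟩).not_gt hlt

/-! ### The interior gradient estimate -/

lemma nonpos_of_forall_not_isLocalMax {X : Type*} [TopologicalSpace X] {K : Set X} {Φ : X → ℝ}
    (hK : IsCompact K) (hΦ : ContinuousOn Φ K) (hint : ∀ P ∈ K, 0 < Φ P → K ∈ 𝓝 P)
    (hmax : ∀ P ∈ K, 0 < Φ P → ¬ IsLocalMax Φ P) : ∀ P ∈ K, Φ P ≤ 0 := by
  by_contra! hcon
  obtain ⟨P₀, hP₀, hpos₀⟩ := hcon
  obtain ⟨P, hP, hPmax⟩ := hK.exists_isMaxOn ⟨P₀, hP₀⟩ hΦ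
  have hpos : 0 < Φ P := hpos₀.trans_le (hPmax hP₀)
  exact hmax P hP hpos (hPmax.isLocalMax (hint P hP hpos))

/-- The test function of the interior gradient estimate; it is strictly concave in the distance `ρ`
between the doubled points, and exceeds `r ^ 2` at the boundary of the doubling region. -/
def interiorBarrier {n : ℕ} (A r : ℝ) (x₀ : En n) (y₀ ρ : ℝ) (m : En n) (y : ℝ) : ℝ :=
  4 * (‖m - x₀‖ ^ 2 + (y - y₀) ^ 2) + A * (ρ * r - ρ ^ 2)

section InteriorBarrier

variable {n : ℕ} {A a k r y₀ ρ y : ℝ} {x₀ m d : En n} {w : En n × ℝ → ℝ}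

lemma interiorBarrier_lt_imp_interior (hA : 8 ≤ A) (hρ₀ : 0 ≤ ρ) (hm : ‖m - x₀‖ ≤ r / 2)
    (hρ : ρ ≤ r / 4) (hy : |y - y₀| ≤ r / 2) (hlt : interiorBarrier A r x₀ y₀ ρ m y < r ^ 2) :
    ‖m - x₀‖ < r / 2 ∧ ρ < r / 4 ∧ |y - y₀| < r / 2 := by
  unfold interiorBarrier at hlt
  rw [← sq_abs (y - y₀)] at hlt
  have hconc : 0 ≤ ρ * r - ρ ^ 2 := by nlinarith
  have hAρ : 8 * (ρ * r - ρ ^ 2) ≤ A * (ρ * r - ρ ^ 2) := by gcongr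
  refine ⟨hm.lt_of_ne fun h => ?_, hρ.lt_of_ne fun h => ?_, hy.lt_of_ne fun h => ?_⟩
  · rw [h] at hlt
    nlinarith [sq_nonneg |y - y₀|]
  · rw [h] at hlt hAρ
    nlinarith [sq_nonneg |y - y₀|, sq_nonneg ‖m - x₀‖]
  · rw [h] at hlt
    nlinarith [sq_nonneg ‖m - x₀‖]

lemma hasTwoJet_interiorBarrier_radius :
    HasTwoJet (fun ρ => k * interiorBarrier A r x₀ y₀ ρ m y) ρ (k * A * (r - 2 * ρ))
      (-2 * A * k) := by
  have hid := HasTwoJet.id ρ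
  refine ((((hid.const_mul r).sub hid.sq).const_mul (k * A)).add
    (HasTwoJet.const (k * (4 * (‖m - x₀‖ ^ 2 + (y - y₀) ^ 2))) ρ)).congr_jet
    (by ring) (by ring) |>.congr_of_eventuallyEq (Eventually.of_forall fun τ => ?_)
  simp only [interiorBarrier]
  ring

lemma hasTwoJet_interiorBarrier_line {v : En n} (hv : ‖v‖ = 1) :
    HasTwoJet (fun τ : ℝ => k * interiorBarrier A r x₀ y₀ ρ (m + τ • v) y) 0
      (8 * k * inner ℝ (m - x₀) v) (8 * k) := by
  refine (((hasTwoJet_norm_add_smul_sq hv (m - x₀)).const_mul (4 * k)).add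
    (HasTwoJet.const (k * (4 * (y - y₀) ^ 2 + A * (ρ * r - ρ ^ 2))) 0)).congr_jet
    (by ring) (by ring) |>.congr_of_eventuallyEq (Eventually.of_forall fun τ => ?_)
  simp only [interiorBarrier, add_sub_right_comm m]
  ring

lemma hasTwoJet_interiorBarrier_height :
    HasTwoJet (fun η => k * interiorBarrier A r x₀ y₀ ρ m η) y (8 * k * (y - y₀)) (8 * k) := by
  refine ((((HasTwoJet.id y).sub (HasTwoJet.const y₀ y)).sq.const_mul (4 * k)).add
    (HasTwoJet.const (k * (4 * ‖m - x₀‖ ^ 2 + A * (ρ * r - ρ ^ 2))) y)).congr_jet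
    (by ring) (by ring) |>.congr_of_eventuallyEq (Eventually.of_forall fun τ => ?_)
  simp only [interiorBarrier]
  ring

lemma not_isLocalMax_sub_interiorBarrier (ha₀ : 0 ≤ a) (ha₁ : a ≤ 1) (hk : 0 < k) (hd : d ≠ 0)
    (hy : 0 < y) (hy₀ : y - y₀ ≤ y) (hw : HasAHarmonicJet a w (m + d, y))
    (hw' : HasAHarmonicJet a w (m - d, y)) :
    ¬ IsLocalMax (fun P => doubledDiff w P -
      k * interiorBarrier (4 * n + 12) r x₀ y₀ ‖P.2.1‖ P.1 P.2.2) (m, d, y) := by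
  intro hmax
  have hcontact := hw.nonneg_of_isLocalMax_doubled (Bm := 8 * k)
    (T := fun ρ m y => k * interiorBarrier (4 * n + 12) r x₀ y₀ ρ m y) hw' hd (by positivity)
    hmax hasTwoJet_interiorBarrier_radius
    (fun v hv => ⟨_, _, le_rfl, hasTwoJet_interiorBarrier_line hv⟩)
    hasTwoJet_interiorBarrier_height
  have hdrift : a / y * (8 * k * (y - y₀)) ≤ 8 * k := by
    have hratio : a * (y - y₀) / y ≤ 1 := (div_le_one hy).2 (by nlinarith)
    calc a / y * (8 * k * (y - y₀)) = 8 * k * (a * (y - y₀) / y) := by ring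
      _ ≤ 8 * k := mul_le_of_le_one_right (by positivity) hratio
  nlinarith

end InteriorBarrier

section InteriorEstimate

variable {n : ℕ} {a y₀ r μ : ℝ} {x₀ : En n} {w : En n × ℝ → ℝ}

lemma mem_closedBall_prod_of_doubling {P : En n × En n × ℝ}
    (hP : P ∈ Metric.closedBall x₀ (r / 2) ×ˢ Metric.closedBall (0 : En n) (r / 4) ×ˢ
      Metric.closedBall y₀ (r / 2)) :
    (P.1 + P.2.1, P.2.2) ∈ Metric.closedBall x₀ r ×ˢ Metric.closedBall y₀ r ∧
      (P.1 - P.2.1, P.2.2) ∈ Metric.closedBall x₀ r ×ˢ Metric.closedBall y₀ r := by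
  obtain ⟨m, d, y⟩ := P
  simp only [mem_prod, Metric.mem_closedBall, dist_eq_norm, sub_zero] at hP ⊢
  obtain ⟨hm, hd, hy⟩ := hP
  have hr := norm_nonneg d
  refine ⟨⟨?_, by linarith⟩, ?_, by linarith⟩
  · rw [add_sub_right_comm]
    exact (norm_add_le _ _).trans (by linarith)
  · rw [sub_right_comm]
    exact (norm_sub_le _ _).trans (by linarith)

lemma doubledDiff_pos_imp_interior (hr : 0 < r) (hμ : 0 < μ)
    (hbound : ∀ p ∈ Metric.closedBall x₀ r ×ˢ Metric.closedBall y₀ r, |w p| ≤ μ)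
    {P : En n × En n × ℝ}
    (hP : P ∈ Metric.closedBall x₀ (r / 2) ×ˢ Metric.closedBall (0 : En n) (r / 4) ×ˢ
      Metric.closedBall y₀ (r / 2))
    (hpos : 0 < doubledDiff w P -
      2 * μ / r ^ 2 * interiorBarrier (4 * n + 12) r x₀ y₀ ‖P.2.1‖ P.1 P.2.2) :
    ‖P.1 - x₀‖ < r / 2 ∧ ‖P.2.1‖ < r / 4 ∧ |P.2.2 - y₀| < r / 2 := by
  obtain ⟨hp, hp'⟩ := mem_closedBall_prod_of_doubling hP
  simp only [mem_prod, Metric.mem_closedBall, dist_eq_norm, sub_zero] at hP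
  refine interiorBarrier_lt_imp_interior (A := 4 * n + 12) (by linarith) (norm_nonneg _)
    hP.1 hP.2.1 hP.2.2 ?_
  have hw := (abs_le.1 (hbound _ hp)).2
  have hw' := (abs_le.1 (hbound _ hp')).1
  have hk : 0 < 2 * μ / r ^ 2 := by positivity
  rw [← mul_lt_mul_iff_right₀ hk, div_mul_cancel₀ _ (by positivity)]
  unfold doubledDiff at hpos
  linarith

lemma doubledDiff_le_interiorBarrier (ha₀ : 0 ≤ a) (ha₁ : a ≤ 1) (hr : 0 < r)
    (hry : 2 * r ≤ y₀) (hμ : 0 < μ)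
    (hjet : ∀ p ∈ Metric.closedBall x₀ r ×ˢ Metric.closedBall y₀ r, HasAHarmonicJet a w p)
    (hcont : ContinuousOn w (Metric.closedBall x₀ r ×ˢ Metric.closedBall y₀ r))
    (hbound : ∀ p ∈ Metric.closedBall x₀ r ×ˢ Metric.closedBall y₀ r, |w p| ≤ μ) :
    ∀ P ∈ Metric.closedBall x₀ (r / 2) ×ˢ Metric.closedBall (0 : En n) (r / 4) ×ˢ
      Metric.closedBall y₀ (r / 2), doubledDiff w P -
        2 * μ / r ^ 2 * interiorBarrier (4 * n + 12) r x₀ y₀ ‖P.2.1‖ P.1 P.2.2 ≤ 0 := by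
  refine nonpos_of_forall_not_isLocalMax ((isCompact_closedBall _ _).prod
    ((isCompact_closedBall _ _).prod (isCompact_closedBall _ _))) ?_ (fun P hP hpos => ?_) ?_
  · refine ((hcont.comp (by fun_prop) fun P hP => (mem_closedBall_prod_of_doubling hP).1).sub
      (hcont.comp (by fun_prop) fun P hP => (mem_closedBall_prod_of_doubling hP).2)).sub
      (Continuous.continuousOn ?_)
    unfold interiorBarrier
    fun_prop
  · obtain ⟨hm, hd, hy⟩ := doubledDiff_pos_imp_interior hr hμ hbound hP hpos
    exact prod_mem_nhds (Metric.closedBall_mem_nhds_of_mem (by simpa [dist_eq_norm] using hm))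
      (prod_mem_nhds (Metric.closedBall_mem_nhds_of_mem (by simpa using hd))
        (Metric.closedBall_mem_nhds_of_mem (by simpa [dist_eq_norm] using hy)))
  · rintro ⟨m, d, y⟩ hP hpos
    obtain ⟨-, -, hy⟩ := doubledDiff_pos_imp_interior hr hμ hbound hP hpos
    obtain ⟨hp, hp'⟩ := mem_closedBall_prod_of_doubling hP
    have hk : 0 < 2 * μ / r ^ 2 := by positivity
    rw [abs_lt] at hy
    refine not_isLocalMax_sub_interiorBarrier ha₀ ha₁ hk ?_ (by linarith) (by linarith)
      (hjet _ hp) (hjet _ hp')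
    rintro rfl
    have hbarrier : 0 ≤ interiorBarrier (4 * n + 12) r x₀ y₀ ‖(0 : En n)‖ m y := by
      simp only [interiorBarrier, norm_zero]
      nlinarith [sq_nonneg ‖m - x₀‖, sq_nonneg (y - y₀)]
    simp only [doubledDiff, add_zero, sub_zero, sub_self, zero_sub] at hpos
    nlinarith

lemma abs_doubledDiff_le (ha₀ : 0 ≤ a) (ha₁ : a ≤ 1) (hr : 0 < r) (hry : 2 * r ≤ y₀)
    (hμ : 0 < μ)
    (hjet : ∀ p ∈ Metric.closedBall x₀ r ×ˢ Metric.closedBall y₀ r, HasAHarmonicJet a w p)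
    (hcont : ContinuousOn w (Metric.closedBall x₀ r ×ˢ Metric.closedBall y₀ r))
    (hbound : ∀ p ∈ Metric.closedBall x₀ r ×ˢ Metric.closedBall y₀ r, |w p| ≤ μ)
    {d : En n} (hd : ‖d‖ ≤ r / 4) :
    |doubledDiff w (x₀, d, y₀)| ≤ 2 * μ * (4 * n + 12) * ‖d‖ / r := by
  have hle (h : En n) (hh : ‖h‖ = ‖d‖) :
      doubledDiff w (x₀, h, y₀) ≤ 2 * μ * (4 * n + 12) * ‖d‖ / r := by
    calc doubledDiff w (x₀, h, y₀)
        ≤ 2 * μ / r ^ 2 * interiorBarrier (4 * n + 12) r x₀ y₀ ‖h‖ x₀ y₀ :=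
          sub_nonpos.1 (doubledDiff_le_interiorBarrier ha₀ ha₁ hr hry hμ hjet hcont hbound
            (x₀, h, y₀) ⟨Metric.mem_closedBall_self (by positivity), by simpa [hh] using hd,
              Metric.mem_closedBall_self (by positivity)⟩)
      _ ≤ 2 * μ / r ^ 2 * ((4 * n + 12) * (‖d‖ * r)) := by
          simp only [interiorBarrier, sub_self, norm_zero, hh]
          gcongr
          nlinarith [sq_nonneg ‖d‖]
      _ = 2 * μ * (4 * n + 12) * ‖d‖ / r := by field_simp
  have hneg := hle (-d) (norm_neg d)
  refine abs_le.2 ⟨?_, hle d rfl⟩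
  simp only [doubledDiff, sub_neg_eq_add, ← sub_eq_add_neg] at hneg ⊢
  linarith

end InteriorEstimate

/-! ### Solutions on a box -/

/-- A closed box inside the closed unit half ball on which the comparison arguments take place. -/
def solutionBox (n : ℕ) : Set (En n × ℝ) := {p | ‖p.1‖ ≤ 7 / 8 ∧ p.2 ∈ Icc (0 : ℝ) (3 / 8)}

/-- First-order boundary data of `w` at time `t` and at the boundary point `x`: the time derivative
`Dt` from the past, the tangential derivative `G`, and the weighted normal derivative
`L = lim y ^ a ∂_y w`. -/
structure HasBoundaryJet {n : ℕ} (a : ℝ) (w : ℝ → En n × ℝ → ℝ) (t : ℝ) (x : En n) (Dt L : ℝ)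
    (G : En n →L[ℝ] ℝ) : Prop where
  time : HasDerivWithinAt (fun τ => w τ (x, 0)) Dt (Iic t) t
  tangential : HasFDerivAt (fun z => w t (z, 0)) G x
  continuousOn : ContinuousOn (fun y => w t (x, y)) (Icc 0 (3 / 8))
  normal : ∃ v' : ℝ → ℝ, (∀ y ∈ Ioo (0 : ℝ) (3 / 8), HasDerivAt (fun η => w t (x, η)) (v' y) y) ∧
    Tendsto (fun y : ℝ => y ^ a * v' y) (𝓝[>] 0) (𝓝 L)

/-- The properties of a bounded solution which the estimates rely on, restricted to `solutionBox`.
Here `b` is bounded by `M` and has `γ`-Hölder constant `M`, and `f` has `γ`-Hölder constant `F`. -/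
structure IsBoxSolution {n : ℕ} (a γ M U₀ F : ℝ) (b : ℝ → En n → En n) (f : ℝ → En n → ℝ)
    (u : ℝ → En n × ℝ → ℝ) : Prop where
  continuousOn : ContinuousOn (fun q : ℝ × (En n × ℝ) => u q.1 q.2)
    (Icc (-1) 0 ×ˢ solutionBox n)
  hasAHarmonicJet : ∀ t ∈ Icc (-1 : ℝ) 0, ∀ p ∈ solutionBox n, 0 < p.2 →
    HasAHarmonicJet a (u t) p
  abs_le : ∀ t ∈ Icc (-1 : ℝ) 0, ∀ p ∈ solutionBox n, |u t p| ≤ U₀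
  boundaryEq : ∀ t ∈ Ioc (-1 : ℝ) 0, ∀ x, ‖x‖ ≤ 7 / 8 →
    ∃ Dt L G, HasBoundaryJet a u t x Dt L G ∧ Dt + G (b t x) - L = f t x
  norm_drift_le : ∀ t ∈ Icc (-1 : ℝ) 0, ∀ x, ‖x‖ ≤ 7 / 8 → ‖b t x‖ ≤ M
  norm_drift_sub_le : ∀ t ∈ Icc (-1 : ℝ) 0, ∀ x x', ‖x‖ ≤ 7 / 8 → ‖x'‖ ≤ 7 / 8 →
    ‖b t x - b t x'‖ ≤ M * ‖x - x'‖ ^ γ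
  abs_source_sub_le : ∀ t ∈ Icc (-1 : ℝ) 0, ∀ x x', ‖x‖ ≤ 7 / 8 → ‖x'‖ ≤ 7 / 8 →
    |f t x - f t x'| ≤ F * ‖x - x'‖ ^ γ

lemma HasAHarmonicJet.const_mul {n : ℕ} {a : ℝ} {w : En n × ℝ → ℝ} {p : En n × ℝ} (c : ℝ)
    (hw : HasAHarmonicJet a w p) : HasAHarmonicJet a (fun p => c * w p) p := by
  obtain ⟨q, r₁, r₂, hx, hy, hneg, hsum⟩ := hw
  refine ⟨fun v => c * q v, c * r₁, c * r₂, fun v => ?_, hy.const_mul c,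
    fun v => by simp only [hneg], fun b => ?_⟩
  · obtain ⟨l, hl⟩ := hx v
    exact ⟨_, hl.const_mul c⟩
  · rw [← Finset.mul_sum]
    linear_combination c * hsum b

namespace HasBoundaryJet

variable {n : ℕ} {a t Dt L Dt' L' : ℝ} {w w' : ℝ → En n × ℝ → ℝ} {x : En n} {G G' : En n →L[ℝ] ℝ}

lemma neg (h : HasBoundaryJet a w t x Dt L G) :
    HasBoundaryJet a (fun t p => -w t p) t x (-Dt) (-L) (-G) := by
  obtain ⟨v', hv', hL⟩ := h.normal
  refine ⟨h.time.neg, h.tangential.neg, h.continuousOn.neg, fun y => -v' y,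
    fun y hy => (hv' y hy).neg, ?_⟩
  simpa only [mul_neg] using hL.neg

lemma sub (h : HasBoundaryJet a w t x Dt L G) (h' : HasBoundaryJet a w' t x Dt' L' G') :
    HasBoundaryJet a (fun t p => w t p - w' t p) t x (Dt - Dt') (L - L') (G - G') := by
  obtain ⟨v', hv', hL⟩ := h.normal
  obtain ⟨v'', hv'', hL'⟩ := h'.normal
  refine ⟨h.time.sub h'.time, h.tangential.sub h'.tangential, h.continuousOn.sub h'.continuousOn,
    fun y => v' y - v'' y, fun y hy => (hv' y hy).sub (hv'' y hy), ?_⟩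
  simpa only [mul_sub] using hL.sub hL'

lemma comp_add_const (c : En n) (h : HasBoundaryJet a w t (x + c) Dt L G) :
    HasBoundaryJet a (fun t p => w t (p.1 + c, p.2)) t x Dt L G :=
  ⟨h.time, (hasFDerivAt_comp_add_right c).2 h.tangential, h.continuousOn, h.normal⟩

end HasBoundaryJet

lemma IsBoxSolution.neg {n : ℕ} {a γ M U₀ F : ℝ} {b : ℝ → En n → En n} {f : ℝ → En n → ℝ}
    {u : ℝ → En n × ℝ → ℝ} (h : IsBoxSolution a γ M U₀ F b f u) :
    IsBoxSolution a γ M U₀ F b (fun t x => -f t x) (fun t p => -u t p) where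
  continuousOn := h.continuousOn.neg
  hasAHarmonicJet t ht p hp hp₀ := by
    simpa only [neg_one_mul] using (h.hasAHarmonicJet t ht p hp hp₀).const_mul (-1)
  abs_le t ht p hp := by simpa only [abs_neg] using h.abs_le t ht p hp
  boundaryEq t ht x hx := by
    obtain ⟨Dt, L, G, hjet, heq⟩ := h.boundaryEq t ht x hx
    refine ⟨-Dt, -L, -G, hjet.neg, ?_⟩
    rw [neg_apply]
    linear_combination -heq
  norm_drift_le := h.norm_drift_le
  norm_drift_sub_le := h.norm_drift_sub_le
  abs_source_sub_le t ht x x' hx hx' := by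
    simpa only [neg_sub_neg, abs_sub_comm (f t x')] using h.abs_source_sub_le t ht x x' hx hx'

section OfSolution

variable {n : ℕ} {a γ M U₀ F : ℝ} {b : ℝ → En n → En n} {f : ℝ → En n → ℝ}
  {u : ℝ → En n × ℝ → ℝ}

lemma solutionBox_norm_sq_lt {p : En n × ℝ} (hp : p ∈ solutionBox n) :
    ‖p.1‖ ^ 2 + p.2 ^ 2 < 1 ^ 2 := by
  obtain ⟨hx, hy₀, hy⟩ := hp
  nlinarith [norm_nonneg p.1]

lemma mem_flatBall_of_norm_le {x : En n} (hx : ‖x‖ ≤ 7 / 8) : x ∈ flatBall n 1 :=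
  hx.trans_lt (by norm_num)

lemma continuousOn_vertical
    (hcont : ContinuousOn (fun q : ℝ × (En n × ℝ) => u q.1 q.2) (Icc (-1) 0 ×ˢ solutionBox n))
    {t : ℝ} (ht : t ∈ Icc (-1 : ℝ) 0) {x : En n} (hx : ‖x‖ ≤ 7 / 8) :
    ContinuousOn (fun y => u t (x, y)) (Icc 0 (3 / 8)) :=
  hcont.comp (f := fun y : ℝ => (t, x, y)) (by fun_prop) fun _ hy => ⟨ht, hx, hy⟩

lemma abs_le_of_abs_le_halfBall
    (hcont : ContinuousOn (fun q : ℝ × (En n × ℝ) => u q.1 q.2) (Icc (-1) 0 ×ˢ solutionBox n))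
    {t : ℝ} (ht : t ∈ Icc (-1 : ℝ) 0) (hbound : ∀ p ∈ halfBall n 1, |u t p| ≤ U₀)
    {p : En n × ℝ} (hp : p ∈ solutionBox n) : |u t p| ≤ U₀ := by
  obtain ⟨x, y⟩ := p
  rcases hp.2.1.eq_or_lt with rfl | hy
  · have hIcc : Icc (0 : ℝ) (3 / 8) ∈ 𝓝[>] 0 := Icc_mem_nhdsGT (by norm_num)
    have hlim : Tendsto (fun y => |u t (x, y)|) (𝓝[>] 0) (𝓝 |u t (x, 0)|) :=
      ((continuousOn_vertical hcont ht hp.1 0 hp.2).mono_of_mem_nhdsWithin hIcc).tendsto.abs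
    refine le_of_tendsto hlim ?_
    filter_upwards [hIcc, self_mem_nhdsWithin] with y hy hy₀
    exact hbound _ ⟨solutionBox_norm_sq_lt (p := (x, y)) ⟨hp.1, hy⟩, hy₀⟩
  · exact hbound _ ⟨solutionBox_norm_sq_lt hp, hy⟩

lemma IsExtDDSolution.continuousOn_solutionBox (hu : IsExtDDSolution a b f u) :
    ContinuousOn (fun q : ℝ × (En n × ℝ) => u q.1 q.2) (Icc (-1) 0 ×ˢ solutionBox n) :=
  hu.1.mono (prod_mono Subset.rfl fun _ hp => ⟨(solutionBox_norm_sq_lt hp).le, hp.2.1⟩)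

lemma IsExtDDSolution.exists_hasBoundaryJet (hu : IsExtDDSolution a b f u) {t : ℝ}
    (ht : t ∈ Ioc (-1 : ℝ) 0) {x : En n} (hx : ‖x‖ ≤ 7 / 8) :
    ∃ Dt L G, HasBoundaryJet a u t x Dt L G ∧ Dt + G (b t x) - L = f t x := by
  have hvert := continuousOn_vertical hu.continuousOn_solutionBox (Ioc_subset_Icc_self ht) hx
  obtain ⟨-, hharm, hdiff, heq⟩ := hu
  have hmem : (t, x) ∈ Ioc (-1 : ℝ) 0 ×ˢ flatBall n 1 := ⟨ht, mem_flatBall_of_norm_le hx⟩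
  obtain ⟨L, hL, heq⟩ := heq t x hmem
  have hd := (hdiff (t, x) hmem).hasFDerivWithinAt
  set D := fderivWithin ℝ (bdryFun u) (Ioc (-1 : ℝ) 0 ×ˢ flatBall n 1) (t, x)
  refine ⟨D (1, 0), L, D.comp (ContinuousLinearMap.inr ℝ ℝ (En n)),
    ⟨?_, ?_, hvert, fun y => fderiv ℝ (u t) (x, y) (0, 1), fun y hy => ?_, hL⟩, heq⟩
  · have hpath : HasDerivWithinAt (fun τ : ℝ => (τ, x)) ((1 : ℝ), (0 : En n)) (Ioc (-1) t) t :=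
      (hasDerivWithinAt_id t _).prodMk (hasDerivWithinAt_const t _ x)
    have hpast : HasDerivWithinAt (fun τ => u τ (x, 0)) (D (1, 0)) (Ioc (-1) t) t :=
      hd.comp_hasDerivWithinAt t hpath fun τ hτ =>
        mk_mem_prod (s := Ioc (-1 : ℝ) 0) ⟨hτ.1, hτ.2.trans ht.2⟩ hmem.2
    exact hpast.mono_of_mem_nhdsWithin (Ioc_mem_nhdsLE ht.1)
  · have hslice : HasFDerivWithinAt (fun z => u t (z, 0))
        (D.comp (ContinuousLinearMap.inr ℝ ℝ (En n))) (flatBall n 1) x :=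
      hd.comp x (hasFDerivAt_prodMk_right t x).hasFDerivWithinAt fun z hz => ⟨ht, hz⟩
    have hopen : IsOpen (flatBall n 1) := isOpen_lt (by fun_prop) (by fun_prop)
    exact hslice.hasFDerivAt (hopen.mem_nhds hmem.2)
  · have hp : (x, y) ∈ halfBall n 1 :=
      ⟨solutionBox_norm_sq_lt (p := (x, y)) ⟨hx, hy.1.le, hy.2.le⟩, hy.1⟩
    have hdiff : DifferentiableAt ℝ (u t) (x, y) :=
      ((hharm t (Ioc_subset_Icc_self ht)).1.contDiffAt
        ((isOpen_halfBall n 1).mem_nhds hp)).differentiableAt (by norm_num)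
    exact hdiff.hasFDerivAt.comp_hasDerivAt y ((hasDerivAt_const y x).prodMk (hasDerivAt_id y))

lemma IsExtDDSolution.isBoxSolution (hu : IsExtDDSolution a b f u)
    (hb : ∀ t ∈ Icc (-1 : ℝ) 0, (∀ x ∈ flatBall n 1, ‖b t x‖ ≤ M) ∧
      ∀ x ∈ flatBall n 1, ∀ x' ∈ flatBall n 1, ‖b t x - b t x'‖ ≤ M * ‖x - x'‖ ^ γ)
    (hf : ∀ t ∈ Icc (-1 : ℝ) 0, ∀ x ∈ flatBall n 1, ∀ x' ∈ flatBall n 1,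
      |f t x - f t x'| ≤ F * ‖x - x'‖ ^ γ)
    (hbound : ∀ t ∈ Icc (-1 : ℝ) 0, ∀ p ∈ halfBall n 1, |u t p| ≤ U₀) :
    IsBoxSolution a γ M U₀ F b f u := by
  have hcont := hu.continuousOn_solutionBox
  exact
    { continuousOn := hcont
      hasAHarmonicJet := fun t ht p hp hp₀ =>
        (hu.2.1 t ht).hasAHarmonicJet (isOpen_halfBall n 1) ⟨solutionBox_norm_sq_lt hp, hp₀⟩
      abs_le := fun t ht p hp => abs_le_of_abs_le_halfBall hcont ht (hbound t ht) hp
      boundaryEq := fun t ht x hx => hu.exists_hasBoundaryJet ht hx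
      norm_drift_le := fun t ht x hx => (hb t ht).1 x (mem_flatBall_of_norm_le hx)
      norm_drift_sub_le := fun t ht x x' hx hx' =>
        (hb t ht).2 x (mem_flatBall_of_norm_le hx) x' (mem_flatBall_of_norm_le hx')
      abs_source_sub_le := fun t ht x x' hx hx' =>
        hf t ht x (mem_flatBall_of_norm_le hx) x' (mem_flatBall_of_norm_le hx') }

end OfSolution

lemma hasDerivWithinAt_Iic_nonneg_of_le {v : ℝ → ℝ} {t v' : ℝ}
    (hv : HasDerivWithinAt v v' (Iic t) t) (hle : ∀ᶠ τ in 𝓝[<] t, v τ ≤ v t) : 0 ≤ v' := by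
  have hslope := hv.mono Iio_subset_Iic_self
  rw [hasDerivWithinAt_iff_tendsto_slope' self_notMem_Iio] at hslope
  refine ge_of_tendsto hslope ?_
  filter_upwards [hle, self_mem_nhdsWithin] with τ hτ hlt
  rw [slope_def_field]
  exact div_nonneg_of_nonpos (sub_nonpos.2 hτ) (sub_nonpos.2 (mem_Iio.1 hlt).le)

/-! ### The cutoff -/

/-- The cutoff which vanishes at time `-c` and on the sphere of radius `√R`. Its negative powers are
the localizing penalties of both comparison arguments. -/
def cutoff {n : ℕ} (c R t : ℝ) (m : En n) : ℝ := (t + c) * (R - ‖m‖ ^ 2)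

section Cutoff

variable {n : ℕ} {c R t ν : ℝ} {m v : En n}

lemma norm_sq_lt_of_cutoff_pos (ht₀ : 0 < t + c) (hθ : 0 < cutoff c R t m) : ‖m‖ ^ 2 < R :=
  sub_pos.1 ((pos_iff_pos_of_mul_pos hθ).1 ht₀)

lemma cutoff_le_one (ht₀ : 0 < t + c) (ht₁ : t + c ≤ 1) (hR : R ≤ 1)
    (hθ : 0 < cutoff c R t m) : cutoff c R t m ≤ 1 := by
  have hm := norm_sq_lt_of_cutoff_pos ht₀ hθ
  exact mul_le_one₀ ht₁ (by linarith) (by linarith [sq_nonneg ‖m‖])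

lemma cutoff_pos_of_norm_lt {r : ℝ} (hR : r ^ 2 = R) (ht : -c < t) (hm : ‖m‖ < r) :
    0 < cutoff c R t m :=
  mul_pos (by linarith) (sub_pos.2 (hR ▸ pow_lt_pow_left₀ hm (norm_nonneg m) two_ne_zero))

lemma cutoff_nonneg_of_norm_le {r : ℝ} (hR : r ^ 2 = R) (ht : -c ≤ t) (hm : ‖m‖ ≤ r) :
    0 ≤ cutoff c R t m :=
  mul_nonneg (by linarith) (sub_nonneg.2 (hR ▸ pow_le_pow_left₀ (norm_nonneg m) hm 2))

lemma lt_and_norm_lt_of_cutoff_pos {r : ℝ} (hR : r ^ 2 = R) (hr : 0 ≤ r) (ht : -c ≤ t)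
    (hθ : 0 < cutoff c R t m) : -c < t ∧ ‖m‖ < r := by
  have htc : 0 < t + c := by
    refine (by linarith : 0 ≤ t + c).lt_of_ne' fun hzero => hθ.ne' ?_
    rw [cutoff, hzero, zero_mul]
  exact ⟨by linarith, lt_of_pow_lt_pow_left₀ 2 hr (hR ▸ norm_sq_lt_of_cutoff_pos htc hθ)⟩

lemma cutoff_sub_le {z : En n} (ht₀ : 0 ≤ t + c) (ht₁ : t + c ≤ 1) (hm : ‖m‖ ≤ 1) (hz : ‖z‖ ≤ 1) :
    cutoff c R t m - cutoff c R t z ≤ 2 * ‖z - m‖ := by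
  have hsub : ‖z‖ - ‖m‖ ≤ ‖z - m‖ := norm_sub_norm_le z m
  calc cutoff c R t m - cutoff c R t z = (t + c) * ((‖z‖ - ‖m‖) * (‖z‖ + ‖m‖)) := by
        rw [cutoff, cutoff]
        ring
    _ ≤ (t + c) * (‖z - m‖ * (1 + 1)) := by gcongr
    _ ≤ 1 * (‖z - m‖ * (1 + 1)) := by gcongr
    _ = 2 * ‖z - m‖ := by ring

lemma continuous_cutoff : Continuous fun q : ℝ × En n => cutoff c R q.1 q.2 := by
  unfold cutoff
  fun_prop

lemma hasTwoJet_cutoff_line (hv : ‖v‖ = 1) :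
    HasTwoJet (fun τ => cutoff c R t (m + τ • v)) 0 (-(2 * (t + c) * inner ℝ m v))
      (-(2 * (t + c))) :=
  (((HasTwoJet.const R 0).sub (hasTwoJet_norm_add_smul_sq hv m)).const_mul (t + c)).congr_jet
    (by ring) (by ring)

lemma exists_hasTwoJet_rpow_cutoff (hν : 0 < ν) (ht₀ : 0 < t + c) (ht₁ : t + c ≤ 1) (hR : R ≤ 1)
    (hθ : 0 < cutoff c R t m) (hv : ‖v‖ = 1) :
    ∃ l B, B ≤ (4 * ν ^ 2 + 6 * ν) * cutoff c R t m ^ (-2 : ℝ) * cutoff c R t m ^ (-ν) ∧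
      HasTwoJet (fun τ => cutoff c R t (m + τ • v) ^ (-ν)) 0 l B := by
  have hjet := (hasTwoJet_cutoff_line (c := c) (R := R) (t := t) (m := m) hv).rpow
    (by simpa only [zero_smul, add_zero] using hθ) (-ν)
  refine ⟨_, _, ?_, hjet⟩
  simp only [zero_smul, add_zero]
  have hm := norm_sq_lt_of_cutoff_pos ht₀ hθ
  have hθ₁ := cutoff_le_one ht₀ ht₁ hR hθ
  set θ := cutoff c R t m
  have hinner : |inner ℝ m v| ≤ 1 := by
    nlinarith [abs_real_inner_le_norm m v, norm_nonneg m]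
  have hslope : (-(2 * (t + c) * inner ℝ m v)) ^ 2 ≤ 4 := by
    have : ((t + c) * |inner ℝ m v|) ^ 2 ≤ 1 :=
      pow_le_one₀ (by positivity) (mul_le_one₀ ht₁ (abs_nonneg _) hinner)
    rw [mul_pow, sq_abs] at this
    linarith
  have hpow : θ ^ (-ν - 1) ≤ θ ^ (-ν - 2) :=
    Real.rpow_le_rpow_of_exponent_ge hθ hθ₁ (by linarith)
  have hcurv : ν * ((t + c) * θ ^ (-ν - 1)) ≤ ν * (1 * θ ^ (-ν - 2)) := by gcongr
  have hgrad : ν * (ν + 1) * θ ^ (-ν - 2) * (-(2 * (t + c) * inner ℝ m v)) ^ 2 ≤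
      ν * (ν + 1) * θ ^ (-ν - 2) * 4 := by gcongr
  have hmul : θ ^ (-2 : ℝ) * θ ^ (-ν) = θ ^ (-ν - 2) := by
    rw [← Real.rpow_add hθ]
    ring_nf
  rw [mul_assoc (4 * ν ^ 2 + 6 * ν), hmul]
  linarith

lemma exists_hasDerivAt_rpow_cutoff_line (hν : 0 < ν) (ht₀ : 0 < t + c) (ht₁ : t + c ≤ 1)
    (hR : R ≤ 1) (hθ : 0 < cutoff c R t m) (v : En n) :
    ∃ l, HasDerivAt (fun τ : ℝ => cutoff c R t (m + τ • v) ^ (-ν)) l 0 ∧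
      |l| ≤ 2 * ν * ‖v‖ * cutoff c R t m ^ (-ν) / cutoff c R t m := by
  have hline : HasDerivAt (fun τ : ℝ => m + τ • v) v 0 := by
    simpa only [id_eq, one_smul] using ((hasDerivAt_id (0 : ℝ)).smul_const v).const_add m
  have hcut : HasDerivAt (fun τ : ℝ => cutoff c R t (m + τ • v))
      ((t + c) * -(2 * inner ℝ m v)) 0 := by
    simpa only [cutoff, zero_smul, add_zero] using (hline.norm_sq.const_sub R).const_mul (t + c)
  have hm := norm_sq_lt_of_cutoff_pos ht₀ hθ
  refine ⟨_, hcut.rpow_const (Or.inl (by simpa only [zero_smul, add_zero] using hθ.ne')), ?_⟩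
  simp only [zero_smul, add_zero]
  set θ := cutoff c R t m
  have hinner : |inner ℝ m v| ≤ ‖v‖ := by
    nlinarith [abs_real_inner_le_norm m v, norm_nonneg m, norm_nonneg v]
  calc |(t + c) * -(2 * inner ℝ m v) * -ν * θ ^ (-ν - 1)|
      = ν * (θ ^ (-ν) / θ) * (2 * (t + c) * |inner ℝ m v|) := by
        rw [Real.rpow_sub_one hθ.ne', abs_mul, abs_mul, abs_mul, abs_neg, abs_neg, abs_mul, abs_two,
          abs_of_pos hν, abs_of_pos ht₀, abs_of_pos (div_pos (Real.rpow_pos_of_pos hθ _) hθ)]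
        ring
    _ ≤ ν * (θ ^ (-ν) / θ) * (2 * 1 * ‖v‖) := by gcongr
    _ = 2 * ν * ‖v‖ * θ ^ (-ν) / θ := by ring

lemma exists_hasDerivAt_rpow_cutoff_time (hν : 0 < ν) (hR : R ≤ 1) (hθ : 0 < cutoff c R t m) :
    ∃ l, HasDerivAt (fun τ => cutoff c R τ m ^ (-ν)) l t ∧
      -(ν * cutoff c R t m ^ (-ν) / cutoff c R t m) ≤ l := by
  have hcut : HasDerivAt (fun τ => cutoff c R τ m) (1 * (R - ‖m‖ ^ 2)) t :=
    ((hasDerivAt_id t).add_const c).mul_const _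
  refine ⟨_, hcut.rpow_const (Or.inl hθ.ne'), ?_⟩
  rw [Real.rpow_sub_one hθ.ne']
  set θ := cutoff c R t m
  have hle : ν * (θ ^ (-ν) / θ) * (R - ‖m‖ ^ 2) ≤ ν * (θ ^ (-ν) / θ) * 1 := by
    gcongr
    linarith [sq_nonneg ‖m‖]
  calc -(ν * θ ^ (-ν) / θ) = -(ν * (θ ^ (-ν) / θ) * 1) := by ring
    _ ≤ -(ν * (θ ^ (-ν) / θ) * (R - ‖m‖ ^ 2)) := neg_le_neg hle
    _ = 1 * (R - ‖m‖ ^ 2) * -ν * (θ ^ (-ν) / θ) := by ring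

end Cutoff


section BoundaryContact

variable {n : ℕ} {a c R t δ A ν Dt L : ℝ} {w : ℝ → En n × ℝ → ℝ} {x : En n} {G : En n →L[ℝ] ℝ}

lemma HasBoundaryJet.time_ge_of_contact (h : HasBoundaryJet a w t x Dt L G) (hν : 0 < ν)
    (hR : R ≤ 1) (hθ : 0 < cutoff c R t x) (hA : 0 ≤ A)
    (hle : ∀ᶠ τ in 𝓝[<] t, w τ (x, 0) ≤ δ + A * cutoff c R τ x ^ (-ν))
    (heq : w t (x, 0) = δ + A * cutoff c R t x ^ (-ν)) :
    -(A * (ν * cutoff c R t x ^ (-ν) / cutoff c R t x)) ≤ Dt := by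
  obtain ⟨l, hl, hl_ge⟩ := exists_hasDerivAt_rpow_cutoff_time (c := c) (t := t) (m := x) hν hR hθ
  have hderiv : 0 ≤ Dt - A * l := by
    refine hasDerivWithinAt_Iic_nonneg_of_le
      (h.time.sub ((hl.const_mul A).const_add δ).hasDerivWithinAt) ?_
    filter_upwards [hle] with τ hτ
    simp only [Pi.sub_apply]
    linarith
  linarith [mul_le_mul_of_nonneg_left hl_ge hA]

lemma HasBoundaryJet.abs_tangential_le_of_contact (h : HasBoundaryJet a w t x Dt L G) (hν : 0 < ν)
    (ht₀ : 0 < t + c) (ht₁ : t + c ≤ 1) (hR : R ≤ 1) (hθ : 0 < cutoff c R t x) (hA : 0 ≤ A)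
    (hle : ∀ᶠ z in 𝓝 x, w t (z, 0) ≤ δ + A * cutoff c R t z ^ (-ν))
    (heq : w t (x, 0) = δ + A * cutoff c R t x ^ (-ν)) (B : En n) :
    |G B| ≤ A * (2 * ν * ‖B‖ * cutoff c R t x ^ (-ν) / cutoff c R t x) := by
  obtain ⟨l, hl, hl_le⟩ := exists_hasDerivAt_rpow_cutoff_line hν ht₀ ht₁ hR hθ B
  have hline : HasDerivAt (fun τ : ℝ => x + τ • B) B 0 := by
    simpa only [id_eq, one_smul] using ((hasDerivAt_id (0 : ℝ)).smul_const B).const_add x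
  have htangent : HasFDerivAt (fun z => w t (z, 0)) G (x + (0 : ℝ) • B) := by
    simpa only [zero_smul, add_zero] using h.tangential
  have htend : Tendsto (fun τ : ℝ => x + τ • B) (𝓝 0) (𝓝 x) := by
    simpa only [zero_smul, add_zero] using hline.continuousAt.tendsto
  have hmax : IsLocalMax (fun τ : ℝ => w t (x + τ • B, 0) -
      (δ + A * cutoff c R t (x + τ • B) ^ (-ν))) 0 := by
    filter_upwards [htend.eventually hle] with τ hτ
    simp only [zero_smul, add_zero]
    linarith
  have hG : HasDerivAt (fun τ : ℝ => w t (x + τ • B, 0)) (G B) 0 :=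
    HasFDerivAt.comp_hasDerivAt (l := fun z => w t (z, 0)) (0 : ℝ) htangent hline
  have hzero : G B - A * l = 0 :=
    hmax.hasDerivAt_eq_zero (hG.sub ((hl.const_mul A).const_add δ))
  rw [sub_eq_zero.1 hzero, abs_mul, abs_of_nonneg hA]
  gcongr

lemma HasBoundaryJet.normal_le_of_contact (h : HasBoundaryJet a w t x Dt L G) {g : ℝ → ℝ}
    {η Lg : ℝ} (hη : 0 < η) (hη' : η ≤ 3 / 8) (hg : ContinuousOn g (Ico 0 η))
    (hg' : ∃ g' : ℝ → ℝ, (∀ y ∈ Ioo 0 η, HasDerivAt g (g' y) y) ∧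
      Tendsto (fun y : ℝ => y ^ a * g' y) (𝓝[>] 0) (𝓝 Lg))
    (hle : ∀ y ∈ Ioo 0 η, w t (x, y) ≤ δ + A * g y) (heq : w t (x, 0) = δ + A * g 0) :
    L ≤ A * Lg := by
  obtain ⟨g', hg', hgL⟩ := hg'
  obtain ⟨v', hv', hvL⟩ := h.normal
  have hsub : Ico 0 η ⊆ Icc 0 (3 / 8) := fun y hy => ⟨hy.1, hy.2.le.trans hη'⟩
  refine sub_nonpos.1 (weightedDeriv_nonpos_of_le (v := fun y => w t (x, y) - A * g y)
    (v' := fun y => v' y - A * g' y) hη ((h.continuousOn.mono hsub).sub (continuousOn_const.mul hg))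
    (fun y hy => (hv' y ⟨hy.1, hy.2.trans_le hη'⟩).sub ((hg' y hy).const_mul A))
    (fun y hy => by linarith [hle y hy]) ((hvL.sub (hgL.const_mul A)).congr fun y => by ring))

end BoundaryContact

/-- At a maximum point of `θ ^ ν * f / W` the barrier `K * θ ^ (-ν) * W` touches `f` from above. -/
lemma exists_isContact_of_isCompact {X : Type*} [TopologicalSpace X] {Q : Set X} (hQ : IsCompact Q)
    {f θ W : X → ℝ} {ν C : ℝ} (hν : 0 < ν) (hC : 0 ≤ C) (hf : ContinuousOn f Q)
    (hθ : ContinuousOn θ Q) (hθ₀ : ∀ P ∈ Q, 0 ≤ θ P) (hW : ContinuousOn W Q)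
    (hW₀ : ∀ P ∈ Q, 0 < W P) {P₀ : X} (hP₀ : P₀ ∈ Q) (hbig : C * W P₀ < θ P₀ ^ ν * f P₀) :
    ∃ K > C, ∃ P ∈ Q, 0 < θ P ∧ f P = K * θ P ^ (-ν) * W P ∧
      ∀ P' ∈ Q, 0 < θ P' → f P' ≤ K * θ P' ^ (-ν) * W P' := by
  have hcont : ContinuousOn (fun P => θ P ^ ν * f P / W P) Q :=
    ((hθ.rpow_const fun _ _ => Or.inr hν.le).mul hf).div hW fun P hP => (hW₀ P hP).ne'
  obtain ⟨P, hP, hmax⟩ := hQ.exists_isMaxOn ⟨P₀, hP₀⟩ hcont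
  have hK : C < θ P ^ ν * f P / W P :=
    ((lt_div_iff₀ (hW₀ P₀ hP₀)).2 hbig).trans_le (hmax hP₀)
  have hθP : 0 < θ P := by
    refine (hθ₀ P hP).lt_of_ne' fun hzero => hK.not_ge ?_
    rwa [hzero, Real.zero_rpow hν.ne', zero_mul, zero_div]
  refine ⟨_, hK, P, hP, hθP, ?_, fun P' hP' hθ' => ?_⟩
  · have hpow := (Real.rpow_pos_of_pos hθP ν).ne'
    have hWP := (hW₀ P hP).ne'
    rw [Real.rpow_neg hθP.le]
    field_simp
  · have hle : θ P' ^ ν * f P' ≤ θ P ^ ν * f P / W P * W P' :=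
      (div_le_iff₀ (hW₀ P' hP')).1 (hmax hP')
    rw [Real.rpow_neg hθ'.le, mul_right_comm, ← div_eq_mul_inv,
      le_div_iff₀' (Real.rpow_pos_of_pos hθ' ν)]
    exact hle

/-! ### The doubling profile -/

/-- The profile of the barrier for the Lipschitz estimate, as a function of the distance `ρ` to the
midpoint of two doubled points and of their common height `y`. The term `-ρ (ρ² + y²) ^ p / 4` makes
it a strict supersolution away from the diagonal, and the last term makes its weighted normal
derivative negative. -/
def doublingProfile (p s ρ y : ℝ) : ℝ :=
  ρ * (1 - 1 / 4 * (ρ ^ 2 + y ^ 2) ^ p - p / 8 * (y ^ (2 * s) * (ρ ^ 2 + y ^ 2) ^ (p - s)))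

section DoublingProfile

variable {p q s ρ y : ℝ}

lemma rpow_mul_rpow_sub_le (hs : 0 ≤ s) (hρ : 0 < ρ) (hy : 0 ≤ y) :
    y ^ (2 * s) * (ρ ^ 2 + y ^ 2) ^ (q - s) ≤ (ρ ^ 2 + y ^ 2) ^ q := by
  have hpos : 0 < ρ ^ 2 + y ^ 2 := by positivity
  calc y ^ (2 * s) * (ρ ^ 2 + y ^ 2) ^ (q - s)
      = (y ^ 2) ^ s * (ρ ^ 2 + y ^ 2) ^ (q - s) := by rw [Real.rpow_mul hy, Real.rpow_two]
    _ ≤ (ρ ^ 2 + y ^ 2) ^ s * (ρ ^ 2 + y ^ 2) ^ (q - s) := by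
        gcongr
        exact le_add_of_nonneg_left (sq_nonneg ρ)
    _ = (ρ ^ 2 + y ^ 2) ^ q := by rw [← Real.rpow_add hpos, add_sub_cancel]

lemma doublingProfile_mem_Icc (hp : 0 < p) (hp₁ : p ≤ 1) (hs : 0 ≤ s) (hρ : 0 < ρ) (hy : 0 ≤ y)
    (hle : ρ ^ 2 + y ^ 2 ≤ 1) : doublingProfile p s ρ y ∈ Icc (ρ / 2) ρ := by
  have hpow : (ρ ^ 2 + y ^ 2) ^ p ≤ 1 := Real.rpow_le_one (by positivity) hle hp.le
  have hmul := (rpow_mul_rpow_sub_le (q := p) hs hρ hy).trans hpow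
  have hpow₀ : 0 ≤ (ρ ^ 2 + y ^ 2) ^ p := by positivity
  have hterm₀ : 0 ≤ p / 8 * (y ^ (2 * s) * (ρ ^ 2 + y ^ 2) ^ (p - s)) := by positivity
  have hterm : p / 8 * (y ^ (2 * s) * (ρ ^ 2 + y ^ 2) ^ (p - s)) ≤ 1 / 4 := by nlinarith
  unfold doublingProfile
  constructor <;> nlinarith

lemma continuousOn_doublingProfile (hs : 0 < s) :
    ContinuousOn (fun q : ℝ × ℝ => doublingProfile p s q.1 q.2) {q | 0 < q.1} := by
  have hpow (r : ℝ) : ContinuousOn (fun q : ℝ × ℝ => (q.1 ^ 2 + q.2 ^ 2) ^ r) {q | 0 < q.1} := by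
    refine ContinuousOn.rpow_const (by fun_prop) fun q hq => Or.inl ?_
    have : 0 < q.1 := hq
    positivity
  have hy : Continuous fun q : ℝ × ℝ => q.2 ^ (2 * s) :=
    continuous_snd.rpow_const fun _ => Or.inr (by positivity)
  exact continuousOn_fst.mul ((continuousOn_const.sub (continuousOn_const.mul (hpow p))).sub
    (continuousOn_const.mul (hy.continuousOn.mul (hpow _))))

lemma doublingProfile_zero (hs : 0 < s) (hρ : 0 < ρ) :
    doublingProfile p s ρ 0 = ρ - 1 / 4 * ρ ^ (1 + 2 * p) := by
  have hpow : (ρ ^ 2 + (0 : ℝ) ^ 2) ^ p = ρ ^ (2 * p) := by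
    rw [Real.rpow_mul hρ.le, Real.rpow_two, zero_pow two_ne_zero, add_zero]
  rw [doublingProfile, Real.zero_rpow (by positivity), hpow, Real.rpow_add hρ, Real.rpow_one]
  ring

lemma exists_hasDerivAt_doublingProfile_zero (hp : 0 < p) (hp₁ : p ≤ 1) (hs : 0 < s) (hρ : 0 < ρ)
    (hρ₁ : ρ ≤ 1) : ∃ r, HasDerivAt (fun ρ => doublingProfile p s ρ 0) r ρ ∧ |r| ≤ 1 := by
  have hderiv := (HasTwoJet.id ρ).sub
    (((HasTwoJet.id ρ).rpow hρ (1 + 2 * p)).const_mul (1 / 4)) |>.hasDerivAt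
  refine ⟨_, hderiv.congr_of_eventuallyEq ?_, ?_⟩
  · filter_upwards [lt_mem_nhds hρ] with z hz using doublingProfile_zero hs hz
  · have hle : ρ ^ (1 + 2 * p - 1) ≤ 1 := Real.rpow_le_one hρ.le hρ₁ (by linarith)
    have hpos : 0 ≤ ρ ^ (1 + 2 * p - 1) := by positivity
    rw [abs_le]
    constructor <;> nlinarith

lemma hasTwoJet_sq_add_const (x c : ℝ) : HasTwoJet (fun z => z ^ 2 + c) x (2 * x) 2 :=
  ((HasTwoJet.id x).sq.add (HasTwoJet.const c x)).congr_jet (by ring) (by ring)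

lemma hasTwoJet_const_add_sq (x c : ℝ) : HasTwoJet (fun z => c + z ^ 2) x (2 * x) 2 :=
  ((HasTwoJet.const c x).add (HasTwoJet.id x).sq).congr_jet (by ring) (by ring)

lemma exists_hasTwoJet_doublingProfile_eq (hρ : 0 < ρ) (hy : 0 < y) :
    ∃ r₁ r₂ y₁ y₂, HasTwoJet (fun ρ => doublingProfile p s ρ y) ρ r₁ r₂ ∧
      HasTwoJet (fun y => doublingProfile p s ρ y) y y₁ y₂ ∧
      r₂ + y₂ + (1 - 2 * s) / y * y₁ =
        -(ρ * (p / 2 * (2 * p + 3 - 2 * s) * (ρ ^ 2 + y ^ 2) ^ (p - 1) +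
          p / 4 * ((p - s) * (2 * p + 3)) * (y ^ (2 * s) * (ρ ^ 2 + y ^ 2) ^ (p - 1 - s)))) := by
  have hpos : 0 < ρ ^ 2 + y ^ 2 := by positivity
  have hSρ := hasTwoJet_sq_add_const ρ (y ^ 2)
  have hSy := hasTwoJet_const_add_sq y (ρ ^ 2)
  have hjetρ := (HasTwoJet.id ρ).mul (((HasTwoJet.const 1 ρ).sub
    ((hSρ.rpow hpos p).const_mul (1 / 4))).sub
    (((hSρ.rpow hpos (p - s)).const_mul (y ^ (2 * s))).const_mul (p / 8)))
  have hjety := (((HasTwoJet.const 1 y).sub ((hSy.rpow hpos p).const_mul (1 / 4))).sub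
    ((((HasTwoJet.id y).rpow hy (2 * s)).mul
      (hSy.rpow hpos (p - s))).const_mul (p / 8))).const_mul ρ
  refine ⟨_, _, _, _, hjetρ, hjety, ?_⟩
  have hshift (r : ℝ) :
      (ρ ^ 2 + y ^ 2) ^ (r - 1) = (ρ ^ 2 + y ^ 2) ^ (r - 2) * (ρ ^ 2 + y ^ 2) := by
    rw [← Real.rpow_add_one hpos.ne']
    ring_nf
  have hshift₂ : (ρ ^ 2 + y ^ 2) ^ (p - s) =
      (ρ ^ 2 + y ^ 2) ^ (p - s - 2) * (ρ ^ 2 + y ^ 2) ^ 2 := by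
    rw [← Real.rpow_two (ρ ^ 2 + y ^ 2), ← Real.rpow_add hpos, sub_add_cancel]
  rw [sub_right_comm p 1 s]
  simp only [hshift p, hshift (p - s), hshift₂, Real.rpow_sub_one hy.ne', Real.rpow_sub hy,
    Real.rpow_two]
  field_simp
  ring

lemma exists_hasTwoJet_doublingProfile_le (hp : 0 < p) (hs : 0 < s) (hs₁ : s < 1 / 2)
    (hρ : 0 < ρ) (hy : 0 < y) :
    ∃ r₁ r₂ y₁ y₂, HasTwoJet (fun ρ => doublingProfile p s ρ y) ρ r₁ r₂ ∧
      HasTwoJet (fun y => doublingProfile p s ρ y) y y₁ y₂ ∧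
      r₂ + y₂ + (1 - 2 * s) / y * y₁ ≤ -(p / 2 * ρ * (ρ ^ 2 + y ^ 2) ^ (p - 1)) := by
  obtain ⟨r₁, r₂, y₁, y₂, hr, hy', heq⟩ :=
    exists_hasTwoJet_doublingProfile_eq (p := p) (s := s) hρ hy
  refine ⟨r₁, r₂, y₁, y₂, hr, hy', heq.trans_le ?_⟩
  have hle := rpow_mul_rpow_sub_le (q := p - 1) hs.le hρ hy.le
  have hZ : 0 ≤ y ^ (2 * s) * (ρ ^ 2 + y ^ 2) ^ (p - 1 - s) := by positivity
  set P := (ρ ^ 2 + y ^ 2) ^ (p - 1)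
  set Z := y ^ (2 * s) * (ρ ^ 2 + y ^ 2) ^ (p - 1 - s)
  have hP : p * P ≤ p / 2 * (2 * p + 3 - 2 * s) * P :=
    mul_le_mul_of_nonneg_right (by nlinarith) (hZ.trans hle)
  have hZP : -(p / 2 * P) ≤ p / 4 * ((p - s) * (2 * p + 3)) * Z := by
    have hcoef : -2 ≤ (p - s) * (2 * p + 3) := by nlinarith
    have : p / 4 * -2 * Z ≤ p / 4 * ((p - s) * (2 * p + 3)) * Z := by gcongr
    nlinarith
  nlinarith

lemma tendsto_weightedDeriv_doublingProfile (hs₁ : s ≤ 1 / 2) (hρ : 0 < ρ) :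
    Tendsto (fun y : ℝ => ρ * (-(1 / 4) * (p * (ρ ^ 2 + y ^ 2) ^ (p - 1) * (2 * y)
      * y ^ (1 - 2 * s)) - p / 8 * (2 * s * (ρ ^ 2 + y ^ 2) ^ (p - s)
      + y * ((p - s) * (ρ ^ 2 + y ^ 2) ^ (p - s - 1) * (2 * y))))) (𝓝[>] 0)
      (𝓝 (-(p * s / 4 * ρ ^ (1 + 2 * (p - s))))) := by
  have hpow (r : ℝ) : Continuous fun y : ℝ => (ρ ^ 2 + y ^ 2) ^ r :=
    Continuous.rpow_const (by fun_prop) fun y => Or.inl (by positivity)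
  have hy : Continuous fun y : ℝ => y ^ (1 - 2 * s) :=
    continuous_id.rpow_const fun _ => Or.inr (by linarith)
  have h₃ := hpow (p - s - 1)
  refine (Continuous.tendsto' (by fun_prop) 0 _ ?_).mono_left nhdsWithin_le_nhds
  have hzero : (ρ ^ 2 + (0 : ℝ) ^ 2) ^ (p - s) = ρ ^ (2 * (p - s)) := by
    rw [Real.rpow_mul hρ.le, Real.rpow_two, zero_pow two_ne_zero, add_zero]
  rw [hzero, Real.rpow_add hρ, Real.rpow_one]
  ring

lemma exists_weightedDeriv_doublingProfile (hs₁ : s ≤ 1 / 2) (hρ : 0 < ρ) :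
    ∃ W' : ℝ → ℝ, (∀ y > 0, HasDerivAt (fun y => doublingProfile p s ρ y) (W' y) y) ∧
      Tendsto (fun y : ℝ => y ^ (1 - 2 * s) * W' y) (𝓝[>] 0)
        (𝓝 (-(p * s / 4 * ρ ^ (1 + 2 * (p - s))))) := by
  have hderiv (y : ℝ) (hy : 0 < y) := by
    have hS := hasTwoJet_const_add_sq y (ρ ^ 2)
    have hpos : 0 < ρ ^ 2 + y ^ 2 := by positivity
    exact (((HasTwoJet.const 1 y).sub ((hS.rpow hpos p).const_mul (1 / 4))).sub
      ((((HasTwoJet.id y).rpow hy (2 * s)).mul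
        (hS.rpow hpos (p - s))).const_mul (p / 8))).const_mul ρ |>.hasDerivAt
  refine ⟨_, hderiv, (tendsto_weightedDeriv_doublingProfile hs₁ hρ).congr' ?_⟩
  filter_upwards [self_mem_nhdsWithin] with y hy
  have hy : 0 < y := hy
  have hcancel₁ : y ^ (1 - 2 * s) * y ^ (2 * s) = y := by
    rw [← Real.rpow_add hy, sub_add_cancel, Real.rpow_one]
  have hcancel₂ : y ^ (1 - 2 * s) * y ^ (2 * s - 1) = 1 := by
    rw [← Real.rpow_add hy, sub_add_sub_cancel', sub_self, Real.rpow_zero]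
  linear_combination
    ρ * (p / 8) * ((p - s) * (ρ ^ 2 + y ^ 2) ^ (p - s - 1) * (2 * y)) * hcancel₁ +
    ρ * (p / 8) * (2 * s * (ρ ^ 2 + y ^ 2) ^ (p - s)) * hcancel₂

end DoublingProfile

lemma add_sub_mem_solutionBox {n : ℕ} {m d : En n} {y : ℝ} (hm : ‖m‖ ≤ 3 / 4) (hd : ‖d‖ ≤ 1 / 16)
    (hy : y ∈ Icc (0 : ℝ) (1 / 4)) :
    (m + d, y) ∈ solutionBox n ∧ (m - d, y) ∈ solutionBox n := by
  have hy' : y ∈ Icc (0 : ℝ) (3 / 8) := ⟨hy.1, hy.2.trans (by norm_num)⟩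
  exact ⟨⟨(norm_add_le _ _).trans (by linarith), hy'⟩, ⟨(norm_sub_le _ _).trans (by linarith), hy'⟩⟩

lemma norm_add_sub_sub {n : ℕ} (m d : En n) : ‖m + d - (m - d)‖ = 2 * ‖d‖ := by
  rw [show m + d - (m - d) = (2 : ℝ) • d by module, norm_smul, Real.norm_two]

section DoubledBounds

variable {n : ℕ} {a γ M U₀ F t y : ℝ} {b : ℝ → En n → En n} {f : ℝ → En n → ℝ}
  {u : ℝ → En n × ℝ → ℝ} {m d : En n}

lemma IsBoxSolution.nonneg (h : IsBoxSolution a γ M U₀ F b f u) : 0 ≤ U₀ :=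
  (abs_nonneg _).trans (h.abs_le 0 (by norm_num) 0
    ⟨by norm_num, by norm_num⟩)

lemma IsBoxSolution.abs_doubledDiff_le_two_mul (h : IsBoxSolution a γ M U₀ F b f u)
    (ht : t ∈ Icc (-1 : ℝ) 0) (hm : ‖m‖ ≤ 3 / 4) (hd : ‖d‖ ≤ 1 / 16)
    (hy : y ∈ Icc (0 : ℝ) (1 / 4)) : |doubledDiff (u t) (m, d, y)| ≤ 2 * U₀ := by
  have hmem := add_sub_mem_solutionBox hm hd hy
  calc |u t (m + d, y) - u t (m - d, y)| ≤ |u t (m + d, y)| + |u t (m - d, y)| := abs_sub _ _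
    _ ≤ U₀ + U₀ := add_le_add (h.abs_le t ht _ hmem.1) (h.abs_le t ht _ hmem.2)
    _ = 2 * U₀ := (two_mul U₀).symm

lemma IsBoxSolution.abs_doubledDiff_le (h : IsBoxSolution a γ M U₀ F b f u) (ha₀ : 0 ≤ a)
    (ha₁ : a ≤ 1) (ht : t ∈ Icc (-1 : ℝ) 0) (hm : ‖m‖ ≤ 3 / 4) (hd : ‖d‖ ≤ 1 / 16)
    (hy : y ∈ Ioc (0 : ℝ) (1 / 4)) :
    |doubledDiff (u t) (m, d, y)| ≤ 4 * U₀ * (4 * n + 12) * ‖d‖ / y := by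
  obtain ⟨hy₀, hy₁⟩ := hy
  have htriv := h.abs_doubledDiff_le_two_mul ht hm hd ⟨hy₀.le, hy₁⟩
  rcases h.nonneg.eq_or_lt with hU | hU
  · rw [← hU] at htriv ⊢
    simpa using htriv
  rcases le_or_gt ‖d‖ (y / 8) with hsmall | hlarge
  · have hbox : Metric.closedBall m (y / 2) ×ˢ Metric.closedBall y (y / 2) ⊆
        {q : En n × ℝ | q ∈ solutionBox n ∧ 0 < q.2} := by
      rintro ⟨x, z⟩ ⟨hx, hz⟩
      rw [Real.closedBall_eq_Icc] at hz
      have hx' : ‖x‖ ≤ ‖m‖ + y / 2 := norm_le_norm_add_const_of_dist_le hx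
      exact ⟨⟨by dsimp only; linarith, by constructor <;> dsimp only <;> linarith [hz.1, hz.2]⟩,
        by dsimp only; linarith [hz.1]⟩
    refine (_root_.abs_doubledDiff_le (r := y / 2) ha₀ ha₁ (by linarith) (by linarith) hU
      (fun q hq => h.hasAHarmonicJet t ht q (hbox hq).1 (hbox hq).2)
      (h.continuousOn.comp (f := fun q : En n × ℝ => (t, q)) (by fun_prop)
        fun q hq => ⟨ht, (hbox hq).1⟩)
      (fun q hq => h.abs_le t ht q (hbox hq).1) (by linarith)).trans_eq ?_
    field_simp
    norm_num
  · refine htriv.trans ?_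
    rw [le_div_iff₀ hy₀]
    calc 2 * U₀ * y ≤ 2 * U₀ * (8 * ‖d‖) := by gcongr; linarith
      _ ≤ 4 * U₀ * (4 * 0 + 12) * ‖d‖ := by nlinarith [norm_nonneg d]
      _ ≤ 4 * U₀ * (4 * n + 12) * ‖d‖ := by gcongr; positivity

lemma IsBoxSolution.exists_drift_eq_mean_add_sub (h : IsBoxSolution a γ M U₀ F b f u)
    (ht : t ∈ Icc (-1 : ℝ) 0) (hm : ‖m + d‖ ≤ 7 / 8) (hm' : ‖m - d‖ ≤ 7 / 8) :
    ∃ B β, b t (m + d) = B + β ∧ b t (m - d) = B - β ∧ ‖B‖ ≤ M ∧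
      ‖β‖ ≤ M / 2 * (2 * ‖d‖) ^ γ := by
  have hb := h.norm_drift_le t ht _ hm
  have hb' := h.norm_drift_le t ht _ hm'
  have hsub := h.norm_drift_sub_le t ht _ _ hm hm'
  rw [norm_add_sub_sub] at hsub
  refine ⟨(1 / 2 : ℝ) • (b t (m + d) + b t (m - d)), (1 / 2 : ℝ) • (b t (m + d) - b t (m - d)),
    by module, by module, ?_, ?_⟩
  · rw [norm_smul, Real.norm_of_nonneg (by norm_num)]
    linarith [norm_add_le (b t (m + d)) (b t (m - d))]
  · rw [norm_smul, Real.norm_of_nonneg (by norm_num)]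
    linarith

lemma IsBoxSolution.exists_hasBoundaryJet_doubled (h : IsBoxSolution a γ M U₀ F b f u)
    (ht : t ∈ Ioc (-1 : ℝ) 0) (hm : ‖m + d‖ ≤ 7 / 8) (hm' : ‖m - d‖ ≤ 7 / 8) :
    ∃ Dt L G G', HasBoundaryJet a (fun τ q => u τ (q.1 + d, q.2) - u τ (q.1 - d, q.2)) t m Dt L
        (G - G') ∧
      HasFDerivAt (fun z => u t (z, 0)) G (m + d) ∧
      HasFDerivAt (fun z => u t (z, 0)) G' (m - d) ∧
      Dt + (G (b t (m + d)) - G' (b t (m - d))) - L ≤ F * (2 * ‖d‖) ^ γ := by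
  obtain ⟨Dt, L, G, hjet, heq⟩ := h.boundaryEq t ht _ hm
  obtain ⟨Dt', L', G', hjet', heq'⟩ := h.boundaryEq t ht _ hm'
  refine ⟨Dt - Dt', L - L', G, G', (hjet.comp_add_const d).sub ?_, hjet.tangential,
    hjet'.tangential, ?_⟩
  · rw [sub_eq_add_neg] at hjet'
    simpa only [sub_eq_add_neg] using hjet'.comp_add_const (-d)
  · have hf := h.abs_source_sub_le t (Ioc_subset_Icc_self ht) _ _ hm hm'
    rw [norm_add_sub_sub] at hf
    linarith [le_abs_self (f t (m + d) - f t (m - d))]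

end DoubledBounds

/-! ### The Lipschitz estimate -/

/-- The Ishii–Lions barrier `δ + K θ(t, m) ^ (-ν) W(ρ, y)` for the doubled difference, where `θ` is
the cutoff of the ball of radius `3 / 4` and `W` the doubling profile. -/
def doublingBarrier {n : ℕ} (p s ν δ K t ρ : ℝ) (m : En n) (y : ℝ) : ℝ :=
  δ + K * cutoff 1 (9 / 16) t m ^ (-ν) * doublingProfile p s ρ y

/-- The doubling barrier lies above the doubled difference of `u` and touches it at
`(t, m, d, y)`. -/
structure IsDoublingContact {n : ℕ} (p s ν δ K : ℝ) (u : ℝ → En n × ℝ → ℝ) (t : ℝ) (m d : En n)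
    (y : ℝ) : Prop where
  time_mem : t ∈ Ioc (-1 : ℝ) 0
  norm_center_lt : ‖m‖ < 3 / 4
  norm_offset_mem : ‖d‖ ∈ Ioc (0 : ℝ) (1 / 16)
  height_mem : y ∈ Icc (0 : ℝ) (1 / 4)
  eq : doubledDiff (u t) (m, d, y) = doublingBarrier p s ν δ K t ‖d‖ m y
  le : ∀ t' ∈ Ioc (-1 : ℝ) 0, ∀ m', ‖m'‖ < 3 / 4 → ∀ d', ‖d'‖ ∈ Ioc (0 : ℝ) (1 / 16) →
    ∀ y' ∈ Icc (0 : ℝ) (1 / 4),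
      doubledDiff (u t') (m', d', y') ≤ doublingBarrier p s ν δ K t' ‖d'‖ m' y'

lemma doublingProfile_mem_Icc_of_mem {p s ρ y : ℝ} (hp : 0 < p) (hp₁ : p ≤ 1) (hs : 0 ≤ s)
    (hρ : ρ ∈ Ioc (0 : ℝ) (1 / 16)) (hy : y ∈ Icc (0 : ℝ) (1 / 4)) :
    doublingProfile p s ρ y ∈ Icc (ρ / 2) ρ := by
  obtain ⟨hρ₀, hρ₁⟩ := hρ
  obtain ⟨hy₀, hy₁⟩ := hy
  exact doublingProfile_mem_Icc hp hp₁ hs hρ₀ hy₀ (by nlinarith)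

namespace IsDoublingContact

variable {n : ℕ} {p s ν δ K t y γ M U₀ F : ℝ} {b : ℝ → En n → En n} {f : ℝ → En n → ℝ}
  {u : ℝ → En n × ℝ → ℝ} {m d : En n}

lemma cutoff_pos (hc : IsDoublingContact p s ν δ K u t m d y) : 0 < cutoff 1 (9 / 16) t m :=
  cutoff_pos_of_norm_lt (by norm_num) hc.time_mem.1 hc.norm_center_lt

lemma profile_mem (hc : IsDoublingContact p s ν δ K u t m d y) (hp : 0 < p) (hp₁ : p ≤ 1)
    (hs : 0 ≤ s) : doublingProfile p s ‖d‖ y ∈ Icc (‖d‖ / 2) ‖d‖ :=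
  doublingProfile_mem_Icc_of_mem hp hp₁ hs hc.norm_offset_mem hc.height_mem

lemma isLocalMax (hc : IsDoublingContact p s ν δ K u t m d y) (hd : ‖d‖ < 1 / 16)
    (hy : y ∈ Ioo (0 : ℝ) (1 / 4)) :
    IsLocalMax (fun P : En n × En n × ℝ => doubledDiff (u t) P -
      doublingBarrier p s ν δ K t ‖P.2.1‖ P.1 P.2.2) (m, d, y) := by
  have hcenter : ∀ᶠ P in 𝓝 (m, d, y), ‖P.1‖ < 3 / 4 :=
    (by fun_prop : Continuous fun P : En n × En n × ℝ => ‖P.1‖).continuousAt.eventually_lt_const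
      hc.norm_center_lt
  have hoffset : ∀ᶠ P in 𝓝 (m, d, y), ‖P.2.1‖ ∈ Ioo (0 : ℝ) (1 / 16) :=
    (by fun_prop : Continuous fun P : En n × En n × ℝ => ‖P.2.1‖).continuousAt.eventually_mem
      (Ioo_mem_nhds hc.norm_offset_mem.1 hd)
  have hheight : ∀ᶠ P in 𝓝 (m, d, y), P.2.2 ∈ Ioo (0 : ℝ) (1 / 4) :=
    (by fun_prop : Continuous fun P : En n × En n × ℝ => P.2.2).continuousAt.eventually_mem
      (Ioo_mem_nhds hy.1 hy.2)
  filter_upwards [hcenter, hoffset, hheight] with P hP₁ hP₂ hP₃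
  have hle := hc.le t hc.time_mem P.1 hP₁ P.2.1 (Ioo_subset_Ioc_self hP₂) P.2.2
    (Ioo_subset_Icc_self hP₃)
  linarith [hc.eq]

lemma exists_hasTwoJet_doublingBarrier_line (hc : IsDoublingContact p s ν δ K u t m d y)
    (hν : 0 < ν) (hK : 0 ≤ K) (hW : 0 ≤ doublingProfile p s ‖d‖ y) {v : En n} (hv : ‖v‖ = 1) :
    ∃ l B, B ≤ K * doublingProfile p s ‖d‖ y * ((4 * ν ^ 2 + 6 * ν) *
        cutoff 1 (9 / 16) t m ^ (-2 : ℝ) * cutoff 1 (9 / 16) t m ^ (-ν)) ∧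
      HasTwoJet (fun τ : ℝ => doublingBarrier p s ν δ K t ‖d‖ (m + τ • v) y) 0 l B := by
  obtain ⟨l, B, hB, hjet⟩ := exists_hasTwoJet_rpow_cutoff (c := 1) (R := 9 / 16) hν
    (by linarith [hc.time_mem.1]) (by linarith [hc.time_mem.2]) (by norm_num) hc.cutoff_pos hv
  refine ⟨_, _, mul_le_mul_of_nonneg_left hB (mul_nonneg hK hW),
    (((HasTwoJet.const δ 0).add (hjet.const_mul (K * doublingProfile p s ‖d‖ y))).congr_jet rfl
      (zero_add _)).congr_of_eventuallyEq (.of_forall fun τ => ?_)⟩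
  simp only [doublingBarrier]
  ring

lemma profile_pow_le_of_interior (hc : IsDoublingContact p s ν δ K u t m d y)
    (h : IsBoxSolution (1 - 2 * s) γ M U₀ F b f u) (hs : 0 < s) (hs₁ : s < 1 / 2) (hp : 0 < p)
    (hp₁ : p ≤ 1) (hν : 0 < ν) (hK : 0 < K) (hd : ‖d‖ < 1 / 16) (hy : y ∈ Ioo (0 : ℝ) (1 / 4)) :
    p / 2 * (‖d‖ ^ 2 + y ^ 2) ^ (p - 1) ≤
      n * ((4 * ν ^ 2 + 6 * ν) * cutoff 1 (9 / 16) t m ^ (-2 : ℝ)) := by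
  have hθ := hc.cutoff_pos
  obtain ⟨hWlow, hWle⟩ := hc.profile_mem hp hp₁ hs.le
  have hd₀ := hc.norm_offset_mem.1
  have hW : 0 < doublingProfile p s ‖d‖ y := by linarith
  have hmem := add_sub_mem_solutionBox hc.norm_center_lt.le hc.norm_offset_mem.2 hc.height_mem
  have ht := Ioc_subset_Icc_self hc.time_mem
  obtain ⟨ρ₁, ρ₂, y₁, y₂, hρ, hη, hop⟩ :=
    exists_hasTwoJet_doublingProfile_le hp hs hs₁ hd₀ hy.1
  have htouch := HasAHarmonicJet.nonneg_of_isLocalMax_doubled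
    (T := fun ρ m y => doublingBarrier p s ν δ K t ρ m y)
    (Bm := K * doublingProfile p s ‖d‖ y * ((4 * ν ^ 2 + 6 * ν) *
      cutoff 1 (9 / 16) t m ^ (-2 : ℝ) * cutoff 1 (9 / 16) t m ^ (-ν)))
    (h.hasAHarmonicJet t ht _ hmem.1 hy.1) (h.hasAHarmonicJet t ht _ hmem.2 hy.1)
    (norm_pos_iff.1 hd₀) (by positivity) (hc.isLocalMax hd hy)
    ((HasTwoJet.const δ _).add (hρ.const_mul (K * cutoff 1 (9 / 16) t m ^ (-ν))))
    (fun v hv => hc.exists_hasTwoJet_doublingBarrier_line hν hK.le hW.le hv)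
    ((HasTwoJet.const δ _).add (hη.const_mul (K * cutoff 1 (9 / 16) t m ^ (-ν))))
  set ψ := cutoff 1 (9 / 16) t m ^ (-ν)
  set κ := (4 * ν ^ 2 + 6 * ν) * cutoff 1 (9 / 16) t m ^ (-2 : ℝ)
  have hscaled : 0 ≤ K * ψ * ‖d‖ * (n * κ - p / 2 * (‖d‖ ^ 2 + y ^ 2) ^ (p - 1)) := by
    calc (0 : ℝ) ≤ K * ψ * (ρ₂ + y₂ + (1 - 2 * s) / y * y₁) +
          n * (K * doublingProfile p s ‖d‖ y * (κ * ψ)) := by linarith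
      _ ≤ K * ψ * -(p / 2 * ‖d‖ * (‖d‖ ^ 2 + y ^ 2) ^ (p - 1)) + n * (K * ‖d‖ * (κ * ψ)) := by
        gcongr
      _ = _ := by ring
  exact sub_nonneg.1 (nonneg_of_mul_nonneg_right hscaled (by positivity))

/-- Moving the two points apart in the direction `β`, with the midpoint fixed, only changes the
profile, whose slope at the boundary is at most one. -/
lemma abs_tangential_add_le (hc : IsDoublingContact p s ν δ K u t m d 0) (hp : 0 < p)
    (hp₁ : p ≤ 1) (hs : 0 < s) (hK : 0 ≤ K) (hd : ‖d‖ < 1 / 16) {G G' : En n →L[ℝ] ℝ}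
    (hG : HasFDerivAt (fun z => u t (z, 0)) G (m + d))
    (hG' : HasFDerivAt (fun z => u t (z, 0)) G' (m - d)) (β : En n) :
    |(G + G') β| ≤ K * cutoff 1 (9 / 16) t m ^ (-ν) * ‖β‖ := by
  have hd₀ := hc.norm_offset_mem.1
  have hdiff : HasFDerivAt (fun z => doubledDiff (u t) (m, z, 0)) (G + G') d := by
    refine ((hG.comp d ((hasFDerivAt_id d).const_add m)).sub
      (hG'.comp d ((hasFDerivAt_id d).const_sub m))).congr_fderiv ?_
    rw [ContinuousLinearMap.comp_neg, sub_neg_eq_add]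
    rfl
  obtain ⟨r, hr, hr_le⟩ := exists_hasDerivAt_doublingProfile_zero hp hp₁ hs hd₀ (by linarith)
  have hnorm : HasFDerivAt (fun z : En n => ‖z‖) (fderiv ℝ (fun z : En n => ‖z‖) d) d :=
    ((contDiffAt_norm ℝ (norm_pos_iff.1 hd₀)).differentiableAt one_ne_zero).hasFDerivAt
  have hnorm_le : ‖fderiv ℝ (fun z : En n => ‖z‖) d‖ ≤ 1 := by
    simpa using norm_fderiv_le_of_lipschitz ℝ (x₀ := d) (lipschitzWith_one_norm (E := En n))
  have hmax : IsLocalMax (fun z => doubledDiff (u t) (m, z, 0) -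
      doublingBarrier p s ν δ K t ‖z‖ m 0) d := by
    filter_upwards [continuous_norm.continuousAt.eventually_mem (Ioo_mem_nhds hd₀ hd)] with z hz
    linarith [hc.eq, hc.le t hc.time_mem m hc.norm_center_lt z (Ioo_subset_Ioc_self hz) 0
      hc.height_mem]
  set ψ := cutoff 1 (9 / 16) t m ^ (-ν)
  have hψ : 0 < ψ := Real.rpow_pos_of_pos hc.cutoff_pos _
  have hbarrier : HasFDerivAt (fun z => doublingBarrier p s ν δ K t ‖z‖ m 0)
      ((K * ψ) • r • fderiv ℝ (fun z : En n => ‖z‖) d) d :=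
    ((hr.comp_hasFDerivAt d hnorm).const_mul (K * ψ)).const_add δ
  rw [sub_eq_zero.1 (hmax.hasFDerivAt_eq_zero (hdiff.sub hbarrier)), smul_apply, smul_apply,
    smul_eq_mul, smul_eq_mul, abs_mul (K * ψ), abs_mul r, abs_of_nonneg (by positivity)]
  calc K * ψ * (|r| * |fderiv ℝ (fun z : En n => ‖z‖) d β|)
      ≤ K * ψ * (1 * (1 * ‖β‖)) := by
        gcongr
        exact (fderiv ℝ (fun z : En n => ‖z‖) d).le_of_opNorm_le hnorm_le β
    _ = K * ψ * ‖β‖ := by ring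

lemma normal_le (hc : IsDoublingContact p s ν δ K u t m d 0) (hs : 0 < s) (hs₁ : s ≤ 1 / 2)
    {Dt L : ℝ} {G : En n →L[ℝ] ℝ} (hjet : HasBoundaryJet (1 - 2 * s)
      (fun τ q => u τ (q.1 + d, q.2) - u τ (q.1 - d, q.2)) t m Dt L G) :
    L ≤ K * cutoff 1 (9 / 16) t m ^ (-ν) * -(p * s / 4 * ‖d‖ ^ (1 + 2 * (p - s))) := by
  have hd₀ := hc.norm_offset_mem.1
  obtain ⟨W', hW', hlim⟩ := exists_weightedDeriv_doublingProfile (p := p) hs₁ hd₀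
  exact hjet.normal_le_of_contact (δ := δ) (η := 1 / 4) (by norm_num) (by norm_num)
    ((continuousOn_doublingProfile hs).comp (f := fun y : ℝ => (‖d‖, y)) (by fun_prop)
      fun _ _ => hd₀)
    ⟨W', fun y hy => hW' y hy.1, hlim⟩
    (fun y hy => hc.le t hc.time_mem m hc.norm_center_lt d hc.norm_offset_mem y
      (Ioo_subset_Icc_self hy)) hc.eq

lemma time_ge_and_abs_tangential_le (hc : IsDoublingContact p s ν δ K u t m d 0) (hs : 0 < s)
    (hp : 0 < p) (hp₁ : p ≤ 1) (hν : 0 < ν) (hK : 0 ≤ K) {a Dt L : ℝ} {G : En n →L[ℝ] ℝ}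
    (hjet : HasBoundaryJet a (fun τ q => u τ (q.1 + d, q.2) - u τ (q.1 - d, q.2)) t m Dt L G)
    (B : En n) :
    -(K * ‖d‖ * (ν * cutoff 1 (9 / 16) t m ^ (-ν) / cutoff 1 (9 / 16) t m)) ≤ Dt ∧
      |G B| ≤ K * ‖d‖ *
        (2 * ν * ‖B‖ * cutoff 1 (9 / 16) t m ^ (-ν) / cutoff 1 (9 / 16) t m) := by
  have hθ := hc.cutoff_pos
  obtain ⟨hWlow, hWle⟩ := hc.profile_mem hp hp₁ hs.le
  have hA : 0 ≤ K * doublingProfile p s ‖d‖ 0 :=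
    mul_nonneg hK (by linarith [hc.norm_offset_mem.1])
  have hA_le : K * doublingProfile p s ‖d‖ 0 ≤ K * ‖d‖ := by gcongr
  have hbarrier (τ : ℝ) (z : En n) : doublingBarrier p s ν δ K τ ‖d‖ z 0 =
      δ + K * doublingProfile p s ‖d‖ 0 * cutoff 1 (9 / 16) τ z ^ (-ν) := by
    rw [doublingBarrier, mul_right_comm]
  have htouch := hc.eq.trans (hbarrier t m)
  have htime := hjet.time_ge_of_contact (c := 1) hν (by norm_num) hθ hA (by
    filter_upwards [Ioo_mem_nhdsLT hc.time_mem.1] with τ hτ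
    exact (hc.le τ ⟨hτ.1, hτ.2.le.trans hc.time_mem.2⟩ m hc.norm_center_lt d
      hc.norm_offset_mem 0 hc.height_mem).trans_eq (hbarrier τ m)) htouch
  have htangential := hjet.abs_tangential_le_of_contact (c := 1) hν (by linarith [hc.time_mem.1])
    (by linarith [hc.time_mem.2]) (by norm_num) hθ hA (by
      filter_upwards [continuous_norm.continuousAt.eventually_lt_const hc.norm_center_lt] with z hz
      exact (hc.le t hc.time_mem z hz d hc.norm_offset_mem 0 hc.height_mem).trans_eq
        (hbarrier t z)) htouch B
  exact ⟨le_trans (neg_le_neg (by gcongr)) htime, htangential.trans (by gcongr)⟩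

lemma profile_le_of_boundary (hc : IsDoublingContact p s ν δ K u t m d 0)
    (h : IsBoxSolution (1 - 2 * s) γ M U₀ F b f u) (hs : 0 < s) (hs₁ : s ≤ 1 / 2) (hp : 0 < p)
    (hp₁ : p ≤ 1) (hν : 0 < ν) (hK : 0 < K) (hd : ‖d‖ < 1 / 16) :
    K * cutoff 1 (9 / 16) t m ^ (-ν) * (p * s / 4 * ‖d‖ ^ (1 + 2 * (p - s))) ≤
      F * (2 * ‖d‖) ^ γ +
      K * ‖d‖ * (ν * (1 + 2 * M)) * cutoff 1 (9 / 16) t m ^ (-ν) / cutoff 1 (9 / 16) t m +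
      K * cutoff 1 (9 / 16) t m ^ (-ν) * (M / 2 * (2 * ‖d‖) ^ γ) := by
  obtain ⟨⟨hm, -⟩, ⟨hm', -⟩⟩ :=
    add_sub_mem_solutionBox hc.norm_center_lt.le hc.norm_offset_mem.2 hc.height_mem
  obtain ⟨Dt, L, G, G', hjet, hG, hG', heq⟩ := h.exists_hasBoundaryJet_doubled hc.time_mem hm hm'
  obtain ⟨B, β, hB, hβ, hB_le, hβ_le⟩ :=
    h.exists_drift_eq_mean_add_sub (Ioc_subset_Icc_self hc.time_mem) hm hm'
  obtain ⟨htime, htangential⟩ := hc.time_ge_and_abs_tangential_le hs hp hp₁ hν hK.le hjet B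
  have hspread := hc.abs_tangential_add_le hp hp₁ hs hK.le hd hG hG' β
  have hnormal := hc.normal_le hs hs₁ hjet
  rw [hB, hβ, map_add, map_sub] at heq
  rw [sub_apply] at htangential
  rw [add_apply] at hspread
  set θ := cutoff 1 (9 / 16) t m
  have hθ : 0 < θ := hc.cutoff_pos
  have htangential' : K * ‖d‖ * (2 * ν * ‖B‖ * θ ^ (-ν) / θ) ≤
      K * ‖d‖ * (2 * ν * M * θ ^ (-ν) / θ) := by gcongr
  have hspread' : K * θ ^ (-ν) * ‖β‖ ≤ K * θ ^ (-ν) * (M / 2 * (2 * ‖d‖) ^ γ) := by gcongr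
  linarith [neg_abs_le (G B - G' B), neg_abs_le (G β + G' β),
    show K * ‖d‖ * (ν * (1 + 2 * M)) * θ ^ (-ν) / θ =
      K * ‖d‖ * (ν * θ ^ (-ν) / θ) + K * ‖d‖ * (2 * ν * M * θ ^ (-ν) / θ) by ring]

end IsDoublingContact

/-- Conditions on the scale `c₀` below which the profile beats the cutoff terms in the
interior (`interior_lt`) and on the boundary (`boundary_lt`). -/
structure IsDoublingScale (n : ℕ) (p s M c₀ : ℝ) : Prop where
  pos : 0 < c₀
  lt : c₀ < 1 / 8
  interior_lt : n * (4 * (1 / s) ^ 2 + 6 * (1 / s)) * (2 * c₀ ^ 2) < p / 2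
  boundary_lt : 1 / s * (1 + 2 * M) * c₀ + (4 + 2 * M) * c₀ ^ (2 * p / s) < p * s / 4

lemma exists_isDoublingScale (n : ℕ) {p s : ℝ} (M : ℝ) (hp : 0 < p) (hs : 0 < s) :
    ∃ c₀, IsDoublingScale n p s M c₀ := by
  have hpow : Continuous fun c : ℝ => c ^ (2 * p / s) :=
    continuous_id.rpow_const fun _ => Or.inr (by positivity)
  have hinterior : ∀ᶠ c in 𝓝 (0 : ℝ),
      n * (4 * (1 / s) ^ 2 + 6 * (1 / s)) * (2 * c ^ 2) < p / 2 :=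
    (by fun_prop : Continuous fun c : ℝ =>
      n * (4 * (1 / s) ^ 2 + 6 * (1 / s)) * (2 * c ^ 2)).continuousAt.eventually_lt_const
      (by simpa using hp)
  have hboundary : ∀ᶠ c in 𝓝 (0 : ℝ),
      1 / s * (1 + 2 * M) * c + (4 + 2 * M) * c ^ (2 * p / s) < p * s / 4 :=
    (by fun_prop : Continuous fun c : ℝ =>
      1 / s * (1 + 2 * M) * c + (4 + 2 * M) * c ^ (2 * p / s)).continuousAt.eventually_lt_const
      (by
        dsimp only
        rw [Real.zero_rpow (by positivity)]
        linarith [mul_pos hp hs])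
  have hsmall : ∀ᶠ c in 𝓝[>] (0 : ℝ), c ∈ Ioo (0 : ℝ) (1 / 8) := Ioo_mem_nhdsGT (by norm_num)
  obtain ⟨c, ⟨hc₀, hc₁⟩, hc₂, hc₃⟩ := (hsmall.and
    ((hinterior.and hboundary).filter_mono nhdsWithin_le_nhds)).exists
  exact ⟨c, hc₀, hc₁, hc₂, hc₃⟩

lemma rpow_div_le_rpow_neg_of_mul_lt_rpow {s c θ z : ℝ} (hs : 0 < s) (hc : 0 < c) (hθ : 0 < θ)
    (hz : 0 < z) (h : c * θ < z ^ s) : c ^ (1 / s) / z ≤ θ ^ (-(1 / s)) := by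
  have hν : 0 < 1 / s := one_div_pos.2 hs
  calc c ^ (1 / s) / z = (z ^ s / c) ^ (-(1 / s)) := by
        rw [Real.rpow_neg (by positivity), Real.div_rpow (by positivity) hc.le,
          ← Real.rpow_mul hz.le, mul_one_div_cancel hs.ne', Real.rpow_one, inv_div]
    _ ≤ θ ^ (-(1 / s)) :=
        Real.rpow_le_rpow_of_nonpos hθ ((le_div_iff₀' hc).2 h.le) (by linarith)

lemma le_sq_of_rpow_le {s e z : ℝ} (hs : 0 < s) (hs₁ : s ≤ 1 / 2) (he : e ≤ 1) (hz : 0 < z)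
    (h : z ^ s ≤ e) : z ≤ e ^ 2 := by
  have hpow : 0 < z ^ s := Real.rpow_pos_of_pos hz s
  calc z = (z ^ s) ^ (1 / s) := by
        rw [← Real.rpow_mul hz.le, mul_one_div_cancel hs.ne', Real.rpow_one]
    _ ≤ (z ^ s) ^ (2 : ℝ) :=
        Real.rpow_le_rpow_of_exponent_ge hpow (h.trans he) ((le_div_iff₀ hs).2 (by linarith))
    _ ≤ e ^ 2 := by
        rw [Real.rpow_two]
        exact pow_le_pow_left₀ hpow.le h 2

lemma inv_two_mul_le_rpow_sub_one {p e ρ y : ℝ} (hp : p ≤ 1 / 2) (he : e ≤ 1 / 2) (hρ : 0 < ρ)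
    (hρe : ρ ≤ e) (hy : 0 ≤ y) (hye : y ≤ e) : (2 * e)⁻¹ ≤ (ρ ^ 2 + y ^ 2) ^ (p - 1) := by
  have hS : 0 < ρ ^ 2 + y ^ 2 := by positivity
  have hSe : ρ ^ 2 + y ^ 2 ≤ (2 * e) ^ 2 := by nlinarith
  have hsqrt : √(ρ ^ 2 + y ^ 2) ≤ 2 * e := (Real.sqrt_le_left (by linarith)).2 hSe
  calc (2 * e)⁻¹ ≤ (√(ρ ^ 2 + y ^ 2))⁻¹ := inv_anti₀ (Real.sqrt_pos.2 hS) hsqrt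
    _ = (ρ ^ 2 + y ^ 2) ^ (-(1 / 2) : ℝ) := by rw [Real.sqrt_eq_rpow, Real.rpow_neg hS.le]
    _ ≤ (ρ ^ 2 + y ^ 2) ^ (p - 1) :=
        Real.rpow_le_rpow_of_exponent_ge hS (by nlinarith) (by linarith)

lemma two_mul_rpow_le_mul_rpow {p s c ρ : ℝ} (hs : 0 < s) (hp : 0 ≤ p) (hps : p ≤ s / 2)
    (hρ : 0 < ρ) (hc : ρ ^ s ≤ c) :
    (2 * ρ) ^ (1 - 2 * s + 4 * p) ≤ 4 * c ^ (2 * p / s) * ρ ^ (1 + 2 * (p - s)) := by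
  have htwo : (2 : ℝ) ^ (1 - 2 * s + 4 * p) ≤ 4 :=
    (Real.rpow_le_rpow_of_exponent_le (y := 1 - 2 * s + 4 * p) (z := 2) one_le_two
      (by linarith)).trans_eq (by norm_num)
  have hscale : ρ ^ (2 * p) ≤ c ^ (2 * p / s) := by
    rw [show 2 * p = s * (2 * p / s) by field_simp, Real.rpow_mul hρ.le, ← mul_div_assoc,
      mul_div_cancel_left₀ _ hs.ne']
    exact Real.rpow_le_rpow (by positivity) hc (by positivity)
  calc (2 * ρ) ^ (1 - 2 * s + 4 * p)
      = 2 ^ (1 - 2 * s + 4 * p) * ρ ^ (2 * p) * ρ ^ (1 + 2 * (p - s)) := by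
        rw [Real.mul_rpow zero_le_two hρ.le, mul_assoc, ← Real.rpow_add hρ]
        ring_nf
    _ ≤ 4 * c ^ (2 * p / s) * ρ ^ (1 + 2 * (p - s)) := by gcongr

lemma le_mul_rpow_of_rpow_le {p s e ρ : ℝ} (hps : p ≤ s / 2) (hρ : 0 < ρ) (hρ₁ : ρ ≤ 1)
    (he : ρ ^ s ≤ e) : ρ ≤ e * ρ ^ (1 + 2 * (p - s)) := by
  have hpow : ρ ^ (2 * s - 2 * p) ≤ e :=
    (Real.rpow_le_rpow_of_exponent_ge hρ hρ₁ (by linarith)).trans he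
  calc ρ = ρ ^ (2 * s - 2 * p) * ρ ^ (1 + 2 * (p - s)) := by
        rw [← Real.rpow_add hρ]
        ring_nf
        rw [Real.rpow_one]
    _ ≤ e * ρ ^ (1 + 2 * (p - s)) := by gcongr

namespace IsDoublingScale

variable {n : ℕ} {p s M c₀ θ ρ y : ℝ}

lemma cutoff_lt_profile (hc : IsDoublingScale n p s M c₀) (hp : 0 ≤ p) (hp₁ : p ≤ 1 / 2)
    (hθ : 0 < θ) (hθ₁ : θ ≤ 1) (hρ : 0 < ρ) (hρθ : ρ ≤ (c₀ * θ) ^ 2) (hy : 0 ≤ y)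
    (hyθ : y ≤ (c₀ * θ) ^ 2) :
    n * ((4 * (1 / s) ^ 2 + 6 * (1 / s)) * θ ^ (-2 : ℝ)) <
      p / 2 * (ρ ^ 2 + y ^ 2) ^ (p - 1) := by
  have hc₀ := hc.pos
  have he : c₀ * θ ≤ 1 / 8 * 1 := mul_le_mul hc.lt.le hθ₁ hθ.le (by norm_num)
  have he₀ : 0 < c₀ * θ := mul_pos hc₀ hθ
  have hθpow : θ ^ (-2 : ℝ) = 2 * c₀ ^ 2 * (2 * (c₀ * θ) ^ 2)⁻¹ := by
    rw [Real.rpow_neg hθ.le, Real.rpow_two]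
    field_simp
  calc n * ((4 * (1 / s) ^ 2 + 6 * (1 / s)) * θ ^ (-2 : ℝ))
      = n * (4 * (1 / s) ^ 2 + 6 * (1 / s)) * (2 * c₀ ^ 2) * (2 * (c₀ * θ) ^ 2)⁻¹ := by
        rw [hθpow]
        ring
    _ < p / 2 * (2 * (c₀ * θ) ^ 2)⁻¹ := by
        gcongr
        exact hc.interior_lt
    _ ≤ p / 2 * (ρ ^ 2 + y ^ 2) ^ (p - 1) := by
        gcongr
        exact inv_two_mul_le_rpow_sub_one hp₁ (by nlinarith) hρ hρθ hy hyθ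

lemma boundary_terms_lt_profile (hc : IsDoublingScale n p s M c₀) (hs : 0 < s) (hp : 0 ≤ p)
    (hps : p ≤ s / 2) (hM : 0 ≤ M) (hθ : 0 < θ) (hθ₁ : θ ≤ 1) (hρ : 0 < ρ) (hρ₁ : ρ ≤ 1)
    (hρθ : ρ ^ s ≤ c₀ * θ) {F K ψ : ℝ} (hK : 0 < K) (hψ : 0 < ψ) (hF : F ≤ K * ψ) :
    F * (2 * ρ) ^ (1 - 2 * s + 4 * p) + K * ρ * (1 / s * (1 + 2 * M)) * ψ / θ +
      K * ψ * (M / 2 * (2 * ρ) ^ (1 - 2 * s + 4 * p)) <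
        K * ψ * (p * s / 4 * ρ ^ (1 + 2 * (p - s))) := by
  have hc₀ := hc.pos
  have hpow := two_mul_rpow_le_mul_rpow hs hp hps hρ (hρθ.trans (mul_le_of_le_one_right hc₀.le hθ₁))
  have hle := le_mul_rpow_of_rpow_le hps hρ hρ₁ hρθ
  set R := ρ ^ (1 + 2 * (p - s))
  set Z := c₀ ^ (2 * p / s)
  have hR : 0 < R := Real.rpow_pos_of_pos hρ _
  calc F * (2 * ρ) ^ (1 - 2 * s + 4 * p) + K * ρ * (1 / s * (1 + 2 * M)) * ψ / θ +
        K * ψ * (M / 2 * (2 * ρ) ^ (1 - 2 * s + 4 * p))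
      ≤ K * ψ * (4 * Z * R) + K * (c₀ * θ * R) * (1 / s * (1 + 2 * M)) * ψ / θ +
        K * ψ * (M / 2 * (4 * Z * R)) := by gcongr
    _ = K * ψ * ((1 / s * (1 + 2 * M) * c₀ + (4 + 2 * M) * Z) * R) := by
        field_simp
        ring
    _ < K * ψ * (p * s / 4 * R) := by
        gcongr
        exact hc.boundary_lt

end IsDoublingScale

namespace IsDoublingContact

variable {n : ℕ} {p s δ K t y γ M U₀ F c₀ : ℝ} {b : ℝ → En n → En n} {f : ℝ → En n → ℝ}
  {u : ℝ → En n × ℝ → ℝ} {m d : En n}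

lemma lt_doubledDiff_of_mul_cutoff_lt (hc : IsDoublingContact p s (1 / s) δ K u t m d y)
    (hs : 0 < s) (hp : 0 < p) (hp₁ : p ≤ 1) (hδ : 0 < δ) (hK : 0 ≤ K) (hc₀ : 0 < c₀) {z : ℝ}
    (hz : 0 < z) (hlt : c₀ * cutoff 1 (9 / 16) t m < z ^ s) :
    K * c₀ ^ (1 / s) * (‖d‖ / (2 * z)) < doubledDiff (u t) (m, d, y) := by
  have hW := (hc.profile_mem hp hp₁ hs.le).1
  rw [hc.eq]
  calc K * c₀ ^ (1 / s) * (‖d‖ / (2 * z)) = K * (c₀ ^ (1 / s) / z) * (‖d‖ / 2) := by ring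
    _ ≤ K * cutoff 1 (9 / 16) t m ^ (-(1 / s)) * doublingProfile p s ‖d‖ y := by
        have hpow := rpow_div_le_rpow_neg_of_mul_lt_rpow hs hc₀ hc.cutoff_pos hz hlt
        have hψ := Real.rpow_nonneg hc.cutoff_pos.le (-(1 / s))
        gcongr
    _ < _ := lt_add_of_pos_left _ hδ

lemma offset_rpow_le (hc : IsDoublingContact p s (1 / s) δ K u t m d y)
    (h : IsBoxSolution (1 - 2 * s) γ M U₀ F b f u) (hs : 0 < s) (hp : 0 < p) (hp₁ : p ≤ 1)
    (hδ : 0 < δ) (hK : 0 ≤ K) (hc₀ : 0 < c₀) (hbig : 8 * (4 * n + 13) * U₀ < K * c₀ ^ (1 / s)) :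
    ‖d‖ ^ s ≤ c₀ * cutoff 1 (9 / 16) t m := by
  by_contra! hlt
  have hd := hc.norm_offset_mem.1
  have hlow := hc.lt_doubledDiff_of_mul_cutoff_lt hs hp hp₁ hδ hK hc₀ hd hlt
  have hup := (le_abs_self _).trans (h.abs_doubledDiff_le_two_mul
    (Ioc_subset_Icc_self hc.time_mem) hc.norm_center_lt.le hc.norm_offset_mem.2 hc.height_mem)
  rw [div_mul_cancel_right₀ hd.ne'] at hlow
  have : 0 ≤ n * U₀ := mul_nonneg n.cast_nonneg h.nonneg
  linarith [h.nonneg]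

lemma height_rpow_le (hc : IsDoublingContact p s (1 / s) δ K u t m d y)
    (h : IsBoxSolution (1 - 2 * s) γ M U₀ F b f u) (hs : 0 < s) (hs₁ : s ≤ 1 / 2) (hp : 0 < p)
    (hp₁ : p ≤ 1) (hδ : 0 < δ) (hK : 0 ≤ K) (hc₀ : 0 < c₀)
    (hbig : 8 * (4 * n + 13) * U₀ < K * c₀ ^ (1 / s)) (hy : 0 < y) :
    y ^ s ≤ c₀ * cutoff 1 (9 / 16) t m := by
  by_contra! hlt
  have hd := hc.norm_offset_mem.1
  have hlow := hc.lt_doubledDiff_of_mul_cutoff_lt hs hp hp₁ hδ hK hc₀ hy hlt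
  have hup := (le_abs_self _).trans (h.abs_doubledDiff_le (by linarith) (by linarith)
    (Ioc_subset_Icc_self hc.time_mem) hc.norm_center_lt.le hc.norm_offset_mem.2
    ⟨hy, hc.height_mem.2⟩)
  have hscaled : K * c₀ ^ (1 / s) * (‖d‖ / (2 * y)) <
      8 * (4 * n + 12) * U₀ * (‖d‖ / (2 * y)) := by
    refine (hlow.trans_le hup).trans_eq ?_
    field_simp
    ring
  have hlt' := lt_of_mul_lt_mul_right hscaled (by positivity)
  linarith [h.nonneg]

end IsDoublingContact

/-- The factor `8 (4n + 13) c₀ ^ (-1 / s)` in the Lipschitz estimate; it is chosen so that a barrier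
of this size can only touch the doubled difference at scale `c₀`. -/
def doublingConst (n : ℕ) (s c₀ : ℝ) : ℝ := 8 * (4 * n + 13) * c₀ ^ (-(1 / s))

lemma one_le_doublingConst (n : ℕ) {s c₀ : ℝ} (hs : 0 ≤ s) (hc₀ : 0 < c₀) (hc₁ : c₀ ≤ 1) :
    1 ≤ doublingConst n s c₀ := by
  have hpow : 1 ≤ c₀ ^ (-(1 / s)) := Real.one_le_rpow_of_pos_of_le_one_of_nonpos hc₀ hc₁
    (neg_nonpos.2 (one_div_nonneg.2 hs))
  exact one_le_mul_of_one_le_of_one_le (by linarith [n.cast_nonneg (α := ℝ)]) hpow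

lemma doublingConst_mul_rpow (n : ℕ) {s c₀ : ℝ} (hc₀ : 0 < c₀) :
    doublingConst n s c₀ * c₀ ^ (1 / s) = 8 * (4 * n + 13) := by
  rw [doublingConst, mul_assoc, ← Real.rpow_add hc₀, neg_add_cancel, Real.rpow_zero, mul_one]

theorem IsBoxSolution.not_isDoublingContact {n : ℕ} {s p M U₀ F c₀ δ K t y : ℝ} {m d : En n}
    {b : ℝ → En n → En n} {f : ℝ → En n → ℝ} {u : ℝ → En n × ℝ → ℝ}
    (h : IsBoxSolution (1 - 2 * s) (1 - 2 * s + 4 * p) M U₀ F b f u) (hs : 0 < s) (hs₁ : s < 1 / 2)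
    (hp : 0 < p) (hps : p ≤ s / 2) (hM : 0 ≤ M) (hF : 0 ≤ F) (hc₀ : IsDoublingScale n p s M c₀)
    (hδ : 0 < δ) (hK : doublingConst n s c₀ * (U₀ + F) < K) :
    ¬ IsDoublingContact p s (1 / s) δ K u t m d y := by
  intro hc
  have hU := h.nonneg
  have hC := one_le_doublingConst n hs.le hc₀.pos (hc₀.lt.le.trans (by norm_num))
  have hUF : U₀ + F ≤ doublingConst n s c₀ * (U₀ + F) :=
    le_mul_of_one_le_left (add_nonneg hU hF) hC
  have hK₀ : 0 < K := by linarith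
  have hbig : 8 * (4 * n + 13) * U₀ < K * c₀ ^ (1 / s) := by
    have hpow : 0 < c₀ ^ (1 / s) := Real.rpow_pos_of_pos hc₀.pos _
    rw [← doublingConst_mul_rpow n hc₀.pos, mul_right_comm]
    gcongr
    exact (mul_le_mul_of_nonneg_left (le_add_of_nonneg_right hF) (by linarith)).trans_lt hK
  have hd := hc.offset_rpow_le h hs hp (by linarith) hδ hK₀.le hc₀.pos hbig
  have hy := hc.height_rpow_le h hs hs₁.le hp (by linarith) hδ hK₀.le hc₀.pos hbig
  have hθ := hc.cutoff_pos
  have hθ₁ := cutoff_le_one (by linarith [hc.time_mem.1]) (by linarith [hc.time_mem.2])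
    (by norm_num) hθ
  have hd₀ := hc.norm_offset_mem.1
  have hinterior := hc.profile_pow_le_of_interior h hs hs₁ hp (by linarith)
    (one_div_pos.2 hs) hK₀
  have hboundary := fun hy : y = 0 => (hy ▸ hc).profile_le_of_boundary h hs hs₁.le hp (by linarith)
    (one_div_pos.2 hs) hK₀
  set θ := cutoff 1 (9 / 16) t m
  have hscale : c₀ * θ ≤ 1 / 8 * 1 := mul_le_mul hc₀.lt.le hθ₁ hθ.le (by norm_num)
  have hscale₀ : 0 < c₀ * θ := mul_pos hc₀.pos hθ
  have hd' := le_sq_of_rpow_le hs hs₁.le (by linarith) hd₀ hd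
  rcases hc.height_mem.1.eq_or_lt with hy₀ | hy₀
  · have hψ : 1 ≤ θ ^ (-(1 / s)) := Real.one_le_rpow_of_pos_of_le_one_of_nonpos hθ hθ₁
      (neg_nonpos.2 (one_div_nonneg.2 hs.le))
    exact (hboundary hy₀.symm (by nlinarith)).not_gt (hc₀.boundary_terms_lt_profile hs hp.le hps hM
      hθ hθ₁ hd₀ (by nlinarith) hd hK₀ (zero_lt_one.trans_le hψ)
      ((by linarith : F ≤ K).trans (le_mul_of_one_le_right hK₀.le hψ)))
  · have hy' := le_sq_of_rpow_le hs hs₁.le (by linarith) hy₀ (hy hy₀)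
    exact (hinterior (by nlinarith) ⟨hy₀, by nlinarith⟩).not_gt
      (hc₀.cutoff_lt_profile hp.le (by linarith) hθ hθ₁ hd₀ hd' hy₀.le hy')

/-- The compact sets of `(t, x, d, y)` over which differences with offset `d` are maximized; small
offsets are left out because the barriers vanish at `d = 0`. -/
def offsetDomain (n : ℕ) (T r ρ σ η : ℝ) : Set (ℝ × En n × En n × ℝ) :=
  {P | P.1 ∈ Icc (-T) 0 ∧ ‖P.2.1‖ ≤ r ∧ ‖P.2.2.1‖ ∈ Icc ρ σ ∧ P.2.2.2 ∈ Icc 0 η}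

lemma isCompact_offsetDomain (n : ℕ) (T r ρ σ η : ℝ) : IsCompact (offsetDomain n T r ρ σ η) := by
  convert (isCompact_Icc (a := -T) (b := 0)).prod
    ((isCompact_closedBall (0 : En n) r).prod
      (((isCompact_closedBall (0 : En n) σ).inter_right
        (isClosed_le continuous_const continuous_norm : IsClosed {d : En n | ρ ≤ ‖d‖})).prod
          (isCompact_Icc (a := (0 : ℝ)) (b := η))))
  ext
  simp only [offsetDomain, mem_ofPred_eq, mem_prod, mem_inter_iff, mem_closedBall_zero_iff,
    mem_Icc]
  tauto

lemma isCompact_solutionBox (n : ℕ) : IsCompact (solutionBox n) := by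
  convert (isCompact_closedBall (0 : En n) (7 / 8)).prod (isCompact_Icc (a := (0 : ℝ)) (b := 3 / 8))
  ext
  simp [solutionBox]

namespace IsBoxSolution

variable {n : ℕ} {a s p γ M U₀ F c₀ δ ρ t : ℝ} {b : ℝ → En n → En n} {f : ℝ → En n → ℝ}
  {u : ℝ → En n × ℝ → ℝ} {m d : En n}

lemma continuousOn_doubledDiff (h : IsBoxSolution a γ M U₀ F b f u) :
    ContinuousOn (fun P : ℝ × En n × En n × ℝ => doubledDiff (u P.1) P.2)
      (offsetDomain n 1 (3 / 4) ρ (1 / 16) (1 / 4)) := by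
  refine (h.continuousOn.comp (f := fun P : ℝ × En n × En n × ℝ =>
    (P.1, P.2.1 + P.2.2.1, P.2.2.2)) (by fun_prop) ?_).sub
    (h.continuousOn.comp (f := fun P : ℝ × En n × En n × ℝ =>
      (P.1, P.2.1 - P.2.2.1, P.2.2.2)) (by fun_prop) ?_)
  · exact fun P ⟨ht, hm, hd, hy⟩ => ⟨ht, (add_sub_mem_solutionBox hm hd.2 hy).1⟩
  · exact fun P ⟨ht, hm, hd, hy⟩ => ⟨ht, (add_sub_mem_solutionBox hm hd.2 hy).2⟩

lemma exists_doubledDiff_lt (h : IsBoxSolution a γ M U₀ F b f u) (hδ : 0 < δ) :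
    ∃ ρ > 0, ∀ t ∈ Icc (-1 : ℝ) 0, ∀ m : En n, ‖m‖ ≤ 3 / 4 → ∀ d : En n, ‖d‖ ≤ 1 / 16 → ‖d‖ < ρ →
      ∀ y ∈ Icc (0 : ℝ) (1 / 4), doubledDiff (u t) (m, d, y) < δ := by
  obtain ⟨ε, hε, huc⟩ := Metric.uniformContinuousOn_iff.1
    ((isCompact_Icc.prod (isCompact_solutionBox n)).uniformContinuousOn_of_continuous
      h.continuousOn) δ hδ
  refine ⟨ε / 2, half_pos hε, fun t ht m hm d hd hdε y hy => ?_⟩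
  obtain ⟨hmem, hmem'⟩ := add_sub_mem_solutionBox hm hd hy
  have hdist : dist (t, m + d, y) (t, m - d, y) < ε := by
    simp only [Prod.dist_eq, dist_self, dist_eq_norm (m + d) (m - d), norm_add_sub_sub]
    exact max_lt hε (max_lt (by linarith) hε)
  exact (le_abs_self _).trans_lt (huc (t, m + d, y) ⟨ht, hmem⟩ (t, m - d, y) ⟨ht, hmem'⟩ hdist)

lemma exists_isDoublingContact {ν C : ℝ} (h : IsBoxSolution a γ M U₀ F b f u) (hs : 0 < s)
    (hp : 0 < p) (hp₁ : p ≤ 1) (hν : 0 < ν) (hC : 0 ≤ C) (hδ : 0 < δ) (ht : t ∈ Icc (-1 : ℝ) 0)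
    (hm : ‖m‖ ≤ 3 / 4) (hd : ‖d‖ ≤ 1 / 16)
    (hbig : C * ‖d‖ < cutoff 1 (9 / 16) t m ^ ν * (doubledDiff (u t) (m, d, 0) - δ)) :
    ∃ K > C, ∃ t' m' d' y', IsDoublingContact p s ν δ K u t' m' d' y' := by
  obtain ⟨ρ, hρ, hsmall⟩ := h.exists_doubledDiff_lt hδ
  have hR : (3 / 4 : ℝ) ^ 2 = 9 / 16 := by norm_num
  have hy : (0 : ℝ) ∈ Icc (0 : ℝ) (1 / 4) := by norm_num
  have hdρ : ρ ≤ ‖d‖ := by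
    by_contra! hlt
    have hpow := Real.rpow_nonneg (cutoff_nonneg_of_norm_le hR ht.1 hm) ν
    exact ((mul_nonpos_of_nonneg_of_nonpos hpow
      (sub_nonpos.2 (hsmall t ht m hm d hd hlt 0 hy).le)).trans (by positivity)).not_gt hbig
  have hW {e : En n} {η : ℝ} (he : ‖e‖ ∈ Ioc (0 : ℝ) (1 / 16)) (hη : η ∈ Icc (0 : ℝ) (1 / 4)) :
      doublingProfile p s ‖e‖ η ∈ Icc (‖e‖ / 2) ‖e‖ :=
    doublingProfile_mem_Icc_of_mem hp hp₁ hs.le he hη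
  have hd₀ (P) (hP : P ∈ offsetDomain n 1 (3 / 4) ρ (1 / 16) (1 / 4)) : 0 < ‖P.2.2.1‖ :=
    hρ.trans_le hP.2.2.1.1
  obtain ⟨K, hK, ⟨t', m', d', y'⟩, ⟨ht', _, hd', hy'⟩, hθ, heq, hle⟩ :=
    exists_isContact_of_isCompact (isCompact_offsetDomain n 1 (3 / 4) ρ (1 / 16) (1 / 4)) hν hC
      (h.continuousOn_doubledDiff.sub (continuousOn_const (c := δ)))
      (continuous_cutoff.comp (by fun_prop : Continuous fun P : ℝ × En n × En n × ℝ =>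
        (P.1, P.2.1))).continuousOn
      (fun P ⟨ht, hm, _⟩ => cutoff_nonneg_of_norm_le hR ht.1 hm)
      ((continuousOn_doublingProfile hs).comp (f := fun P : ℝ × En n × En n × ℝ =>
        (‖P.2.2.1‖, P.2.2.2)) (by fun_prop) hd₀)
      (fun P hP => (half_pos (hd₀ P hP)).trans_le (hW ⟨hd₀ P hP, hP.2.2.1.2⟩ hP.2.2.2).1)
      (P₀ := (t, m, d, 0)) ⟨ht, hm, ⟨hdρ, hd⟩, hy⟩
      ((mul_le_mul_of_nonneg_left (hW ⟨hρ.trans_le hdρ, hd⟩ hy).2 hC).trans_lt hbig)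
  obtain ⟨ht'₀, hm'₀⟩ := lt_and_norm_lt_of_cutoff_pos hR (by norm_num) ht'.1 hθ
  refine ⟨K, hK, t', m', d', y', ⟨ht'₀, ht'.2⟩, hm'₀, ⟨hρ.trans_le hd'.1, hd'.2⟩, hy',
    sub_eq_iff_eq_add'.1 heq, fun τ hτ z hz e he η hη => ?_⟩
  have hθz := cutoff_pos_of_norm_lt hR hτ.1 hz
  rcases lt_or_ge ‖e‖ ρ with hlt | hge
  · refine (hsmall τ (Ioc_subset_Icc_self hτ) z hz.le e he.2 hlt η hη).le.trans
      (le_add_of_nonneg_right (mul_nonneg (mul_nonneg (hC.trans hK.le) (by positivity)) ?_))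
    exact (half_pos he.1).le.trans (hW he hη).1
  · exact sub_le_iff_le_add'.1
      (hle (τ, z, e, η) ⟨Ioc_subset_Icc_self hτ, hz.le, ⟨hge, he.2⟩, hη⟩ hθz)

lemma doubledDiff_le (h : IsBoxSolution (1 - 2 * s) (1 - 2 * s + 4 * p) M U₀ F b f u) (hs : 0 < s)
    (hs₁ : s < 1 / 2) (hp : 0 < p) (hps : p ≤ s / 2) (hM : 0 ≤ M) (hF : 0 ≤ F)
    (hc₀ : IsDoublingScale n p s M c₀) (ht : t ∈ Ioc (-1 : ℝ) 0) (hm : ‖m‖ < 3 / 4)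
    (hd : ‖d‖ ≤ 1 / 16) :
    doubledDiff (u t) (m, d, 0) ≤
      cutoff 1 (9 / 16) t m ^ (-(1 / s)) * (doublingConst n s c₀ * (U₀ + F) * ‖d‖) := by
  have hC := one_le_doublingConst n hs.le hc₀.pos (hc₀.lt.le.trans (by norm_num))
  have hU := h.nonneg
  have hθ : 0 < cutoff 1 (9 / 16) t m := cutoff_pos_of_norm_lt (by norm_num) ht.1 hm
  refine le_of_forall_pos_le_add fun δ hδ => ?_
  rw [← sub_le_iff_le_add, Real.rpow_neg hθ.le, ← div_eq_inv_mul,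
    le_div_iff₀' (Real.rpow_pos_of_pos hθ _)]
  by_contra! hbig
  obtain ⟨K, hK, t', m', d', y', hcontact⟩ := h.exists_isDoublingContact hs hp (by linarith)
    (one_div_pos.2 hs) (by positivity) hδ (Ioc_subset_Icc_self ht) hm.le hd hbig
  exact h.not_isDoublingContact hs hs₁ hp hps hM hF hc₀ hδ hK hcontact

lemma doubledDiff_le_of_norm_lt (h : IsBoxSolution (1 - 2 * s) (1 - 2 * s + 4 * p) M U₀ F b f u)
    (hs : 0 < s) (hs₁ : s < 1 / 2) (hp : 0 < p) (hps : p ≤ s / 2) (hM : 0 ≤ M) (hF : 0 ≤ F)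
    (hc₀ : IsDoublingScale n p s M c₀) (ht : t ∈ Icc (-(3 / 4) : ℝ) 0) (hm : ‖m‖ < 5 / 8)
    (hd : ‖d‖ ≤ 1 / 16) :
    doubledDiff (u t) (m, d, 0) ≤
      doublingConst n s c₀ * (1 / 32) ^ (-(1 / s)) * (U₀ + F) * ‖d‖ := by
  have hC := one_le_doublingConst n hs.le hc₀.pos (hc₀.lt.le.trans (by norm_num))
  have hU := h.nonneg
  have hθ : 1 / 32 ≤ cutoff 1 (9 / 16) t m := by
    have hm_sq : ‖m‖ ^ 2 ≤ (5 / 8) ^ 2 := pow_le_pow_left₀ (norm_nonneg m) hm.le 2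
    unfold cutoff
    nlinarith [ht.1]
  calc doubledDiff (u t) (m, d, 0)
      ≤ cutoff 1 (9 / 16) t m ^ (-(1 / s)) * (doublingConst n s c₀ * (U₀ + F) * ‖d‖) :=
        h.doubledDiff_le hs hs₁ hp hps hM hF hc₀ ⟨by linarith [ht.1], ht.2⟩ (by linarith) hd
    _ ≤ (1 / 32) ^ (-(1 / s)) * (doublingConst n s c₀ * (U₀ + F) * ‖d‖) :=
        mul_le_mul_of_nonneg_right (Real.rpow_le_rpow_of_nonpos (by norm_num) hθ
          (neg_nonpos.2 (one_div_nonneg.2 hs.le))) (by positivity)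
    _ = _ := by ring

end IsBoxSolution

lemma norm_le_of_symmDiff_le {E : Type*} [NormedAddCommGroup E] [NormedSpace ℝ E] {v : E → ℝ}
    {x : E} {r C : ℝ} {G : E →L[ℝ] ℝ} (hG : HasFDerivAt v G x) (hr : 0 < r) (hC : 0 ≤ C)
    (hv : ∀ m d, ‖m - x‖ < r → ‖d‖ < r → v (m + d) - v (m - d) ≤ C * ‖d‖) : ‖G‖ ≤ C := by
  refine hG.le_of_lip' hC ?_
  filter_upwards [Metric.ball_mem_nhds x hr] with z hz
  rw [mem_ball_iff_norm] at hz
  set d := (1 / 2 : ℝ) • (z - x) with hd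
  have hnorm : ‖d‖ = ‖z - x‖ / 2 := by
    rw [hd, norm_smul, Real.norm_of_nonneg (by norm_num)]
    ring
  have hdr : ‖d‖ < r := by linarith [norm_nonneg (z - x)]
  have hmr : ‖x + d - x‖ < r := by rwa [add_sub_cancel_left]
  have hup := hv (x + d) d hmr hdr
  have hlow := hv (x + d) (-d) hmr (by rwa [norm_neg])
  rw [show x + d + d = z by rw [hd]; module, add_sub_cancel_right] at hup
  rw [add_neg_cancel_right, sub_neg_eq_add, show x + d + d = z by rw [hd]; module,
    norm_neg] at hlow
  rw [Real.norm_eq_abs, abs_le]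
  have : 0 ≤ C * ‖z - x‖ := by positivity
  rw [hnorm] at hup hlow
  constructor <;> linarith

theorem exists_norm_fderiv_le (n : ℕ) {s p M : ℝ} (hs : 0 < s) (hs₁ : s < 1 / 2) (hp : 0 < p)
    (hps : p ≤ s / 2) (hM : 0 ≤ M) :
    ∃ C > 0, ∀ (U₀ F : ℝ) (b : ℝ → En n → En n) (f : ℝ → En n → ℝ) (u : ℝ → En n × ℝ → ℝ), 0 ≤ F →
      IsBoxSolution (1 - 2 * s) (1 - 2 * s + 4 * p) M U₀ F b f u →
      ∀ t ∈ Icc (-(3 / 4) : ℝ) 0, ∀ x, ‖x‖ < 5 / 8 → ∀ G : En n →L[ℝ] ℝ,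
        HasFDerivAt (fun z => u t (z, 0)) G x → ‖G‖ ≤ C * (U₀ + F) := by
  obtain ⟨c₀, hc₀⟩ := exists_isDoublingScale n M hp hs
  have hC : 0 < doublingConst n s c₀ := zero_lt_one.trans_le
    (one_le_doublingConst n hs.le hc₀.pos (hc₀.lt.le.trans (by norm_num)))
  refine ⟨doublingConst n s c₀ * (1 / 32) ^ (-(1 / s)), by positivity, ?_⟩
  intro U₀ F b f u hF h t ht x hx G hG
  have hU := h.nonneg
  have hr : 0 < min (5 / 8 - ‖x‖) (1 / 16) := lt_min (by linarith) (by norm_num)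
  refine norm_le_of_symmDiff_le hG hr (by positivity) fun m d hm hd => ?_
  have hm' : ‖m‖ < 5 / 8 := by
    linarith [norm_le_norm_add_norm_sub' m x, hm.trans_le (min_le_left _ _)]
  exact h.doubledDiff_le_of_norm_lt hs hs₁ hp hps hM hF hc₀ ht hm' (hd.le.trans (min_le_right _ _))

/-! ### The second-difference profile -/

/-- The profile in `y` of the barrier for second differences with step of order `ρ`. It decreases
from `1` to `1 / 2` on `[0, ρ]` with negative weighted normal derivative, and is constant beyond
`ρ`, where the Fejér identity replaces the barrier argument. -/
def secondDiffProfile (s ρ y : ℝ) : ℝ := 1 - min (y / ρ) 1 ^ (2 * s) / 4 - min (y / ρ) 1 ^ 2 / 4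

section SecondDiffProfile

variable {s ρ y : ℝ}

lemma secondDiffProfile_mem_Icc (hs : 0 ≤ s) (hρ : 0 < ρ) (hy : 0 ≤ y) :
    secondDiffProfile s ρ y ∈ Icc (1 / 2) 1 := by
  have hz : 0 ≤ min (y / ρ) 1 := by positivity
  have hz₁ : min (y / ρ) 1 ≤ 1 := min_le_right _ _
  have hpow : min (y / ρ) 1 ^ (2 * s) ≤ 1 := Real.rpow_le_one hz hz₁ (by positivity)
  have hsq : min (y / ρ) 1 ^ 2 ≤ 1 := pow_le_one₀ hz hz₁
  have hpow₀ : 0 ≤ min (y / ρ) 1 ^ (2 * s) := by positivity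
  have hsq₀ : 0 ≤ min (y / ρ) 1 ^ 2 := by positivity
  unfold secondDiffProfile
  constructor <;> linarith

lemma secondDiffProfile_of_le (hρ : 0 < ρ) (hy : ρ ≤ y) : secondDiffProfile s ρ y = 1 / 2 := by
  rw [secondDiffProfile, min_eq_right ((one_le_div hρ).2 hy), Real.one_rpow]
  norm_num

lemma secondDiffProfile_of_ge (hρ : 0 < ρ) (hy : y ≤ ρ) :
    secondDiffProfile s ρ y = 1 - (ρ⁻¹ * y) ^ (2 * s) / 4 - (ρ⁻¹ * y) ^ 2 / 4 := by
  rw [secondDiffProfile, min_eq_left ((div_le_one hρ).2 hy), div_eq_inv_mul y]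

lemma secondDiffProfile_zero (hs : 0 < s) (hρ : 0 < ρ) : secondDiffProfile s ρ 0 = 1 := by
  rw [secondDiffProfile_of_ge hρ hρ.le, mul_zero, Real.zero_rpow (by positivity)]
  norm_num

lemma continuousOn_secondDiffProfile (hs : 0 ≤ s) :
    ContinuousOn (fun q : ℝ × ℝ => secondDiffProfile s q.1 q.2) {q | 0 < q.1} := by
  have hmin : ContinuousOn (fun q : ℝ × ℝ => min (q.2 / q.1) 1) {q | 0 < q.1} :=
    (continuousOn_snd.div continuousOn_fst fun q hq => ne_of_gt hq).inf continuousOn_const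
  exact (continuousOn_const.sub
    ((hmin.rpow_const fun _ _ => Or.inr (by positivity)).div_const 4)).sub
    ((hmin.pow 2).div_const 4)

lemma exists_hasTwoJet_secondDiffProfile (hy : 0 < y) (hyρ : y < ρ) :
    ∃ y₁ y₂, HasTwoJet (secondDiffProfile s ρ) y y₁ y₂ ∧
      y₂ + (1 - 2 * s) / y * y₁ = -((1 - s) / ρ ^ 2) ∧
      y₁ = -(s / 2 * (ρ⁻¹ * (ρ⁻¹ * y) ^ (2 * s - 1))) - y / (2 * ρ ^ 2) := by
  have hρ : 0 < ρ := hy.trans hyρ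
  have hscale : HasTwoJet (fun z => ρ⁻¹ * z) y (ρ⁻¹ * 1) (ρ⁻¹ * 0) := (HasTwoJet.id y).const_mul ρ⁻¹
  have hz : 0 < ρ⁻¹ * y := by positivity
  have hjet := ((HasTwoJet.const 1 y).sub ((hscale.rpow hz (2 * s)).const_mul (1 / 4))).sub
    (hscale.sq.const_mul (1 / 4))
  refine ⟨_, _, hjet.congr_of_eventuallyEq ?_, ?_, ?_⟩
  · filter_upwards [gt_mem_nhds hyρ] with z hz
    rw [secondDiffProfile_of_ge hρ hz.le, div_eq_inv_mul, div_eq_inv_mul, one_div]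
  · rw [Real.rpow_sub_one hz.ne', Real.rpow_sub hz, Real.rpow_two]
    field_simp
    ring
  · field_simp
    ring

lemma exists_weightedDeriv_secondDiffProfile (hs : 0 < s) (hs₁ : s < 1 / 2) (hρ : 0 < ρ) :
    ∃ W' : ℝ → ℝ, (∀ y ∈ Ioo 0 ρ, HasDerivAt (secondDiffProfile s ρ) (W' y) y) ∧
      Tendsto (fun y : ℝ => y ^ (1 - 2 * s) * W' y) (𝓝[>] 0) (𝓝 (-(s / 2 * ρ ^ (-(2 * s))))) := by
  refine ⟨fun y => -(s / 2 * (ρ⁻¹ * (ρ⁻¹ * y) ^ (2 * s - 1))) - y / (2 * ρ ^ 2), fun y hy => ?_, ?_⟩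
  · obtain ⟨y₁, y₂, hjet, -, rfl⟩ := exists_hasTwoJet_secondDiffProfile (s := s) hy.1 hy.2
    exact hjet.hasDerivAt
  · have hcont : Continuous fun y : ℝ => y ^ (1 - 2 * s) * (y / (2 * ρ ^ 2)) :=
      (continuous_id.rpow_const fun _ => Or.inr (by linarith)).mul (by fun_prop)
    have hlim : Tendsto (fun y : ℝ => -(s / 2 * ρ ^ (-(2 * s))) -
        y ^ (1 - 2 * s) * (y / (2 * ρ ^ 2))) (𝓝[>] 0) (𝓝 (-(s / 2 * ρ ^ (-(2 * s))))) :=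
      ((continuous_const.sub hcont).tendsto' 0 _ (by simp)).mono_left nhdsWithin_le_nhds
    refine hlim.congr' ?_
    filter_upwards [self_mem_nhdsWithin] with y hy
    have hy : 0 < y := hy
    have hcancel : y ^ (1 - 2 * s) * y ^ (2 * s - 1) = 1 := by
      rw [← Real.rpow_add hy, sub_add_sub_cancel', sub_self, Real.rpow_zero]
    have hscale : ρ⁻¹ * ρ⁻¹ ^ (2 * s - 1) = ρ ^ (-(2 * s)) := by
      rw [← Real.rpow_one_add' (by positivity) (by linarith), Real.inv_rpow hρ.le,
        ← Real.rpow_neg hρ.le, add_sub_cancel]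
    rw [Real.mul_rpow (by positivity) hy.le]
    linear_combination (s / 2 * y ^ (1 - 2 * s) * y ^ (2 * s - 1)) * hscale +
      s / 2 * ρ ^ (-(2 * s)) * hcancel

end SecondDiffProfile

/-! ### Second differences -/

/-- The symmetric second difference of `w` at `p` with horizontal step `h`, as a difference of
first differences. -/
def secondDiff {n : ℕ} (w : En n × ℝ → ℝ) (h : En n) (p : En n × ℝ) : ℝ :=
  w (p.1 + h, p.2) - w p - (w p - w (p.1 - h, p.2))

section SecondDiff

variable {n : ℕ} {a μ r y : ℝ} {w : En n × ℝ → ℝ} {x h : En n}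

/-- The Fejér identity `(1 - z ^ N) (1 - z ^ (-N)) = ∑ z ^ (i - j) (1 - z) (1 - z⁻¹)` for the
translation `z` by `h`. -/
lemma secondDiff_natCast_smul (w : En n × ℝ → ℝ) (h x : En n) (y : ℝ) (N : ℕ) :
    secondDiff w ((N : ℝ) • h) (x, y) =
      ∑ i ∈ Finset.range N, ∑ j ∈ Finset.range N, secondDiff w h (x + ((i : ℝ) - j) • h, y) := by
  set v : ℝ → ℝ := fun k => w (x + k • h, y)
  have hstep (i j : ℕ) : secondDiff w h (x + ((i : ℝ) - j) • h, y) =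
      (v (i - j + 1) - v (i - j)) - (v (i - (j + 1 : ℕ) + 1) - v (i - (j + 1 : ℕ))) := by
    simp only [secondDiff, v]
    push_cast
    congr 4 <;> module
  have hinner (i : ℕ) : ∑ j ∈ Finset.range N, secondDiff w h (x + ((i : ℝ) - j) • h, y) =
      (v (i + 1 : ℕ) - v i) - (v ((i + 1 : ℕ) - N) - v (i - N)) := by
    rw [Finset.sum_congr rfl fun j _ => hstep i j,
      Finset.sum_range_sub' fun j : ℕ => v (i - j + 1) - v (i - j)]
    push_cast
    ring_nf
  rw [Finset.sum_congr rfl fun i _ => hinner i, Finset.sum_sub_distrib,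
    Finset.sum_range_sub fun i : ℕ => v i, Finset.sum_range_sub fun i : ℕ => v (i - N)]
  simp only [secondDiff, v, Nat.cast_zero, zero_smul, add_zero, sub_self, zero_sub, neg_smul,
    ← sub_eq_add_neg]

lemma abs_sub_le_of_hasAHarmonicJet (ha₀ : 0 ≤ a) (ha₁ : a ≤ 1) (hr : 0 < r) (hry : 2 * r ≤ y)
    (hμ : 0 ≤ μ)
    (hjet : ∀ p ∈ Metric.closedBall x (2 * r) ×ˢ Metric.closedBall y r, HasAHarmonicJet a w p)
    (hcont : ContinuousOn w (Metric.closedBall x (2 * r) ×ˢ Metric.closedBall y r))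
    (hbound : ∀ p ∈ Metric.closedBall x (2 * r) ×ˢ Metric.closedBall y r, |w p| ≤ μ)
    (hh : ‖h‖ ≤ r / 2) : |w (x + h, y) - w (x, y)| ≤ μ * (4 * n + 12) * (‖h‖ / r) := by
  rcases hμ.eq_or_lt with rfl | hμ
  · have hx := hbound (x, y) ⟨Metric.mem_closedBall_self (by positivity),
      Metric.mem_closedBall_self hr.le⟩
    have hxh := hbound (x + h, y) ⟨by simpa using hh.trans (by linarith),
      Metric.mem_closedBall_self hr.le⟩
    rw [abs_nonpos_iff] at hx hxh
    simp [hx, hxh]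
  have hhalf : ‖(1 / 2 : ℝ) • h‖ = ‖h‖ / 2 := by
    rw [norm_smul, Real.norm_of_nonneg (by norm_num)]
    ring
  have hsub : Metric.closedBall (x + (1 / 2 : ℝ) • h) r ×ˢ Metric.closedBall y r ⊆
      Metric.closedBall x (2 * r) ×ˢ Metric.closedBall y r := by
    refine prod_mono_left (Metric.closedBall_subset_closedBall' ?_)
    rw [dist_self_add_left, hhalf]
    linarith
  have hle := abs_doubledDiff_le ha₀ ha₁ hr hry hμ (fun p hp => hjet p (hsub hp))
    (hcont.mono hsub) (fun p hp => hbound p (hsub hp)) (d := (1 / 2 : ℝ) • h)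
    (by rw [hhalf]; linarith)
  rw [doubledDiff, hhalf, add_sub_cancel_right] at hle
  convert hle using 1
  · congr 4
    module
  · ring

lemma sq_mul_secondDiff_sub_le (ha₀ : 0 ≤ a) (ha₁ : a ≤ 1) (hr : 0 < r) (hry : 2 * r ≤ y)
    (hμ : 0 ≤ μ) (hjet : ∀ p ∈ Metric.closedBall x (2 * r) ×ˢ Metric.closedBall y r,
      HasAHarmonicJet a (secondDiff w h) p)
    (hcont : ContinuousOn (secondDiff w h) (Metric.closedBall x (2 * r) ×ˢ Metric.closedBall y r))
    (hbound : ∀ p ∈ Metric.closedBall x (2 * r) ×ˢ Metric.closedBall y r, |secondDiff w h p| ≤ μ)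
    {N : ℕ} (hN : N * ‖h‖ ≤ r / 2) :
    (N : ℝ) ^ 2 * (secondDiff w h (x, y) - μ * (4 * n + 12) * (N * ‖h‖ / r)) ≤
      secondDiff w ((N : ℝ) • h) (x, y) := by
  have hshift : ∀ i ∈ Finset.range N, ∀ j ∈ Finset.range N,
      secondDiff w h (x, y) - μ * (4 * n + 12) * (N * ‖h‖ / r) ≤
        secondDiff w h (x + ((i : ℝ) - j) • h, y) := by
    intro i hi j hj
    have hi' : (i : ℝ) ≤ N := by exact_mod_cast (Finset.mem_range.1 hi).le
    have hj' : (j : ℝ) ≤ N := by exact_mod_cast (Finset.mem_range.1 hj).le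
    have hnorm : ‖((i : ℝ) - j) • h‖ ≤ N * ‖h‖ := by
      rw [norm_smul, Real.norm_eq_abs]
      gcongr
      rw [abs_le]
      constructor <;> linarith [Nat.cast_nonneg (α := ℝ) i, Nat.cast_nonneg (α := ℝ) j]
    have hle := abs_sub_le_of_hasAHarmonicJet ha₀ ha₁ hr hry hμ hjet hcont hbound
      (hnorm.trans hN)
    have hmono : μ * (4 * n + 12) * (‖((i : ℝ) - j) • h‖ / r) ≤
        μ * (4 * n + 12) * (N * ‖h‖ / r) := by gcongr
    linarith [(abs_le.1 hle).1]
  rw [secondDiff_natCast_smul]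
  refine le_trans (le_of_eq ?_)
    (Finset.sum_le_sum fun i hi => Finset.sum_le_sum fun j hj => hshift i hi j hj)
  simp only [Finset.sum_const, Finset.card_range, nsmul_eq_mul]
  ring

end SecondDiff

section BoxSolution

variable {n : ℕ} {a γ M U₀ F T r ρ σ η t y : ℝ} {b : ℝ → En n → En n} {f : ℝ → En n → ℝ}
  {u : ℝ → En n × ℝ → ℝ} {x h : En n}

lemma secondDiff_neg (w : En n × ℝ → ℝ) (h : En n) (p : En n × ℝ) :
    secondDiff (fun q => -w q) h p = -secondDiff w h p := by
  simp only [secondDiff]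
  ring

lemma mem_solutionBox_of_norm_le (hx : ‖x‖ ≤ 3 / 4) (hy : y ∈ Icc (0 : ℝ) (1 / 4)) :
    (x, y) ∈ solutionBox n := by
  simpa using (add_sub_mem_solutionBox (d := 0) hx (by norm_num) hy).1

lemma IsBoxSolution.hasAHarmonicJet_secondDiff (hu : IsBoxSolution a γ M U₀ F b f u)
    (ht : t ∈ Icc (-1 : ℝ) 0) (hx : ‖x‖ ≤ 3 / 4) (hh : ‖h‖ ≤ 1 / 16)
    (hy : y ∈ Ioc (0 : ℝ) (1 / 4)) : HasAHarmonicJet a (secondDiff (u t) h) (x, y) := by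
  have hy' := Ioc_subset_Icc_self hy
  obtain ⟨hmem, hmem'⟩ := add_sub_mem_solutionBox hx hh hy'
  have hmid := hu.hasAHarmonicJet t ht _ (mem_solutionBox_of_norm_le hx hy') hy.1
  have hright := (hu.hasAHarmonicJet t ht _ hmem hy.1).comp_add_const (p := (x, y)) h
  have hleft := hu.hasAHarmonicJet t ht _ hmem' hy.1
  rw [sub_eq_add_neg] at hleft
  have hleft' := hleft.comp_add_const (p := (x, y)) (-h)
  simp only [← sub_eq_add_neg] at hleft'
  exact (hright.sub hmid).sub (hmid.sub hleft')

lemma IsBoxSolution.continuousOn_secondDiff (hu : IsBoxSolution a γ M U₀ F b f u) (hT : T ≤ 1)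
    (hr : r ≤ 3 / 4) (hσ : σ ≤ 1 / 16) (hη : η ≤ 1 / 4) :
    ContinuousOn (fun P : ℝ × En n × En n × ℝ => secondDiff (u P.1) P.2.2.1 (P.2.1, P.2.2.2))
      (offsetDomain n T r ρ σ η) := by
  have hbox (P) (hP : P ∈ offsetDomain n T r ρ σ η) : P.1 ∈ Icc (-1 : ℝ) 0 ∧ ‖P.2.1‖ ≤ 3 / 4 ∧
      ‖P.2.2.1‖ ≤ 1 / 16 ∧ P.2.2.2 ∈ Icc (0 : ℝ) (1 / 4) :=
    ⟨⟨(neg_le_neg hT).trans hP.1.1, hP.1.2⟩, hP.2.1.trans hr, hP.2.2.1.2.trans hσ, hP.2.2.2.1,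
      hP.2.2.2.2.trans hη⟩
  have hmid : ContinuousOn (fun P : ℝ × En n × En n × ℝ => u P.1 (P.2.1, P.2.2.2))
      (offsetDomain n T r ρ σ η) :=
    hu.continuousOn.comp (f := fun P : ℝ × En n × En n × ℝ => (P.1, P.2.1, P.2.2.2))
      (by fun_prop) fun P hP =>
        let ⟨ht, hx, _, hy⟩ := hbox P hP
        ⟨ht, mem_solutionBox_of_norm_le hx hy⟩
  refine ((hu.continuousOn.comp (f := fun P : ℝ × En n × En n × ℝ =>
    (P.1, P.2.1 + P.2.2.1, P.2.2.2)) (by fun_prop) fun P hP => ?_).sub hmid).sub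
    (hmid.sub (hu.continuousOn.comp (f := fun P : ℝ × En n × En n × ℝ =>
      (P.1, P.2.1 - P.2.2.1, P.2.2.2)) (by fun_prop) fun P hP => ?_)) <;>
  obtain ⟨ht, hx, hh, hy⟩ := hbox P hP
  · exact ⟨ht, (add_sub_mem_solutionBox hx hh hy).1⟩
  · exact ⟨ht, (add_sub_mem_solutionBox hx hh hy).2⟩

lemma IsBoxSolution.abs_secondDiff_le (hu : IsBoxSolution a γ M U₀ F b f u)
    (ht : t ∈ Icc (-1 : ℝ) 0) (hx : ‖x‖ ≤ 3 / 4) (hh : ‖h‖ ≤ 1 / 16)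
    (hy : y ∈ Icc (0 : ℝ) (1 / 4)) : |secondDiff (u t) h (x, y)| ≤ 4 * U₀ := by
  obtain ⟨hmem, hmem'⟩ := add_sub_mem_solutionBox hx hh hy
  have hright := _root_.abs_le.1 (hu.abs_le t ht _ hmem)
  have hmid := _root_.abs_le.1 (hu.abs_le t ht _ (mem_solutionBox_of_norm_le hx hy))
  have hleft := _root_.abs_le.1 (hu.abs_le t ht _ hmem')
  unfold secondDiff
  exact _root_.abs_le.2 ⟨by dsimp only; linarith, by dsimp only; linarith⟩

lemma IsBoxSolution.abs_add_const_sub_le (hu : IsBoxSolution a γ M U₀ F b f u) (ha₀ : 0 ≤ a)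
    (ha₁ : a ≤ 1) (ht : t ∈ Icc (-1 : ℝ) 0) (hx : ‖x‖ ≤ 5 / 8) (hh : ‖h‖ ≤ 1 / 16)
    (hy : y ∈ Ioc (0 : ℝ) (1 / 4)) :
    |u t (x + h, y) - u t (x, y)| ≤ 2 * U₀ * (4 * n + 12) * ‖h‖ / y := by
  have hhalf : ‖(1 / 2 : ℝ) • h‖ = ‖h‖ / 2 := by
    rw [norm_smul, Real.norm_of_nonneg (by norm_num)]
    ring
  have hle := hu.abs_doubledDiff_le ha₀ ha₁ ht (m := x + (1 / 2 : ℝ) • h) (d := (1 / 2 : ℝ) • h)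
    ((norm_add_le _ _).trans (by linarith)) (by linarith) hy
  rw [doubledDiff, hhalf, add_sub_cancel_right] at hle
  convert hle using 1
  · congr 4
    module
  · ring

/-- Applying the gradient estimate twice. -/
lemma IsBoxSolution.abs_secondDiff_le_of_height_ge (hu : IsBoxSolution a γ M U₀ F b f u)
    (ha₀ : 0 ≤ a) (ha₁ : a ≤ 1) (ht : t ∈ Icc (-1 : ℝ) 0) (hx : ‖x‖ ≤ 9 / 16) (hh : ‖h‖ ≤ 1 / 64)
    (hy : y ∈ Icc (1 / 16 : ℝ) (1 / 8)) :
    |secondDiff (u t) h (x, y)| ≤ 2048 * (4 * n + 12) ^ 2 * U₀ * ‖h‖ ^ 2 := by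
  have hU := hu.nonneg
  have hbox : ∀ p ∈ Metric.closedBall x (2 * (1 / 32)) ×ˢ Metric.closedBall y (1 / 32),
      ‖p.1‖ ≤ 5 / 8 ∧ p.2 ∈ Icc (1 / 32 : ℝ) (1 / 4) := by
    rintro ⟨z, η⟩ ⟨hz, hη⟩
    rw [Real.closedBall_eq_Icc] at hη
    refine ⟨(norm_le_norm_add_const_of_dist_le hz).trans (by linarith), ?_⟩
    constructor <;> dsimp only <;> linarith [hy.1, hy.2, hη.1, hη.2]
  have hmem (p) (hp : p ∈ Metric.closedBall x (2 * (1 / 32)) ×ˢ Metric.closedBall y (1 / 32)) :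
      p ∈ solutionBox n :=
    mem_solutionBox_of_norm_le (by linarith [(hbox p hp).1])
      (Icc_subset_Icc_left (by norm_num) (hbox p hp).2)
  have hshift (p) (hp : p ∈ Metric.closedBall x (2 * (1 / 32)) ×ˢ Metric.closedBall y (1 / 32)) :
      (p.1 + h, p.2) ∈ solutionBox n :=
    (add_sub_mem_solutionBox (by linarith [(hbox p hp).1]) (by linarith)
      (Icc_subset_Icc_left (by norm_num) (hbox p hp).2)).1
  have hle := abs_sub_le_of_hasAHarmonicJet (x := x) (y := y) (h := -h) (r := 1 / 32)
    (w := fun p => u t (p.1 + h, p.2) - u t p) (μ := 64 * U₀ * (4 * n + 12) * ‖h‖) ha₀ ha₁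
    (by norm_num) (by linarith [hy.1]) (by positivity) ?_ ?_ ?_ (by rw [norm_neg]; linarith)
  · rw [← abs_neg]
    simp only [neg_add_cancel_right, norm_neg] at hle
    convert hle using 1
    · rw [secondDiff, neg_sub, sub_eq_add_neg x h]
    · ring
  · intro p hp
    have hη₀ : (0 : ℝ) < p.2 := by linarith [(hbox p hp).2.1]
    exact ((hu.hasAHarmonicJet t ht _ (hshift p hp) hη₀).comp_add_const h).sub
      (hu.hasAHarmonicJet t ht p (hmem p hp) hη₀)
  · exact (hu.continuousOn.comp (f := fun p : En n × ℝ => (t, p.1 + h, p.2)) (by fun_prop)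
      fun p hp => ⟨ht, hshift p hp⟩).sub
      (hu.continuousOn.comp (f := fun p : En n × ℝ => (t, p)) (by fun_prop)
        fun p hp => ⟨ht, hmem p hp⟩)
  · intro p hp
    obtain ⟨hz, hη⟩ := hbox p hp
    have hη₀ : (0 : ℝ) < p.2 := by linarith [hη.1]
    refine (hu.abs_add_const_sub_le ha₀ ha₁ ht hz (by linarith) ⟨hη₀, hη.2⟩).trans ?_
    rw [div_le_iff₀ hη₀]
    calc 2 * U₀ * (4 * n + 12) * ‖h‖ = 64 * U₀ * (4 * n + 12) * ‖h‖ * (1 / 32) := by ring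
      _ ≤ 64 * U₀ * (4 * n + 12) * ‖h‖ * p.2 := by gcongr; exact hη.1

end BoxSolution

section SecondDiffJet

variable {n : ℕ} {a γ M U₀ F : ℝ} {b : ℝ → En n → En n} {f : ℝ → En n → ℝ}
  {u : ℝ → En n × ℝ → ℝ} {t Λ : ℝ} {x z h : En n}

lemma IsBoxSolution.abs_apply_drift_sub_le (hu : IsBoxSolution a γ M U₀ F b f u)
    (ht : t ∈ Icc (-1 : ℝ) 0) (hx : ‖x‖ ≤ 7 / 8) (hz : ‖z‖ ≤ 7 / 8) {G : En n →L[ℝ] ℝ}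
    (hG : ‖G‖ ≤ Λ) : |G (b t z) - G (b t x)| ≤ Λ * (M * ‖z - x‖ ^ γ) := by
  have hb := hu.norm_drift_sub_le t ht z x hz hx
  rw [← map_sub]
  calc |G (b t z - b t x)| ≤ ‖G‖ * ‖b t z - b t x‖ := G.le_opNorm _
    _ ≤ Λ * (M * ‖z - x‖ ^ γ) :=
      mul_le_mul hG hb (norm_nonneg _) ((norm_nonneg G).trans hG)

lemma IsBoxSolution.exists_hasBoundaryJet_secondDiff (hu : IsBoxSolution a γ M U₀ F b f u)
    (ht : t ∈ Ioc (-1 : ℝ) 0) (hx : ‖x‖ < 9 / 16) (hh : ‖h‖ ≤ 1 / 16)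
    (hΛ : ∀ z, ‖z‖ < 5 / 8 → ∀ G : En n →L[ℝ] ℝ,
      HasFDerivAt (fun z => u t (z, 0)) G z → ‖G‖ ≤ Λ) :
    ∃ Dt L G, HasBoundaryJet a (fun τ => secondDiff (u τ) h) t x Dt L G ∧
      Dt + G (b t x) - L ≤ (2 * F + 2 * M * Λ) * ‖h‖ ^ γ := by
  have hx₁ : ‖x + h‖ < 5 / 8 := (norm_add_le _ _).trans_lt (by linarith)
  have hx₂ : ‖x - h‖ < 5 / 8 := (norm_sub_le _ _).trans_lt (by linarith)
  have hbox : ∀ {z : En n}, ‖z‖ < 5 / 8 → ‖z‖ ≤ 7 / 8 := fun hz => by linarith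
  have hx₀ := hbox (hx.trans (by norm_num))
  have ht' := Ioc_subset_Icc_self ht
  obtain ⟨Dt₀, L₀, G₀, hjet₀, heq₀⟩ := hu.boundaryEq t ht x hx₀
  obtain ⟨Dt₁, L₁, G₁, hjet₁, heq₁⟩ := hu.boundaryEq t ht _ (hbox hx₁)
  obtain ⟨Dt₂, L₂, G₂, hjet₂, heq₂⟩ := hu.boundaryEq t ht _ (hbox hx₂)
  have hb₁ := hu.abs_apply_drift_sub_le ht' hx₀ (hbox hx₁) (hΛ _ hx₁ _ hjet₁.tangential)
  have hb₂ := hu.abs_apply_drift_sub_le ht' hx₀ (hbox hx₂) (hΛ _ hx₂ _ hjet₂.tangential)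
  have hf₁ := hu.abs_source_sub_le t ht' _ _ (hbox hx₁) hx₀
  have hf₂ := hu.abs_source_sub_le t ht' _ _ (hbox hx₂) hx₀
  rw [add_sub_cancel_left] at hb₁ hf₁
  rw [sub_sub_cancel_left, norm_neg] at hb₂ hf₂
  rw [sub_eq_add_neg] at hjet₂
  have hjet := ((hjet₁.comp_add_const h).sub hjet₀).sub (hjet₀.sub (hjet₂.comp_add_const (-h)))
  simp only [← sub_eq_add_neg] at hjet
  refine ⟨_, _, _, hjet, ?_⟩
  simp only [sub_apply]
  linarith [(_root_.abs_le.1 hb₁).1, (_root_.abs_le.1 hb₂).1, (_root_.abs_le.1 hf₁).2,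
    (_root_.abs_le.1 hf₂).2]

end SecondDiffJet

/-- The Ishii–Lions barrier `K θ(t, x) ^ (-ν) r ^ (1 + α) W(y)` for second differences with step
of length `r`, where `θ` is the cutoff of the ball of radius `9 / 16` and `W` the second-difference
profile of height `R r`. -/
def secondDiffBarrier {n : ℕ} (s α ν K R t r : ℝ) (x : En n) (y : ℝ) : ℝ :=
  K * cutoff (3 / 4) (81 / 256) t x ^ (-ν) * (r ^ (1 + α) * secondDiffProfile s (R * r) y)

/-- The second-difference barrier touches the second difference of `u` at `(t, x, h, y)` and lies
above the second differences with steps at least as long as `h`. -/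
structure IsSecondDiffContact {n : ℕ} (s α ν K R : ℝ) (u : ℝ → En n × ℝ → ℝ) (t : ℝ) (x h : En n)
    (y : ℝ) : Prop where
  time_mem : t ∈ Ioc (-(3 / 4) : ℝ) 0
  norm_base_lt : ‖x‖ < 9 / 16
  norm_step_mem : ‖h‖ ∈ Ioc (0 : ℝ) (1 / 64)
  height_mem : y ∈ Icc (0 : ℝ) (1 / 8)
  eq : secondDiff (u t) h (x, y) = secondDiffBarrier s α ν K R t ‖h‖ x y
  abs_le : ∀ t' ∈ Ioc (-(3 / 4) : ℝ) 0, ∀ x', ‖x'‖ < 9 / 16 → ∀ h', ‖h'‖ ∈ Icc ‖h‖ (1 / 64) →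
    ∀ y' ∈ Icc (0 : ℝ) (1 / 8),
      |secondDiff (u t') h' (x', y')| ≤ secondDiffBarrier s α ν K R t' ‖h'‖ x' y'

namespace IsSecondDiffContact

variable {n : ℕ} {s α ν K R t y γ M U₀ F : ℝ} {b : ℝ → En n → En n} {f : ℝ → En n → ℝ}
  {u : ℝ → En n × ℝ → ℝ} {x h : En n}

lemma cutoff_pos (hc : IsSecondDiffContact s α ν K R u t x h y) :
    0 < cutoff (3 / 4) (81 / 256) t x :=
  cutoff_pos_of_norm_lt (by norm_num) hc.time_mem.1 hc.norm_base_lt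

lemma time_mem_Ioc (hc : IsSecondDiffContact s α ν K R u t x h y) : t ∈ Ioc (-1 : ℝ) 0 :=
  ⟨by linarith [hc.time_mem.1], hc.time_mem.2⟩

lemma secondDiff_le (hc : IsSecondDiffContact s α ν K R u t x h y) {t' : ℝ}
    (ht' : t' ∈ Ioc (-(3 / 4) : ℝ) 0) {x' : En n} (hx' : ‖x'‖ < 9 / 16) {y' : ℝ}
    (hy' : y' ∈ Icc (0 : ℝ) (1 / 8)) :
    secondDiff (u t') h (x', y') ≤ secondDiffBarrier s α ν K R t' ‖h‖ x' y' :=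
  (le_abs_self _).trans (hc.abs_le t' ht' x' hx' h ⟨le_rfl, hc.norm_step_mem.2⟩ y' hy')

lemma isLocalMax (hc : IsSecondDiffContact s α ν K R u t x h y) (hy : y ∈ Ioo (0 : ℝ) (1 / 8)) :
    IsLocalMax (fun P => secondDiff (u t) h P - secondDiffBarrier s α ν K R t ‖h‖ P.1 P.2)
      (x, y) := by
  have hbase : ∀ᶠ P in 𝓝 (x, y), ‖P.1‖ < 9 / 16 :=
    (by fun_prop : Continuous fun P : En n × ℝ => ‖P.1‖).continuousAt.eventually_lt_const
      hc.norm_base_lt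
  have hheight : ∀ᶠ P in 𝓝 (x, y), P.2 ∈ Ioo (0 : ℝ) (1 / 8) :=
    continuous_snd.continuousAt.eventually_mem (Ioo_mem_nhds hy.1 hy.2)
  filter_upwards [hbase, hheight] with P hP₁ hP₂
  linarith [hc.eq, hc.secondDiff_le hc.time_mem hP₁ (Ioo_subset_Icc_self hP₂)]

lemma exists_hasTwoJet_secondDiffBarrier_line (hc : IsSecondDiffContact s α ν K R u t x h y)
    (hν : 0 < ν) (hA : 0 ≤ K * ‖h‖ ^ (1 + α))
    (hW : secondDiffProfile s (R * ‖h‖) y ∈ Icc (1 / 2) 1) {v : En n} (hv : ‖v‖ = 1) :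
    ∃ l B, B ≤ K * ‖h‖ ^ (1 + α) * ((4 * ν ^ 2 + 6 * ν) *
        cutoff (3 / 4) (81 / 256) t x ^ (-2 : ℝ) * cutoff (3 / 4) (81 / 256) t x ^ (-ν)) ∧
      HasTwoJet (fun τ : ℝ => secondDiffBarrier s α ν K R t ‖h‖ (x + τ • v) y) 0 l B := by
  obtain ⟨ht₀, ht₁⟩ := hc.time_mem
  obtain ⟨l, B, hB, hjet⟩ := exists_hasTwoJet_rpow_cutoff (c := 3 / 4) (R := 81 / 256) hν
    (by linarith) (by linarith) (by norm_num) hc.cutoff_pos hv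
  set κ := (4 * ν ^ 2 + 6 * ν) * cutoff (3 / 4) (81 / 256) t x ^ (-2 : ℝ) *
    cutoff (3 / 4) (81 / 256) t x ^ (-ν)
  have hκ : 0 ≤ κ := by
    have := hc.cutoff_pos
    positivity
  refine ⟨_, _, ?_, (hjet.const_mul (K * ‖h‖ ^ (1 + α) *
    secondDiffProfile s (R * ‖h‖) y)).congr_of_eventuallyEq
      (.of_forall fun τ => by simp only [secondDiffBarrier]; ring)⟩
  have hW₀ : 0 ≤ secondDiffProfile s (R * ‖h‖) y := by linarith [hW.1]
  calc K * ‖h‖ ^ (1 + α) * secondDiffProfile s (R * ‖h‖) y * B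
      ≤ K * ‖h‖ ^ (1 + α) * 1 * κ := by
        exact (mul_le_mul_of_nonneg_left hB (by positivity)).trans
          (mul_le_mul_of_nonneg_right (mul_le_mul_of_nonneg_left hW.2 hA) hκ)
    _ = K * ‖h‖ ^ (1 + α) * κ := by rw [mul_one]

lemma inv_sq_le_of_interior (hc : IsSecondDiffContact s α ν K R u t x h y)
    (hu : IsBoxSolution (1 - 2 * s) γ M U₀ F b f u) (hs : 0 ≤ s) (hs₁ : s ≤ 1 / 2) (hν : 0 < ν)
    (hK : 0 < K) (hy : y ∈ Ioo (0 : ℝ) (1 / 8)) (hyR : y < R * ‖h‖) :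
    1 / 2 / (R * ‖h‖) ^ 2 ≤
      n * ((4 * ν ^ 2 + 6 * ν) * cutoff (3 / 4) (81 / 256) t x ^ (-2 : ℝ)) := by
  have hθ := hc.cutoff_pos
  have hh := hc.norm_step_mem.1
  have hρ : 0 < R * ‖h‖ := hy.1.trans hyR
  have hW := secondDiffProfile_mem_Icc hs hρ hy.1.le
  obtain ⟨y₁, y₂, hprofile, hop, -⟩ := exists_hasTwoJet_secondDiffProfile (s := s) hy.1 hyR
  set ψ := cutoff (3 / 4) (81 / 256) t x ^ (-ν) with hψ_def
  set κ := (4 * ν ^ 2 + 6 * ν) * cutoff (3 / 4) (81 / 256) t x ^ (-2 : ℝ)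
  set A := K * ‖h‖ ^ (1 + α)
  have hA : 0 < A := by positivity
  have htouch := (hu.hasAHarmonicJet_secondDiff (Ioc_subset_Icc_self hc.time_mem_Ioc)
    (by linarith [hc.norm_base_lt]) (by linarith [hc.norm_step_mem.2])
    ⟨hy.1, by linarith [hy.2]⟩).nonneg_of_isLocalMax_sub (hc.isLocalMax hy)
    (fun v hv => hc.exists_hasTwoJet_secondDiffBarrier_line hν hA.le hW hv)
    ((hprofile.const_mul (K * ψ * ‖h‖ ^ (1 + α))).congr_of_eventuallyEq
      (.of_forall fun η => by simp only [secondDiffBarrier, hψ_def]; ring))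
  have hscaled : 0 ≤ A * ψ * (n * κ - (1 - s) / (R * ‖h‖) ^ 2) := by
    calc (0 : ℝ) ≤ n * (A * (κ * ψ)) + A * ψ * (y₂ + (1 - 2 * s) / y * y₁) := by linarith
      _ = A * ψ * (n * κ - (1 - s) / (R * ‖h‖) ^ 2) := by rw [hop]; ring
  calc 1 / 2 / (R * ‖h‖) ^ 2 ≤ (1 - s) / (R * ‖h‖) ^ 2 := by gcongr; linarith
    _ ≤ n * κ := sub_nonneg.1 (nonneg_of_mul_nonneg_right hscaled (by positivity))

lemma normal_le (hc : IsSecondDiffContact s α ν K R u t x h 0) (hs : 0 < s) (hs₁ : s < 1 / 2)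
    (hR : 0 < R) {Dt L : ℝ} {G : En n →L[ℝ] ℝ}
    (hjet : HasBoundaryJet (1 - 2 * s) (fun τ => secondDiff (u τ) h) t x Dt L G) :
    L ≤ K * ‖h‖ ^ (1 + α) * cutoff (3 / 4) (81 / 256) t x ^ (-ν) *
      -(s / 2 * (R * ‖h‖) ^ (-(2 * s))) := by
  have hρ : 0 < R * ‖h‖ := mul_pos hR hc.norm_step_mem.1
  obtain ⟨W', hW', hlim⟩ := exists_weightedDeriv_secondDiffProfile hs hs₁ hρ
  have hbarrier (y : ℝ) : secondDiffBarrier s α ν K R t ‖h‖ x y =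
      0 + K * ‖h‖ ^ (1 + α) * cutoff (3 / 4) (81 / 256) t x ^ (-ν) *
        secondDiffProfile s (R * ‖h‖) y := by
    rw [secondDiffBarrier]
    ring
  have hη {y : ℝ} (hy : y ∈ Ioo 0 (min (R * ‖h‖) (1 / 8))) : y < R * ‖h‖ ∧ y < 1 / 8 :=
    lt_min_iff.1 hy.2
  exact hjet.normal_le_of_contact (δ := 0) (η := min (R * ‖h‖) (1 / 8)) (by positivity)
    ((min_le_right _ _).trans (by norm_num))
    ((continuousOn_secondDiffProfile hs.le).comp (f := fun y : ℝ => (R * ‖h‖, y)) (by fun_prop)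
      fun _ _ => hρ)
    ⟨W', fun y hy => hW' y ⟨hy.1, (hη hy).1⟩, hlim⟩
    (fun y hy => (hc.secondDiff_le hc.time_mem hc.norm_base_lt
      ⟨hy.1.le, (hη hy).2.le⟩).trans_eq (hbarrier y)) (hc.eq.trans (hbarrier 0))

lemma time_ge_and_abs_tangential_le (hc : IsSecondDiffContact s α ν K R u t x h 0) (hs : 0 < s)
    (hν : 0 < ν) (hK : 0 ≤ K) (hR : 0 < R) {a Dt L : ℝ} {G : En n →L[ℝ] ℝ}
    (hjet : HasBoundaryJet a (fun τ => secondDiff (u τ) h) t x Dt L G) (B : En n) :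
    -(K * ‖h‖ ^ (1 + α) * (ν * cutoff (3 / 4) (81 / 256) t x ^ (-ν) /
        cutoff (3 / 4) (81 / 256) t x)) ≤ Dt ∧
      |G B| ≤ K * ‖h‖ ^ (1 + α) * (2 * ν * ‖B‖ * cutoff (3 / 4) (81 / 256) t x ^ (-ν) /
        cutoff (3 / 4) (81 / 256) t x) := by
  obtain ⟨ht₀, ht₁⟩ := hc.time_mem
  have hh := hc.norm_step_mem.1
  have hA : 0 ≤ K * ‖h‖ ^ (1 + α) := by positivity
  have hbarrier (τ : ℝ) (z : En n) : secondDiffBarrier s α ν K R τ ‖h‖ z 0 =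
      0 + K * ‖h‖ ^ (1 + α) * cutoff (3 / 4) (81 / 256) τ z ^ (-ν) := by
    rw [secondDiffBarrier, secondDiffProfile_zero hs (by positivity)]
    ring
  have htouch := hc.eq.trans (hbarrier t x)
  refine ⟨hjet.time_ge_of_contact (c := 3 / 4) hν (by norm_num) hc.cutoff_pos hA ?_ htouch,
    hjet.abs_tangential_le_of_contact (c := 3 / 4) hν (by linarith) (by linarith) (by norm_num)
      hc.cutoff_pos hA ?_ htouch B⟩
  · filter_upwards [Ioo_mem_nhdsLT ht₀] with τ hτ
    exact (hc.secondDiff_le ⟨hτ.1, hτ.2.le.trans ht₁⟩ hc.norm_base_lt hc.height_mem).trans_eq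
      (hbarrier τ x)
  · filter_upwards [continuous_norm.continuousAt.eventually_lt_const hc.norm_base_lt] with z hz
    exact (hc.secondDiff_le hc.time_mem hz hc.height_mem).trans_eq (hbarrier t z)

lemma profile_le_of_boundary (hc : IsSecondDiffContact s α ν K R u t x h 0)
    (hu : IsBoxSolution (1 - 2 * s) γ M U₀ F b f u) (hs : 0 < s) (hs₁ : s < 1 / 2) (hν : 0 < ν)
    (hK : 0 < K) (hR : 0 < R) {Λ : ℝ} (hΛ : ∀ z, ‖z‖ < 5 / 8 → ∀ G : En n →L[ℝ] ℝ,
      HasFDerivAt (fun z => u t (z, 0)) G z → ‖G‖ ≤ Λ) :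
    K * ‖h‖ ^ (1 + α) * cutoff (3 / 4) (81 / 256) t x ^ (-ν) *
        (s / 2 * (R * ‖h‖) ^ (-(2 * s))) ≤
      (2 * F + 2 * M * Λ) * ‖h‖ ^ γ + K * ‖h‖ ^ (1 + α) *
        cutoff (3 / 4) (81 / 256) t x ^ (-ν) * (ν * (1 + 2 * M)) /
          cutoff (3 / 4) (81 / 256) t x := by
  obtain ⟨Dt, L, G, hjet, heq⟩ := hu.exists_hasBoundaryJet_secondDiff hc.time_mem_Ioc
    hc.norm_base_lt (hc.norm_step_mem.2.trans (by norm_num)) hΛ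
  have hb := hu.norm_drift_le t (Ioc_subset_Icc_self hc.time_mem_Ioc) x
    (hc.norm_base_lt.le.trans (by norm_num))
  have hnormal := hc.normal_le hs hs₁ hR hjet
  obtain ⟨htime, htangential⟩ := hc.time_ge_and_abs_tangential_le hs hν hK.le hR hjet (b t x)
  have hθ := hc.cutoff_pos
  set θ := cutoff (3 / 4) (81 / 256) t x
  set A := K * ‖h‖ ^ (1 + α)
  have htangential' : A * (2 * ν * ‖b t x‖ * θ ^ (-ν) / θ) ≤
      A * (2 * ν * M * θ ^ (-ν) / θ) := by gcongr
  linarith [neg_abs_le (G (b t x)), show A * θ ^ (-ν) * (ν * (1 + 2 * M)) / θ =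
    A * (ν * θ ^ (-ν) / θ) + A * (2 * ν * M * θ ^ (-ν) / θ) by ring]

end IsSecondDiffContact

/-- Conditions on the multiple `N` of the step used by the concavity argument, on the ratio `R` of
the height of the profile to the step, and on the scale `c₀`, under which the second-difference
barrier cannot touch away from the boundary (`rpow_le`, `le_ratio`), within the height of the
profile (`interior_lt`), or on the boundary (`boundary_le`). -/
structure IsSecondDiffScale (n : ℕ) (s α M : ℝ) (N : ℕ) (R c₀ : ℝ) : Prop where
  natCast_pos : (0 : ℝ) < N
  rpow_le : 16 * (N : ℝ) ^ (1 + α) ≤ (N : ℝ) ^ 2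
  four_mul_le_ratio : 4 * (N : ℝ) ≤ R
  le_ratio : 16 * (2 : ℝ) ^ (1 / s) * (4 * n + 12) * N ≤ R
  pos : 0 < c₀
  ratio_mul_le : 16 * R * c₀ ≤ 1
  interior_lt : n * (4 * (1 / s) ^ 2 + 6 * (1 / s)) * (2 * (R * c₀) ^ 2) < 1
  boundary_le : 1 / s * (1 + 2 * M) * c₀ ≤ s / 4 * R ^ (-(2 * s))

lemma exists_natCast_rpow_le {α : ℝ} (hα : α < 1) (A : ℝ) :
    ∃ N : ℕ, (0 : ℝ) < N ∧ A * (N : ℝ) ^ (1 + α) ≤ (N : ℝ) ^ 2 := by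
  have hlim : Tendsto (fun N : ℕ => (N : ℝ) ^ (1 - α)) atTop atTop :=
    (tendsto_rpow_atTop (sub_pos.2 hα)).comp tendsto_natCast_atTop_atTop
  obtain ⟨N, hN, hN₀⟩ := ((hlim.eventually_ge_atTop A).and (eventually_gt_atTop 0)).exists
  have hN₀' : (0 : ℝ) < N := by exact_mod_cast hN₀
  refine ⟨N, hN₀', ?_⟩
  calc A * (N : ℝ) ^ (1 + α) ≤ (N : ℝ) ^ (1 - α) * (N : ℝ) ^ (1 + α) := by gcongr
    _ = (N : ℝ) ^ 2 := by
        rw [← Real.rpow_add hN₀', ← Real.rpow_two]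
        ring_nf

lemma exists_isSecondDiffScale (n : ℕ) {s α : ℝ} (M : ℝ) (hs : 0 < s) (hα : α < 1) :
    ∃ N R c₀, IsSecondDiffScale n s α M N R c₀ := by
  obtain ⟨N, hN, hNα⟩ := exists_natCast_rpow_le hα 16
  set R : ℝ := 4 * N + 16 * (2 : ℝ) ^ (1 / s) * (4 * n + 12) * N
  have hfar : 0 ≤ 16 * (2 : ℝ) ^ (1 / s) * (4 * n + 12) * N := by positivity
  have hratio : ∀ᶠ c in 𝓝 (0 : ℝ), 16 * R * c < 1 :=
    (by fun_prop : Continuous fun c : ℝ => 16 * R * c).continuousAt.eventually_lt_const (by simp)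
  have hinterior : ∀ᶠ c in 𝓝 (0 : ℝ),
      n * (4 * (1 / s) ^ 2 + 6 * (1 / s)) * (2 * (R * c) ^ 2) < 1 :=
    (by fun_prop : Continuous fun c : ℝ =>
      n * (4 * (1 / s) ^ 2 + 6 * (1 / s)) * (2 * (R * c) ^ 2)).continuousAt.eventually_lt_const
      (by simp)
  have hboundary : ∀ᶠ c in 𝓝 (0 : ℝ), 1 / s * (1 + 2 * M) * c < s / 4 * R ^ (-(2 * s)) :=
    (by fun_prop : Continuous fun c : ℝ =>
      1 / s * (1 + 2 * M) * c).continuousAt.eventually_lt_const (by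
        dsimp only
        rw [mul_zero]
        positivity)
  obtain ⟨c, hc, hc₁, hc₂, hc₃⟩ := ((eventually_mem_nhdsWithin (a := (0 : ℝ)) (s := Ioi 0)).and
    ((hratio.and (hinterior.and hboundary)).filter_mono nhdsWithin_le_nhds)).exists
  exact ⟨N, R, c, hN, hNα, by linarith, by linarith, hc, hc₁.le, hc₂, hc₃.le⟩

namespace IsSecondDiffScale

variable {n N : ℕ} {s α M R c₀ θ r : ℝ}

lemma ratio_pos (hS : IsSecondDiffScale n s α M N R c₀) : 0 < R := by
  linarith [hS.natCast_pos, hS.four_mul_le_ratio]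

lemma ratio_mul_le_cutoff (hS : IsSecondDiffScale n s α M N R c₀) (hθ : 0 ≤ θ)
    (hr : r ≤ c₀ * θ) : 16 * (R * r) ≤ θ := by
  have hR := hS.ratio_pos
  calc 16 * (R * r) ≤ 16 * (R * (c₀ * θ)) := by gcongr
    _ = 16 * R * c₀ * θ := by ring
    _ ≤ θ := mul_le_of_le_one_left hθ hS.ratio_mul_le

lemma cutoff_lt_inv_sq (hS : IsSecondDiffScale n s α M N R c₀) (hs : 0 ≤ s) (hθ : 0 < θ)
    (hr : 0 < r) (hrθ : r ≤ c₀ * θ) :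
    n * ((4 * (1 / s) ^ 2 + 6 * (1 / s)) * θ ^ (-2 : ℝ)) < 1 / 2 / (R * r) ^ 2 := by
  have hR := hS.ratio_pos
  rw [lt_div_iff₀ (by positivity), Real.rpow_neg hθ.le, Real.rpow_two]
  calc n * ((4 * (1 / s) ^ 2 + 6 * (1 / s)) * (θ ^ 2)⁻¹) * (R * r) ^ 2
      ≤ n * ((4 * (1 / s) ^ 2 + 6 * (1 / s)) * (θ ^ 2)⁻¹) * (R * (c₀ * θ)) ^ 2 := by gcongr
    _ = n * (4 * (1 / s) ^ 2 + 6 * (1 / s)) * (2 * (R * c₀) ^ 2) / 2 := by field_simp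
    _ < 1 / 2 := by linarith [hS.interior_lt]

lemma boundary_terms_lt_profile (hS : IsSecondDiffScale n s α M N R c₀) (hs : 0 < s) (hM : 0 ≤ M)
    (hθ : 0 < θ) (hr : 0 < r) (hrθ : r ^ (2 * s) ≤ c₀ * θ) {K V ψ : ℝ} (hK : 0 < K) (hψ : 1 ≤ ψ)
    (hV : V < K * (s / 4 * R ^ (-(2 * s)))) :
    V * r ^ (1 - 2 * s + α) + K * r ^ (1 + α) * ψ * (1 / s * (1 + 2 * M)) / θ <
      K * r ^ (1 + α) * ψ * (s / 2 * (R * r) ^ (-(2 * s))) := by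
  have hR := hS.ratio_pos
  have hr_add : r ^ (1 + α) = r ^ (1 - 2 * s + α) * r ^ (2 * s) := by
    rw [← Real.rpow_add hr]
    ring_nf
  have hr_neg : r ^ (2 * s) * r ^ (-(2 * s)) = 1 := by
    rw [← Real.rpow_add hr, add_neg_cancel, Real.rpow_zero]
  have hcutoff : 1 / s * (1 + 2 * M) * (r ^ (2 * s) / θ) ≤ s / 4 * R ^ (-(2 * s)) := by
    refine le_trans ?_ hS.boundary_le
    gcongr
    exact (div_le_iff₀ hθ).2 hrθ
  have hq : 0 < r ^ (1 - 2 * s + α) := Real.rpow_pos_of_pos hr _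
  rw [hr_add, Real.mul_rpow hR.le hr.le]
  set q := r ^ (1 - 2 * s + α)
  set P := s / 4 * R ^ (-(2 * s)) with hP
  calc V * q + K * (q * r ^ (2 * s)) * ψ * (1 / s * (1 + 2 * M)) / θ
      = q * (V + K * ψ * (1 / s * (1 + 2 * M) * (r ^ (2 * s) / θ))) := by ring
    _ < q * (K * ψ * P + K * ψ * P) := by
        refine mul_lt_mul_of_pos_left (add_lt_add_of_lt_of_le ?_ (by gcongr)) hq
        exact hV.trans_le (by gcongr; exact le_mul_of_one_le_right hK.le hψ)
    _ = K * (q * r ^ (2 * s)) * ψ * (s / 2 * (R ^ (-(2 * s)) * r ^ (-(2 * s)))) := by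
        rw [hP]
        linear_combination -(q * K * ψ * (s / 2 * R ^ (-(2 * s)))) * hr_neg

lemma concavity_lt (hS : IsSecondDiffScale n s α M N R c₀) {A : ℝ} (hA : 0 < A) :
    (N : ℝ) ^ (1 + α) * A <
      (N : ℝ) ^ 2 * (A / 2 - 2 ^ (1 / s) * A * (4 * n + 12) * (2 * N / R)) := by
  have hR := hS.ratio_pos
  have hN := hS.natCast_pos
  have herror : 2 ^ (1 / s) * A * (4 * n + 12) * (2 * N / R) ≤ A / 8 := by
    calc 2 ^ (1 / s) * A * (4 * n + 12) * (2 * N / R)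
        = 16 * (2 : ℝ) ^ (1 / s) * (4 * n + 12) * N * (A / (8 * R)) := by
          field_simp
          norm_num
      _ ≤ R * (A / (8 * R)) := by
          gcongr
          exact hS.le_ratio
      _ = A / 8 := by field_simp
  calc (N : ℝ) ^ (1 + α) * A ≤ (N : ℝ) ^ 2 / 16 * A := by
        gcongr
        linarith [hS.rpow_le]
    _ < (N : ℝ) ^ 2 * (A / 2 - A / 8) := by
        linarith [mul_pos (pow_pos hN 2) hA]
    _ ≤ _ := by gcongr

end IsSecondDiffScale

lemma IsBoxSolution.continuousOn_secondDiff_slice {n : ℕ} {a γ M U₀ F t : ℝ} {b : ℝ → En n → En n}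
    {f : ℝ → En n → ℝ} {u : ℝ → En n × ℝ → ℝ} {h : En n} {S : Set (En n × ℝ)}
    (hu : IsBoxSolution a γ M U₀ F b f u) (ht : t ∈ Icc (-1 : ℝ) 0) (hh : ‖h‖ ≤ 1 / 16)
    (hS : ∀ p ∈ S, ‖p.1‖ ≤ 3 / 4 ∧ p.2 ∈ Icc (0 : ℝ) (1 / 8)) :
    ContinuousOn (secondDiff (u t) h) S :=
  (hu.continuousOn_secondDiff (T := 1) (ρ := ‖h‖) (σ := 1 / 16) (η := 1 / 8) le_rfl le_rfl le_rfl
    (by norm_num)).comp (f := fun p : En n × ℝ => (t, p.1, h, p.2)) (by fun_prop) fun p hp =>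
      ⟨ht, (hS p hp).1, ⟨le_rfl, hh⟩, (hS p hp).2⟩

namespace IsSecondDiffContact

variable {n N : ℕ} {s α K R t y γ M U₀ F c₀ : ℝ} {b : ℝ → En n → En n} {f : ℝ → En n → ℝ}
  {u : ℝ → En n × ℝ → ℝ} {x h : En n}

lemma cutoff_le_one {ν : ℝ} (hc : IsSecondDiffContact s α ν K R u t x h y) :
    cutoff (3 / 4) (81 / 256) t x ≤ 1 :=
  _root_.cutoff_le_one (by linarith [hc.time_mem.1]) (by linarith [hc.time_mem.2]) (by norm_num)
    hc.cutoff_pos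

lemma mul_half_sq_le_secondDiff {ν : ℝ} (hc : IsSecondDiffContact s α ν K R u t x h y)
    (hs : 0 ≤ s) (hα : α ≤ 1) (hK : 0 ≤ K) (hR : 0 < R) :
    K * cutoff (3 / 4) (81 / 256) t x ^ (-ν) * (‖h‖ ^ 2 / 2) ≤ secondDiff (u t) h (x, y) := by
  obtain ⟨hh, hh₁⟩ := hc.norm_step_mem
  have hW := (secondDiffProfile_mem_Icc hs (mul_pos hR hh) hc.height_mem.1).1
  have hpow : ‖h‖ ^ 2 ≤ ‖h‖ ^ (1 + α) := by
    rw [← Real.rpow_two]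
    exact Real.rpow_le_rpow_of_exponent_ge hh (by linarith) (by linarith)
  rw [hc.eq, secondDiffBarrier, div_eq_mul_one_div (‖h‖ ^ 2)]
  exact mul_le_mul_of_nonneg_left
    (mul_le_mul hpow hW (by norm_num) (Real.rpow_nonneg hh.le _))
    (mul_nonneg hK (Real.rpow_nonneg hc.cutoff_pos.le _))

lemma step_rpow_le (hc : IsSecondDiffContact s α (1 / s) K R u t x h y)
    (hu : IsBoxSolution (1 - 2 * s) γ M U₀ F b f u) (hs : 0 < s) (hα : α ≤ 1) (hK : 0 ≤ K)
    (hR : 0 < R) (hc₀ : 0 < c₀) (hbig : 8 * U₀ < K * c₀ ^ (1 / s)) :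
    ‖h‖ ^ (2 * s) ≤ c₀ * cutoff (3 / 4) (81 / 256) t x := by
  obtain ⟨hh, hh₁⟩ := hc.norm_step_mem
  by_contra! hlt
  rw [Real.rpow_mul (norm_nonneg h), Real.rpow_two] at hlt
  have hpow := rpow_div_le_rpow_neg_of_mul_lt_rpow hs hc₀ hc.cutoff_pos (by positivity) hlt
  have hup : secondDiff (u t) h (x, y) ≤ 4 * U₀ := (le_abs_self _).trans
    (hu.abs_secondDiff_le (Ioc_subset_Icc_self hc.time_mem_Ioc) (by linarith [hc.norm_base_lt])
      (hh₁.trans (by norm_num)) ⟨hc.height_mem.1, by linarith [hc.height_mem.2]⟩)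
  have hlow : K * c₀ ^ (1 / s) / 2 ≤ secondDiff (u t) h (x, y) := by
    calc K * c₀ ^ (1 / s) / 2 = K * (c₀ ^ (1 / s) / ‖h‖ ^ 2) * (‖h‖ ^ 2 / 2) := by field_simp
      _ ≤ K * cutoff (3 / 4) (81 / 256) t x ^ (-(1 / s)) * (‖h‖ ^ 2 / 2) := by gcongr
      _ ≤ _ := hc.mul_half_sq_le_secondDiff hs.le hα hK hR
  linarith

lemma height_lt (hc : IsSecondDiffContact s α (1 / s) K R u t x h y)
    (hu : IsBoxSolution (1 - 2 * s) γ M U₀ F b f u) (hs : 0 < s) (hs₁ : s ≤ 1 / 2) (hα : α ≤ 1)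
    (hK : 0 ≤ K) (hR : 0 < R) (hbig : 4096 * (4 * n + 12) ^ 2 * U₀ < K) : y < 1 / 16 := by
  obtain ⟨hh, hh₁⟩ := hc.norm_step_mem
  by_contra! hy
  have hup := (le_abs_self _).trans (hu.abs_secondDiff_le_of_height_ge (by linarith) (by linarith)
    (Ioc_subset_Icc_self hc.time_mem_Ioc) hc.norm_base_lt.le hh₁ ⟨hy, hc.height_mem.2⟩)
  have hψ : 1 ≤ cutoff (3 / 4) (81 / 256) t x ^ (-(1 / s)) :=
    Real.one_le_rpow_of_pos_of_le_one_of_nonpos hc.cutoff_pos hc.cutoff_le_one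
      (neg_nonpos.2 (one_div_nonneg.2 hs.le))
  have hlow : K * (‖h‖ ^ 2 / 2) ≤ secondDiff (u t) h (x, y) := by
    refine le_trans ?_ (hc.mul_half_sq_le_secondDiff hs.le hα hK hR)
    gcongr
    exact le_mul_of_one_le_right hK hψ
  have hlt : 4096 * (4 * n + 12) ^ 2 * U₀ * ‖h‖ ^ 2 < K * ‖h‖ ^ 2 := by gcongr
  linarith

lemma abs_secondDiff_le_of_near (hc : IsSecondDiffContact s α (1 / s) K R u t x h y) (hs : 0 < s)
    (hK : 0 ≤ K) (hR : 0 < R) (hsmall : 16 * (R * ‖h‖) ≤ cutoff (3 / 4) (81 / 256) t x)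
    {z : En n} (hz : ‖z - x‖ ≤ R * ‖h‖) {η : ℝ} (hη : η ∈ Icc (0 : ℝ) (1 / 8)) :
    |secondDiff (u t) h (z, η)| ≤
      2 ^ (1 / s) * (K * cutoff (3 / 4) (81 / 256) t x ^ (-(1 / s)) * ‖h‖ ^ (1 + α)) := by
  obtain ⟨hh, hh₁⟩ := hc.norm_step_mem
  obtain ⟨ht₀, ht₁⟩ := hc.time_mem
  have hθ := hc.cutoff_pos
  have hz₁ : ‖z‖ ≤ 1 := by
    linarith [hc.cutoff_le_one, hc.norm_base_lt, norm_le_norm_add_norm_sub' z x]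
  have hhalf : cutoff (3 / 4) (81 / 256) t x / 2 ≤ cutoff (3 / 4) (81 / 256) t z := by
    linarith [cutoff_sub_le (c := 3 / 4) (R := 81 / 256) (t := t) (m := x) (z := z) (by linarith)
      (by linarith) (by linarith [hc.norm_base_lt]) hz₁]
  have hz₂ := (lt_and_norm_lt_of_cutoff_pos (r := 9 / 16) (by norm_num) (by norm_num) ht₀.le
    ((half_pos hθ).trans_le hhalf)).2
  have hpow : cutoff (3 / 4) (81 / 256) t z ^ (-(1 / s)) ≤
      2 ^ (1 / s) * cutoff (3 / 4) (81 / 256) t x ^ (-(1 / s)) := by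
    calc cutoff (3 / 4) (81 / 256) t z ^ (-(1 / s))
        ≤ (cutoff (3 / 4) (81 / 256) t x / 2) ^ (-(1 / s)) :=
          Real.rpow_le_rpow_of_nonpos (half_pos hθ) hhalf (neg_nonpos.2 (one_div_nonneg.2 hs.le))
      _ = 2 ^ (1 / s) * cutoff (3 / 4) (81 / 256) t x ^ (-(1 / s)) := by
          rw [Real.div_rpow hθ.le zero_le_two, Real.rpow_neg zero_le_two, div_inv_eq_mul, mul_comm]
  obtain ⟨hW₀, hW⟩ := secondDiffProfile_mem_Icc hs.le (mul_pos hR hh) hη.1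
  replace hW₀ := one_half_pos.le.trans hW₀
  calc |secondDiff (u t) h (z, η)| ≤ secondDiffBarrier s α (1 / s) K R t ‖h‖ z η :=
        hc.abs_le t hc.time_mem z hz₂ h ⟨le_rfl, hh₁⟩ η hη
    _ ≤ K * (2 ^ (1 / s) * cutoff (3 / 4) (81 / 256) t x ^ (-(1 / s))) * (‖h‖ ^ (1 + α) * 1) := by
        rw [secondDiffBarrier]
        exact mul_le_mul (mul_le_mul_of_nonneg_left hpow hK)
          (mul_le_mul_of_nonneg_left hW (Real.rpow_nonneg hh.le _))
          (mul_nonneg (Real.rpow_nonneg hh.le _) hW₀) (by positivity)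
    _ = _ := by ring

lemma secondDiff_natCast_smul_le {ν : ℝ} (hc : IsSecondDiffContact s α ν K R u t x h y)
    (hs : 0 ≤ s) (hK : 0 ≤ K) (hR : 0 < R) (hN : (0 : ℝ) < N) (hNh : N * ‖h‖ ≤ 1 / 64) :
    secondDiff (u t) ((N : ℝ) • h) (x, y) ≤ (N : ℝ) ^ (1 + α) *
      (K * cutoff (3 / 4) (81 / 256) t x ^ (-ν) * ‖h‖ ^ (1 + α)) := by
  have hh := hc.norm_step_mem.1
  have hnorm : ‖(N : ℝ) • h‖ = N * ‖h‖ := by rw [norm_smul, Real.norm_natCast]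
  have hN₁ : (1 : ℝ) ≤ N := by exact_mod_cast Nat.cast_pos.1 hN
  have hW := (secondDiffProfile_mem_Icc (s := s) hs (mul_pos hR (mul_pos hN hh))
    hc.height_mem.1).2
  have hψ := Real.rpow_nonneg hc.cutoff_pos.le (-ν)
  calc secondDiff (u t) ((N : ℝ) • h) (x, y)
      ≤ secondDiffBarrier s α ν K R t ‖(N : ℝ) • h‖ x y :=
        (le_abs_self _).trans (hc.abs_le t hc.time_mem x hc.norm_base_lt _
          (by rw [hnorm]; exact ⟨le_mul_of_one_le_left hh.le hN₁, hNh⟩) y hc.height_mem)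
    _ ≤ K * cutoff (3 / 4) (81 / 256) t x ^ (-ν) * ((N * ‖h‖) ^ (1 + α) * 1) := by
        rw [secondDiffBarrier, hnorm]
        gcongr
    _ = _ := by
        rw [Real.mul_rpow hN.le hh.le]
        ring

lemma height_lt_ratio_mul (hc : IsSecondDiffContact s α (1 / s) K R u t x h y)
    (hu : IsBoxSolution (1 - 2 * s) γ M U₀ F b f u) (hS : IsSecondDiffScale n s α M N R c₀)
    (hs : 0 < s) (hs₁ : s ≤ 1 / 2) (hK : 0 < K)
    (hsmall : 16 * (R * ‖h‖) ≤ cutoff (3 / 4) (81 / 256) t x) (hy : y < 1 / 16) :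
    y < R * ‖h‖ := by
  by_contra! hyR
  obtain ⟨hh, hh₁⟩ := hc.norm_step_mem
  have hR := hS.ratio_pos
  have hRh : 0 < R * ‖h‖ := mul_pos hR hh
  have hθ := hc.cutoff_pos
  have hNh : N * ‖h‖ ≤ R * ‖h‖ / 4 := by
    linarith [mul_le_mul_of_nonneg_right hS.four_mul_le_ratio hh.le]
  have hA : 0 < K * cutoff (3 / 4) (81 / 256) t x ^ (-(1 / s)) * ‖h‖ ^ (1 + α) := by positivity
  have hbox : ∀ p ∈ Metric.closedBall x (2 * (R * ‖h‖ / 2)) ×ˢ Metric.closedBall y (R * ‖h‖ / 2),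
      ‖p.1 - x‖ ≤ R * ‖h‖ ∧ ‖p.1‖ ≤ 3 / 4 ∧ p.2 ∈ Ioc (0 : ℝ) (1 / 8) := by
    rintro ⟨z, η⟩ ⟨hz, hη⟩
    rw [Real.closedBall_eq_Icc] at hη
    have hz' : ‖z - x‖ ≤ R * ‖h‖ := by
      linarith [mem_closedBall_iff_norm.1 hz]
    exact ⟨hz', by linarith [hc.norm_base_lt, norm_le_norm_add_norm_sub' z x],
      by linarith [hη.1], by linarith [hη.2]⟩
  have hgrowth := sq_mul_secondDiff_sub_le (by linarith) (by linarith) (half_pos hRh)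
    (by linarith) (by positivity) (fun p hp => hu.hasAHarmonicJet_secondDiff
      (Ioc_subset_Icc_self hc.time_mem_Ioc) (hbox p hp).2.1 (by linarith)
      ⟨(hbox p hp).2.2.1, by linarith [(hbox p hp).2.2.2]⟩)
    (hu.continuousOn_secondDiff_slice (Ioc_subset_Icc_self hc.time_mem_Ioc) (by linarith)
      fun p hp => ⟨(hbox p hp).2.1, Ioc_subset_Icc_self (hbox p hp).2.2⟩)
    (fun p hp => hc.abs_secondDiff_le_of_near hs hK.le hR hsmall (hbox p hp).1
      (Ioc_subset_Icc_self (hbox p hp).2.2)) (N := N) (by linarith)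
  have hcontact : secondDiff (u t) h (x, y) =
      K * cutoff (3 / 4) (81 / 256) t x ^ (-(1 / s)) * ‖h‖ ^ (1 + α) / 2 := by
    rw [hc.eq, secondDiffBarrier, secondDiffProfile_of_le hRh hyR]
    ring
  have hratio : N * ‖h‖ / (R * ‖h‖ / 2) = 2 * N / R := by field_simp
  rw [hcontact, hratio] at hgrowth
  exact (hgrowth.trans (hc.secondDiff_natCast_smul_le hs.le hK.le hR hS.natCast_pos
    (by linarith))).not_gt (hS.concavity_lt hA)

end IsSecondDiffContact

theorem IsBoxSolution.not_isSecondDiffContact {n N : ℕ} {s α M U₀ F c₀ K R t y Λ : ℝ}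
    {x h : En n} {b : ℝ → En n → En n} {f : ℝ → En n → ℝ} {u : ℝ → En n × ℝ → ℝ}
    (hu : IsBoxSolution (1 - 2 * s) (1 - 2 * s + α) M U₀ F b f u)
    (hS : IsSecondDiffScale n s α M N R c₀) (hs : 0 < s) (hs₁ : s < 1 / 2) (hα : α ≤ 1)
    (hM : 0 ≤ M) (hΛ : ∀ z, ‖z‖ < 5 / 8 → ∀ G : En n →L[ℝ] ℝ,
      HasFDerivAt (fun z => u t (z, 0)) G z → ‖G‖ ≤ Λ) (hK : 0 < K)
    (hstep : 8 * U₀ < K * c₀ ^ (1 / s)) (htop : 4096 * (4 * n + 12) ^ 2 * U₀ < K)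
    (hbottom : 2 * F + 2 * M * Λ < K * (s / 4 * R ^ (-(2 * s)))) :
    ¬ IsSecondDiffContact s α (1 / s) K R u t x h y := by
  intro hc
  have hR := hS.ratio_pos
  have hθ := hc.cutoff_pos
  obtain ⟨hh, hh₁⟩ := hc.norm_step_mem
  have hhθ := hc.step_rpow_le hu hs hα hK.le hR hS.pos hstep
  have hhθ' : ‖h‖ ≤ c₀ * cutoff (3 / 4) (81 / 256) t x :=
    (Real.self_le_rpow_of_le_one hh.le (by linarith) (by linarith)).trans hhθ
  have hyR := hc.height_lt_ratio_mul hu hS hs hs₁.le hK (hS.ratio_mul_le_cutoff hθ.le hhθ')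
    (hc.height_lt hu hs hs₁.le hα hK.le hR htop)
  rcases hc.height_mem.1.eq_or_lt with rfl | hy
  · have hψ : 1 ≤ cutoff (3 / 4) (81 / 256) t x ^ (-(1 / s)) :=
      Real.one_le_rpow_of_pos_of_le_one_of_nonpos hθ hc.cutoff_le_one
        (neg_nonpos.2 (one_div_nonneg.2 hs.le))
    exact (hc.profile_le_of_boundary hu hs hs₁ (one_div_pos.2 hs) hK hR hΛ).not_gt
      (hS.boundary_terms_lt_profile hs hM hθ hh hhθ hK hψ hbottom)
  · have hy₁ := hc.height_lt hu hs hs₁.le hα hK.le hR htop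
    exact (hc.inv_sq_le_of_interior hu hs.le hs₁.le (one_div_pos.2 hs) hK
      ⟨hy, by linarith⟩ hyR).not_gt (hS.cutoff_lt_inv_sq hs.le hθ hh hhθ')

lemma continuousOn_rpow_mul_secondDiffProfile {n : ℕ} {s p R : ℝ} (hs : 0 ≤ s) (hR : 0 < R) :
    ContinuousOn (fun P : ℝ × En n × En n × ℝ =>
      ‖P.2.2.1‖ ^ p * secondDiffProfile s (R * ‖P.2.2.1‖) P.2.2.2) {P | P.2.2.1 ≠ 0} :=
  ((by fun_prop : ContinuousOn (fun P : ℝ × En n × En n × ℝ => ‖P.2.2.1‖) _).rpow_const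
    fun _ hP => Or.inl (norm_ne_zero_iff.2 hP)).mul
    ((continuousOn_secondDiffProfile hs).comp (f := fun P : ℝ × En n × En n × ℝ =>
      (R * ‖P.2.2.1‖, P.2.2.2)) (by fun_prop) fun _ hP => mul_pos hR (norm_pos_iff.2 hP))

namespace IsBoxSolution

variable {n N : ℕ} {a s α γ ν M U₀ F C K R c₀ t A y : ℝ} {b : ℝ → En n → En n} {f : ℝ → En n → ℝ}
  {u : ℝ → En n × ℝ → ℝ} {x h : En n}

lemma exists_isSecondDiffContact (hu : IsBoxSolution a γ M U₀ F b f u) (hs : 0 < s)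
    (hν : 0 < ν) (hC : 0 ≤ C) (hR : 0 < R) (ht : t ∈ Icc (-(3 / 4) : ℝ) 0) (hx : ‖x‖ ≤ 9 / 16)
    (hh : ‖h‖ ∈ Ioc (0 : ℝ) (1 / 64))
    (hbig : C * ‖h‖ ^ (1 + α) <
      cutoff (3 / 4) (81 / 256) t x ^ ν * |secondDiff (u t) h (x, 0)|) :
    ∃ K > C, ∃ t' x' h' y', IsSecondDiffContact s α ν K R u t' x' h' y' ∨
      IsSecondDiffContact s α ν K R (fun τ q => -u τ q) t' x' h' y' := by
  have hr : (9 / 16 : ℝ) ^ 2 = 81 / 256 := by norm_num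
  have hpos (P) (hP : P ∈ offsetDomain n (3 / 4) (9 / 16) ‖h‖ (1 / 64) (1 / 8)) :
      0 < ‖P.2.2.1‖ := hh.1.trans_le hP.2.2.1.1
  obtain ⟨K, hK, ⟨t', x', h', y'⟩, ⟨ht', _, hh', hy'⟩, hθ, heq, hle⟩ :=
    exists_isContact_of_isCompact
      (isCompact_offsetDomain n (3 / 4) (9 / 16) ‖h‖ (1 / 64) (1 / 8)) hν hC
      (hu.continuousOn_secondDiff (by norm_num) (by norm_num) (by norm_num) (by norm_num)).abs
      (continuous_cutoff.comp (by fun_prop : Continuous fun P : ℝ × En n × En n × ℝ =>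
        (P.1, P.2.1))).continuousOn
      (fun P ⟨ht, hx, _⟩ => cutoff_nonneg_of_norm_le hr ht.1 hx)
      ((continuousOn_rpow_mul_secondDiffProfile hs.le hR).mono fun P hP =>
        norm_pos_iff.1 (hpos P hP))
      (fun P hP => mul_pos (Real.rpow_pos_of_pos (hpos P hP) _) (one_half_pos.trans_le
        (secondDiffProfile_mem_Icc hs.le (mul_pos hR (hpos P hP)) hP.2.2.2.1).1))
      (P₀ := (t, x, h, 0)) ⟨ht, hx, ⟨le_rfl, hh.2⟩, by norm_num⟩
      (by simpa only [Function.comp_apply, secondDiffProfile_zero hs (mul_pos hR hh.1), mul_one]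
        using hbig)
  obtain ⟨ht'₀, hx'₀⟩ := lt_and_norm_lt_of_cutoff_pos hr (by norm_num) ht'.1 hθ
  have hcontact : ∀ v : ℝ → En n × ℝ → ℝ, (∀ τ e q, |secondDiff (v τ) e q| =
      |secondDiff (u τ) e q|) → 0 ≤ secondDiff (v t') h' (x', y') →
      IsSecondDiffContact s α ν K R v t' x' h' y' := fun v hv hv₀ =>
    ⟨⟨ht'₀, ht'.2⟩, hx'₀, ⟨hh.1.trans_le hh'.1, hh'.2⟩, hy',
      (abs_of_nonneg hv₀).symm.trans ((hv _ _ _).trans heq), fun τ hτ z hz e he η hη =>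
        (hv _ _ _).trans_le (hle (τ, z, e, η) ⟨Ioc_subset_Icc_self hτ, hz.le,
          ⟨hh'.1.trans he.1, he.2⟩, hη⟩ (cutoff_pos_of_norm_lt hr hτ.1 hz))⟩
  refine ⟨K, hK, t', x', h', y', (le_total 0 (secondDiff (u t') h' (x', y'))).imp
    (hcontact u fun _ _ _ => rfl) fun hneg => hcontact _ (fun τ e q => ?_) ?_⟩
  · rw [secondDiff_neg, abs_neg]
  · rw [secondDiff_neg]
    exact neg_nonneg.2 hneg

lemma not_isSecondDiffContact_of_lt
    (hu : IsBoxSolution (1 - 2 * s) (1 - 2 * s + α) M U₀ F b f u)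
    (hS : IsSecondDiffScale n s α M N R c₀) (hs : 0 < s) (hs₁ : s < 1 / 2) (hα : α ≤ 1)
    (hM : 0 ≤ M) (hF : 0 ≤ F) (hgrad : ∀ z, ‖z‖ < 5 / 8 →
      ∀ G : En n →L[ℝ] ℝ, HasFDerivAt (fun z => u t (z, 0)) G z → ‖G‖ ≤ A * (U₀ + F))
    (hC : 0 < C) (hstep : 8 ≤ C * c₀ ^ (1 / s)) (htop : 4096 * (4 * n + 12) ^ 2 ≤ C)
    (hbottom : 2 + 2 * M * A ≤ C * (s / 4 * R ^ (-(2 * s)))) (hK : C * (U₀ + F) < K) :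
    ¬ IsSecondDiffContact s α (1 / s) K R u t x h y := by
  have hU := hu.nonneg
  have hR := hS.ratio_pos
  refine hu.not_isSecondDiffContact hS hs hs₁ hα hM hgrad (lt_of_le_of_lt (by positivity) hK) ?_
    (lt_of_le_of_lt ?_ hK) ?_
  · have hc₀ : 0 < c₀ ^ (1 / s) := Real.rpow_pos_of_pos hS.pos _
    calc 8 * U₀ ≤ C * c₀ ^ (1 / s) * (U₀ + F) := by gcongr; linarith
      _ = C * (U₀ + F) * c₀ ^ (1 / s) := by ring
      _ < K * c₀ ^ (1 / s) := by gcongr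
  · gcongr
    linarith
  · calc 2 * F + 2 * M * (A * (U₀ + F)) ≤ (2 + 2 * M * A) * (U₀ + F) := by linarith
      _ ≤ C * (s / 4 * R ^ (-(2 * s))) * (U₀ + F) := by gcongr
      _ = C * (U₀ + F) * (s / 4 * R ^ (-(2 * s))) := by ring
      _ < K * (s / 4 * R ^ (-(2 * s))) := by gcongr

lemma abs_secondDiff_le_cutoff (hu : IsBoxSolution (1 - 2 * s) (1 - 2 * s + α) M U₀ F b f u)
    (hS : IsSecondDiffScale n s α M N R c₀) (hs : 0 < s) (hs₁ : s < 1 / 2) (hα : α ≤ 1)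
    (hM : 0 ≤ M) (hF : 0 ≤ F) (hgrad : ∀ t ∈ Icc (-(3 / 4) : ℝ) 0, ∀ z, ‖z‖ < 5 / 8 →
      ∀ G : En n →L[ℝ] ℝ, HasFDerivAt (fun z => u t (z, 0)) G z → ‖G‖ ≤ A * (U₀ + F))
    (hC : 0 < C) (hstep : 8 ≤ C * c₀ ^ (1 / s)) (htop : 4096 * (4 * n + 12) ^ 2 ≤ C)
    (hbottom : 2 + 2 * M * A ≤ C * (s / 4 * R ^ (-(2 * s))))
    (ht : t ∈ Ioc (-(3 / 4) : ℝ) 0) (hx : ‖x‖ < 9 / 16) (hh : ‖h‖ ∈ Ioc (0 : ℝ) (1 / 64)) :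
    |secondDiff (u t) h (x, 0)| ≤
      cutoff (3 / 4) (81 / 256) t x ^ (-(1 / s)) * (C * (U₀ + F) * ‖h‖ ^ (1 + α)) := by
  have hU := hu.nonneg
  have hθ : 0 < cutoff (3 / 4) (81 / 256) t x :=
    cutoff_pos_of_norm_lt (r := 9 / 16) (by norm_num) ht.1 hx
  rw [Real.rpow_neg hθ.le, ← div_eq_inv_mul, le_div_iff₀' (Real.rpow_pos_of_pos hθ _)]
  by_contra! hbig
  obtain ⟨K, hK, t', x', h', y', hc | hc⟩ := hu.exists_isSecondDiffContact hs
    (one_div_pos.2 hs) (by positivity) hS.ratio_pos (Ioc_subset_Icc_self ht) hx.le hh hbig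
  · exact hu.not_isSecondDiffContact_of_lt hS hs hs₁ hα hM hF
      (hgrad _ (Ioc_subset_Icc_self hc.time_mem)) hC hstep htop hbottom hK hc
  · refine hu.neg.not_isSecondDiffContact_of_lt hS hs hs₁ hα hM hF (fun z hz G hG => ?_) hC hstep
      htop hbottom hK hc
    rw [← norm_neg]
    exact hgrad _ (Ioc_subset_Icc_self hc.time_mem) z hz (-G)
      (by simpa only [neg_neg] using hG.fun_neg)

lemma abs_secondDiff_le_of_norm_le (hu : IsBoxSolution (1 - 2 * s) (1 - 2 * s + α) M U₀ F b f u)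
    (hS : IsSecondDiffScale n s α M N R c₀) (hs : 0 < s) (hs₁ : s < 1 / 2) (hα : α ≤ 1)
    (hM : 0 ≤ M) (hF : 0 ≤ F) (hgrad : ∀ t ∈ Icc (-(3 / 4) : ℝ) 0, ∀ z, ‖z‖ < 5 / 8 →
      ∀ G : En n →L[ℝ] ℝ, HasFDerivAt (fun z => u t (z, 0)) G z → ‖G‖ ≤ A * (U₀ + F))
    (hC : 0 < C) (hstep : 8 ≤ C * c₀ ^ (1 / s)) (htop : 4096 * (4 * n + 12) ^ 2 ≤ C)
    (hbottom : 2 + 2 * M * A ≤ C * (s / 4 * R ^ (-(2 * s))))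
    (ht : t ∈ Icc (-(1 / 2) : ℝ) 0) (hx : ‖x‖ ≤ 17 / 32) (hh : ‖h‖ ≤ 1 / 64) :
    |secondDiff (u t) h (x, 0)| ≤ C * (1 / 128) ^ (-(1 / s)) * (U₀ + F) * ‖h‖ ^ (1 + α) := by
  have hU := hu.nonneg
  rcases eq_or_ne h 0 with rfl | hh₀
  · rw [secondDiff, add_zero, sub_zero, sub_self, abs_zero]
    positivity
  have hθ : 1 / 128 ≤ cutoff (3 / 4) (81 / 256) t x := by
    have hx_sq : ‖x‖ ^ 2 ≤ (17 / 32) ^ 2 := pow_le_pow_left₀ (norm_nonneg x) hx 2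
    unfold cutoff
    nlinarith [ht.1]
  calc |secondDiff (u t) h (x, 0)|
      ≤ cutoff (3 / 4) (81 / 256) t x ^ (-(1 / s)) * (C * (U₀ + F) * ‖h‖ ^ (1 + α)) :=
        hu.abs_secondDiff_le_cutoff hS hs hs₁ hα hM hF hgrad hC hstep htop hbottom
          ⟨by linarith [ht.1], ht.2⟩ (by linarith) ⟨norm_pos_iff.2 hh₀, hh⟩
    _ ≤ (1 / 128) ^ (-(1 / s)) * (C * (U₀ + F) * ‖h‖ ^ (1 + α)) :=
        mul_le_mul_of_nonneg_right (Real.rpow_le_rpow_of_nonpos (by norm_num) hθ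
          (neg_nonpos.2 (one_div_nonneg.2 hs.le))) (by positivity)
    _ = _ := by ring

end IsBoxSolution

theorem exists_norm_fderiv_le_and_abs_secondDiff_le (n : ℕ) {s α M : ℝ} (hs : 0 < s)
    (hs₁ : s < 1 / 2) (hα : 0 < α) (hα₁ : α < 2 * s) (hM : 0 ≤ M) :
    ∃ C > 0, ∀ (U₀ F : ℝ) (b : ℝ → En n → En n) (f : ℝ → En n → ℝ) (u : ℝ → En n × ℝ → ℝ), 0 ≤ F →
      IsBoxSolution (1 - 2 * s) (1 - 2 * s + α) M U₀ F b f u →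
      (∀ t ∈ Icc (-(3 / 4) : ℝ) 0, ∀ x, ‖x‖ < 5 / 8 → ∀ G : En n →L[ℝ] ℝ,
        HasFDerivAt (fun z => u t (z, 0)) G x → ‖G‖ ≤ C * (U₀ + F)) ∧
      ∀ t ∈ Icc (-(1 / 2) : ℝ) 0, ∀ x h, ‖x‖ ≤ 17 / 32 → ‖h‖ ≤ 1 / 64 →
        |secondDiff (u t) h (x, 0)| ≤ C * (U₀ + F) * ‖h‖ ^ (1 + α) := by
  obtain ⟨A, hA, hgrad⟩ := exists_norm_fderiv_le n hs hs₁ (p := α / 4) (by linarith)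
    (by linarith) hM
  rw [mul_div_cancel₀ α four_ne_zero] at hgrad
  obtain ⟨N, R, c₀, hS⟩ := exists_isSecondDiffScale n M hs (by linarith : α < 1)
  have hR := hS.ratio_pos
  have hc₀ : 0 < c₀ ^ (1 / s) := Real.rpow_pos_of_pos hS.pos _
  have hP : 0 < s / 4 * R ^ (-(2 * s)) := by positivity
  have hstep : 0 < 8 / c₀ ^ (1 / s) := by positivity
  have htop : 0 < 4096 * (4 * n + 12 : ℝ) ^ 2 := by positivity
  have hbottom : 0 ≤ (2 + 2 * M * A) / (s / 4 * R ^ (-(2 * s))) := by positivity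
  set C := 8 / c₀ ^ (1 / s) + 4096 * (4 * n + 12) ^ 2 +
    (2 + 2 * M * A) / (s / 4 * R ^ (-(2 * s)))
  refine ⟨A + C * (1 / 128) ^ (-(1 / s)), by positivity, fun U₀ F b f u hF hu => ?_⟩
  have hU := hu.nonneg
  refine ⟨fun t ht x hx G hG => (hgrad U₀ F b f u hF hu t ht x hx G hG).trans ?_,
    fun t ht x h hx hh => (hu.abs_secondDiff_le_of_norm_le hS hs hs₁ (by linarith) hM hF
      (hgrad U₀ F b f u hF hu) (C := C) (by positivity)
      ((div_le_iff₀ hc₀).1 (by linarith)) (by linarith) ((div_le_iff₀ hP).1 (by linarith))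
      ht hx hh).trans ?_⟩
  · gcongr
    exact le_add_of_nonneg_right (by positivity)
  · gcongr
    exact le_add_of_nonneg_left hA.le

/-! ### From second differences to the gradient -/

section SecondDifferences

variable {E V : Type*} [NormedAddCommGroup E] [NormedSpace ℝ E] [NormedAddCommGroup V]
  [NormedSpace ℝ V] {v : E → V} {α δ r K : ℝ} {x x' h : E} {G G' : E →L[ℝ] V}

lemma tendsto_two_pow_smul_sub (hG : HasFDerivAt v G x) (h : E) :
    Tendsto (fun k : ℕ => (2 : ℝ) ^ k • (v (x + ((2 : ℝ) ^ k)⁻¹ • h) - v x)) atTop (𝓝 (G h)) :=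
  (hG.lim_real h).comp (tendsto_pow_atTop_atTop_of_one_lt one_lt_two)

lemma one_sub_two_rpow_neg_pos (hα : 0 < α) : 0 < 1 - (2 : ℝ) ^ (-α) :=
  sub_pos.2 (Real.rpow_lt_one_of_one_lt_of_neg one_lt_two (neg_neg_of_pos hα))

lemma two_pow_mul_inv_two_pow_succ_rpow_le (hα : 0 ≤ α) (k : ℕ) :
    (2 : ℝ) ^ k * ((2 : ℝ) ^ (k + 1))⁻¹ ^ (1 + α) ≤ ((2 : ℝ) ^ (-α)) ^ k := by
  rw [← Real.rpow_natCast, ← Real.rpow_natCast, ← Real.rpow_natCast, ← Real.rpow_neg zero_le_two,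
    ← Real.rpow_mul zero_le_two, ← Real.rpow_mul zero_le_two, ← Real.rpow_add two_pos]
  refine Real.rpow_le_rpow_of_exponent_le one_le_two ?_
  push_cast
  linarith

lemma norm_sub_fderiv_le_of_norm_secondDiff_le (hα : 0 < α) (hG : HasFDerivAt v G x)
    (hv : ∀ c ∈ Ioc (0 : ℝ) (1 / 2),
      ‖v (x + (2 * c) • h) - v (x + c • h) - (v (x + c • h) - v x)‖ ≤ K * c ^ (1 + α)) :
    ‖v (x + h) - v x - G h‖ ≤ K / (1 - 2 ^ (-α)) := by
  have hK : 0 ≤ K := by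
    have hhalf := (norm_nonneg _).trans (hv (1 / 2) (by norm_num))
    exact nonneg_of_mul_nonneg_left hhalf (by positivity)
  let g (k : ℕ) : V := (2 : ℝ) ^ k • (v (x + ((2 : ℝ) ^ k)⁻¹ • h) - v x)
  have hgeo (k : ℕ) : dist (g k) (g (k + 1)) ≤ K * ((2 : ℝ) ^ (-α)) ^ k := by
    set c : ℝ := ((2 : ℝ) ^ (k + 1))⁻¹ with hc
    have hc_two : ((2 : ℝ) ^ k)⁻¹ = 2 * c := by rw [hc, pow_succ]; field_simp
    have hc_le : c ≤ 1 / 2 := by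
      linarith [inv_le_one_of_one_le₀ (one_le_pow₀ one_le_two : (1 : ℝ) ≤ 2 ^ k)]
    have hdiff : g k - g (k + 1) =
        (2 : ℝ) ^ k • (v (x + (2 * c) • h) - v (x + c • h) - (v (x + c • h) - v x)) := by
      simp only [g]
      rw [hc_two, ← hc, pow_succ]
      module
    calc dist (g k) (g (k + 1))
        = 2 ^ k * ‖v (x + (2 * c) • h) - v (x + c • h) - (v (x + c • h) - v x)‖ := by
          rw [dist_eq_norm, hdiff, norm_smul, norm_pow, Real.norm_two]
      _ ≤ 2 ^ k * (K * c ^ (1 + α)) := by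
          gcongr
          exact hv c ⟨by positivity, hc_le⟩
      _ = K * (2 ^ k * c ^ (1 + α)) := by ring
      _ ≤ K * ((2 : ℝ) ^ (-α)) ^ k := by
          gcongr
          exact two_pow_mul_inv_two_pow_succ_rpow_le hα.le k
  have hsum := dist_le_of_le_geometric_of_tendsto₀ _ _ (sub_pos.1 (one_sub_two_rpow_neg_pos hα))
    hgeo (tendsto_two_pow_smul_sub hG h)
  simpa only [g, pow_zero, inv_one, one_smul, dist_eq_norm] using hsum

lemma norm_sub_fderiv_le_of_ball (hα : 0 < α) (hG : HasFDerivAt v G x)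
    (hv : ∀ z e, ‖z - x‖ ≤ ‖h‖ / 2 → ‖e‖ ≤ ‖h‖ / 2 →
      ‖v (z + e) - v z - (v z - v (z - e))‖ ≤ K * ‖e‖ ^ (1 + α)) :
    ‖v (x + h) - v x - G h‖ ≤ K / (1 - 2 ^ (-α)) * ‖h‖ ^ (1 + α) := by
  refine (norm_sub_fderiv_le_of_norm_secondDiff_le (K := K * ‖h‖ ^ (1 + α)) hα hG
    fun c hc => ?_).trans_eq (by ring)
  have hnorm : ‖c • h‖ = c * ‖h‖ := by rw [norm_smul, Real.norm_of_nonneg hc.1.le]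
  have hhalf : ‖c • h‖ ≤ ‖h‖ / 2 := by nlinarith [norm_nonneg h, hc.2]
  have hc₂ := hv (x + c • h) (c • h) (by rwa [add_sub_cancel_left]) hhalf
  rw [hnorm, Real.mul_rpow hc.1.le (norm_nonneg h), add_sub_cancel_right, add_assoc, ← two_smul ℝ,
    smul_smul] at hc₂
  exact hc₂.trans_eq (by ring)

lemma norm_fderiv_sub_apply_le (hα : 0 < α) (hG : HasFDerivAt v G x) (hG' : HasFDerivAt v G' x')
    (hv : ∀ z e, ‖z - x‖ ≤ 2 * ‖x - x'‖ → ‖e‖ ≤ ‖x - x'‖ →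
      ‖v (z + e) - v z - (v z - v (z - e))‖ ≤ K * ‖e‖ ^ (1 + α))
    (hK : 0 ≤ K) (hh : ‖h‖ ≤ ‖x - x'‖) :
    ‖(G - G') h‖ ≤ (2 + 2 ^ (1 + α)) * (K / (1 - 2 ^ (-α))) * ‖x - x'‖ ^ (1 + α) := by
  have hB : 0 ≤ K / (1 - 2 ^ (-α)) := div_nonneg hK (one_sub_two_rpow_neg_pos hα).le
  have hdist : ‖x' - x‖ = ‖x - x'‖ := norm_sub_rev _ _
  have hh₀ : 0 ≤ ‖h‖ := norm_nonneg h
  have hsum : ‖x' - x + h‖ ≤ 2 * ‖x - x'‖ := (norm_add_le _ _).trans (by linarith)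
  have hstep := norm_sub_fderiv_le_of_ball hα hG' (h := h) fun w e hw he =>
    hv w e (by linarith [norm_sub_le_norm_sub_add_norm_sub w x' x]) (by linarith)
  have hbase := norm_sub_fderiv_le_of_ball hα hG (h := x' - x) fun w e hw he =>
    hv w e (by linarith) (by linarith)
  have hboth := norm_sub_fderiv_le_of_ball hα hG (h := x' - x + h) fun w e hw he =>
    hv w e (by linarith) (by linarith)
  rw [hdist] at hbase
  have hsplit : (G - G') h = (v (x' + h) - v x' - G' h) + (v (x + (x' - x)) - v x - G (x' - x)) -
      (v (x + (x' - x + h)) - v x - G (x' - x + h)) := by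
    rw [add_sub_cancel, ← add_assoc, add_sub_cancel, map_add, sub_apply]
    abel
  calc ‖(G - G') h‖ ≤ K / (1 - 2 ^ (-α)) * ‖h‖ ^ (1 + α) +
        K / (1 - 2 ^ (-α)) * ‖x - x'‖ ^ (1 + α) +
        K / (1 - 2 ^ (-α)) * ‖x' - x + h‖ ^ (1 + α) := by
        rw [hsplit]
        exact (norm_sub_le _ _).trans
          (add_le_add ((norm_add_le _ _).trans (add_le_add hstep hbase)) hboth)
    _ ≤ K / (1 - 2 ^ (-α)) * ‖x - x'‖ ^ (1 + α) + K / (1 - 2 ^ (-α)) * ‖x - x'‖ ^ (1 + α) +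
        K / (1 - 2 ^ (-α)) * (2 * ‖x - x'‖) ^ (1 + α) := by gcongr
    _ = _ := by
        rw [Real.mul_rpow zero_le_two (norm_nonneg _)]
        ring

lemma norm_fderiv_sub_le_of_near (hα : 0 < α) (hG : HasFDerivAt v G x) (hG' : HasFDerivAt v G' x')
    (hv : ∀ z e, ‖z - x‖ ≤ 2 * ‖x - x'‖ → ‖e‖ ≤ ‖x - x'‖ →
      ‖v (z + e) - v z - (v z - v (z - e))‖ ≤ K * ‖e‖ ^ (1 + α)) (hK : 0 ≤ K) :
    ‖G - G'‖ ≤ (2 + 2 ^ (1 + α)) * (K / (1 - 2 ^ (-α))) * ‖x - x'‖ ^ α := by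
  have hB : 0 ≤ K / (1 - 2 ^ (-α)) := div_nonneg hK (one_sub_two_rpow_neg_pos hα).le
  rcases eq_or_ne x x' with rfl | hne
  · rw [hG.unique hG', sub_self, norm_zero]
    positivity
  have hd : 0 < ‖x - x'‖ := norm_pos_iff.2 (sub_ne_zero.2 hne)
  refine ContinuousLinearMap.opNorm_le_of_unit_norm (by positivity) fun z hz => ?_
  have hnorm : ‖‖x - x'‖ • z‖ = ‖x - x'‖ := by rw [norm_smul, hz, mul_one, norm_norm]
  have happly := norm_fderiv_sub_apply_le hα hG hG' hv hK hnorm.le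
  rw [map_smul, norm_smul, norm_norm, Real.rpow_one_add' hd.le (by positivity),
    mul_left_comm] at happly
  exact le_of_mul_le_mul_left happly hd

lemma norm_fderiv_sub_le (hα : 0 < α) (hδ : 0 < δ) (hG : HasFDerivAt v G x)
    (hG' : HasFDerivAt v G' x') (hv : ∀ z e, ‖z‖ ≤ r + 2 * δ → ‖e‖ ≤ δ →
      ‖v (z + e) - v z - (v z - v (z - e))‖ ≤ K * ‖e‖ ^ (1 + α))
    (hx : ‖x‖ ≤ r) (hGK : ‖G‖ ≤ K) (hGK' : ‖G'‖ ≤ K) :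
    ‖G - G'‖ ≤ (2 * δ ^ (-α) + (2 + 2 ^ (1 + α)) / (1 - 2 ^ (-α))) * K * ‖x - x'‖ ^ α := by
  have hK : 0 ≤ K := (norm_nonneg G).trans hGK
  have hq := one_sub_two_rpow_neg_pos hα
  rcases le_total ‖x - x'‖ δ with hnear | hfar
  · refine (norm_fderiv_sub_le_of_near hα hG hG' (fun z e hz he => hv z e ?_ (he.trans hnear))
      hK).trans ?_
    · linarith [norm_le_norm_add_norm_sub' z x]
    · rw [← mul_div_assoc, mul_div_right_comm]
      gcongr
      exact le_add_of_nonneg_left (by positivity)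
  · have hd : 1 ≤ δ ^ (-α) * ‖x - x'‖ ^ α := by
      rw [Real.rpow_neg hδ.le, ← div_eq_inv_mul, one_le_div (by positivity)]
      gcongr
    calc ‖G - G'‖ ≤ 2 * K * 1 := (norm_sub_le _ _).trans (by linarith)
      _ ≤ 2 * K * (δ ^ (-α) * ‖x - x'‖ ^ α) := by gcongr
      _ = 2 * δ ^ (-α) * K * ‖x - x'‖ ^ α := by ring
      _ ≤ _ := by
        gcongr
        exact le_add_of_nonneg_right (by positivity)

end SecondDifferences

lemma IsBoxSolution.differentiableAt {n : ℕ} {a γ M U₀ F t : ℝ} {b : ℝ → En n → En n}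
    {f : ℝ → En n → ℝ} {u : ℝ → En n × ℝ → ℝ} {x : En n} (hu : IsBoxSolution a γ M U₀ F b f u)
    (ht : t ∈ Ioc (-1 : ℝ) 0) (hx : ‖x‖ ≤ 7 / 8) :
    DifferentiableAt ℝ (fun z => u t (z, 0)) x :=
  let ⟨_, _, _, hjet, _⟩ := hu.boundaryEq t ht x hx
  hjet.tangential.differentiableAt

theorem main_C1alpha_regularity_general (n : ℕ) {s α M : ℝ} (hs : s ∈ Ioo (0 : ℝ) (1 / 2))
    (hα : α ∈ Ioo (0 : ℝ) (2 * s)) (hM : 0 ≤ M) :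
    ∃ C > 0, ∀ (b : ℝ → En n → En n) (f : ℝ → En n → ℝ) (u : ℝ → En n × ℝ → ℝ) (U₀ F : ℝ),
      0 ≤ F →
      (∀ t ∈ Icc (-1 : ℝ) 0, (∀ x ∈ flatBall n 1, ‖b t x‖ ≤ M) ∧
        ∀ x ∈ flatBall n 1, ∀ x' ∈ flatBall n 1,
          ‖b t x - b t x'‖ ≤ M * ‖x - x'‖ ^ (1 - 2 * s + α)) →
      (∀ t ∈ Icc (-1 : ℝ) 0, ∀ x ∈ flatBall n 1, ∀ x' ∈ flatBall n 1,
        |f t x - f t x'| ≤ F * ‖x - x'‖ ^ (1 - 2 * s + α)) →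
      IsExtDDSolution (1 - 2 * s) b f u →
      (∀ t ∈ Icc (-1 : ℝ) 0, ∀ p ∈ halfBall n 1, |u t p| ≤ U₀) →
      ∀ t ∈ Icc (-(1 : ℝ) / 2) 0, ∀ x ∈ flatBall n (1 / 2),
        DifferentiableAt ℝ (fun z => u t (z, 0)) x ∧
        ‖fderiv ℝ (fun z => u t (z, 0)) x‖ ≤ C * (U₀ + F) ∧
        ∀ x' ∈ flatBall n (1 / 2),
          ‖fderiv ℝ (fun z => u t (z, 0)) x - fderiv ℝ (fun z => u t (z, 0)) x'‖ ≤
            C * (U₀ + F) * ‖x - x'‖ ^ α := by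
  obtain ⟨C, hC, hbounds⟩ := exists_norm_fderiv_le_and_abs_secondDiff_le n hs.1 hs.2 hα.1 hα.2 hM
  have hq := one_sub_two_rpow_neg_pos hα.1
  set D := 2 * (1 / 64 : ℝ) ^ (-α) + (2 + 2 ^ (1 + α)) / (1 - 2 ^ (-α))
  have hD : 0 ≤ D := by positivity
  refine ⟨(1 + D) * C, by positivity, fun b f u U₀ F hF hb hf hu hbound t ht x hx => ?_⟩
  have hbox := hu.isBoxSolution hb hf hbound
  have hU := hbox.nonneg
  obtain ⟨hgrad, hsecond⟩ := hbounds U₀ F b f u hF hbox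
  have hdiff (z) (hz : z ∈ flatBall n (1 / 2)) : DifferentiableAt ℝ (fun z => u t (z, 0)) z :=
    hbox.differentiableAt ⟨by linarith [ht.1], ht.2⟩ (by linarith [show ‖z‖ < 1 / 2 from hz])
  have hnorm (z) (hz : z ∈ flatBall n (1 / 2)) :
      ‖fderiv ℝ (fun z => u t (z, 0)) z‖ ≤ C * (U₀ + F) :=
    hgrad t ⟨by linarith [ht.1], ht.2⟩ z (by linarith [show ‖z‖ < 1 / 2 from hz]) _
      (hdiff z hz).hasFDerivAt
  have hDC : D * (C * (U₀ + F)) ≤ (1 + D) * C * (U₀ + F) := by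
    rw [mul_assoc]; gcongr; linarith
  refine ⟨hdiff x hx, (hnorm x hx).trans ?_, fun x' hx' => ?_⟩
  · rw [mul_assoc]
    exact le_mul_of_one_le_left (by positivity) (by linarith)
  · refine (norm_fderiv_sub_le hα.1 (by norm_num : (0 : ℝ) < 1 / 64) (hdiff x hx).hasFDerivAt
      (hdiff x' hx').hasFDerivAt (r := 1 / 2) (fun z e hz he => hsecond t ⟨by linarith [ht.1], ht.2⟩
        z e (by linarith) he) (le_of_lt hx) (hnorm x hx) (hnorm x' hx')).trans ?_
    gcongr

/-- **Theorem 1 (main theorem).** If `b, f ∈ L^∞ C^{1-2s+α}` with `α ∈ (0, 2s)`, then any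
bounded solution of the extended drift–diffusion equation is `C^{1,α}` in space on
`[-1/2, 0] × B_{1/2}^0`, with the corresponding estimate. -/
theorem main_C1alpha_regularity (n : ℕ) (hn : 1 ≤ n) (s : ℝ) (hs : s ∈ Ioo (0 : ℝ) (1/2))
    (α : ℝ) (hα : α ∈ Ioo (0 : ℝ) (2*s)) (M : ℝ) (hM : 0 ≤ M) :
    ∃ C > 0, ∀ (b : ℝ → En n → En n) (f : ℝ → En n → ℝ) (u : ℝ → En n × ℝ → ℝ) (U0 F : ℝ),
      0 ≤ U0 → 0 ≤ F →
      (∀ t ∈ Icc (-1 : ℝ) 0, (∀ x ∈ flatBall n 1, ‖b t x‖ ≤ M) ∧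
        ∀ x ∈ flatBall n 1, ∀ x' ∈ flatBall n 1,
          ‖b t x - b t x'‖ ≤ M * ‖x - x'‖ ^ (1 - 2*s + α)) →
      (∀ t ∈ Icc (-1 : ℝ) 0, (∀ x ∈ flatBall n 1, |f t x| ≤ F) ∧
        ∀ x ∈ flatBall n 1, ∀ x' ∈ flatBall n 1,
          |f t x - f t x'| ≤ F * ‖x - x'‖ ^ (1 - 2*s + α)) →
      IsExtDDSolution (1 - 2*s) b f u →
      (∀ t ∈ Icc (-1 : ℝ) 0, ∀ p ∈ halfBall n 1, |u t p| ≤ U0) →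
      ∀ t ∈ Icc (-(1:ℝ)/2) 0, ∀ x ∈ flatBall n (1/2),
        DifferentiableAt ℝ (fun x' => u t (x', 0)) x ∧
        ‖fderiv ℝ (fun x' => u t (x', 0)) x‖ ≤ C * (U0 + F) ∧
        ∀ x' ∈ flatBall n (1/2),
          ‖fderiv ℝ (fun z => u t (z, 0)) x - fderiv ℝ (fun z => u t (z, 0)) x'‖ ≤
            C * (U0 + F) * ‖x - x'‖ ^ α := by
  obtain ⟨C, hC, hmain⟩ := main_C1alpha_regularity_general n hs hα hM
  exact ⟨C, hC, fun b f u U0 F _ hF hb hf => hmain b f u U0 F hF hb fun t ht => (hf t ht).2⟩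

end
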